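/- Let k, p ∈ ℕ with k ≥ 2 and p ≥ 2, let R > 0 and ε > 0. Then there exists C > 0 such that for every u₀ ∈ H^k(𝕋) with ‖u₀‖_{H¹(𝕋)} ≤ R, the unique global solution u of the defocusing NLS with u(0,·) = u₀ satisfies ‖u(t)‖_{H^k(𝕋)} ≤ C ‖u₀‖_{H^k(𝕋)} + C t^{(k−1)/2+ε} for all t > 0. Moreover, if k is not divisible by 3, the bound holds with ε = 0. -/

import Mathlib

open MeasureTheory
open scoped Real BigOperators ENNReal

noncomputable section

/-- `n`-th spatial derivative. -/
def pD (n : ℕ) (f : ℝ → ℂ) : ℝ → ℂ := iteratedDeriv n f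

/-- Complex conjugate of the `n`-th spatial derivative. -/
def cD (n : ℕ) (f : ℝ → ℂ) (x : ℝ) : ℂ := (starRingEnd ℂ) (iteratedDeriv n f x)

/-- Integral over one period of the torus `𝕋 = ℝ/2πℤ`. -/
def tInt (f : ℝ → ℂ) : ℂ := ∫ x in (0:ℝ)..(2 * Real.pi), f x

/-- Squared `L²(𝕋)` norm. -/
def L2sq (f : ℝ → ℂ) : ℝ := ∫ x in (0:ℝ)..(2 * Real.pi), ‖f x‖ ^ 2

/-- Squared `Hᵏ(𝕋)` norm: `‖u‖² = ‖u‖²_{L²} + ‖∂ₓᵏu‖²_{L²}`. -/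
def HkSq (k : ℕ) (f : ℝ → ℂ) : ℝ := L2sq f + L2sq (pD k f)

/-- `Hᵏ(𝕋)` norm. -/
def HkNorm (k : ℕ) (f : ℝ → ℂ) : ℝ := Real.sqrt (HkSq k f)

/-- A classical (smooth and `2π`-periodic in space, differentiable in time) solution of the
defocusing NLS `i ∂ₜ u + ∂ₓ² u - u |u|^{2p} = 0` for times in the set `I`. -/
structure IsNLS (p : ℕ) (I : Set ℝ) (u : ℝ → ℝ → ℂ) : Prop where
  smooth : ∀ t ∈ I, ContDiff ℝ (⊤ : ℕ∞) (u t)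
  periodic : ∀ t ∈ I, Function.Periodic (u t) (2 * Real.pi)
  tdiff : ∀ (x : ℝ), ∀ t ∈ I, DifferentiableAt ℝ (fun s => u s x) t
  eqn : ∀ t ∈ I, ∀ x : ℝ,
    Complex.I * deriv (fun s => u s x) t + pD 2 (u t) x
      = u t x * ((‖u t x‖ : ℂ)) ^ (2 * p)



set_option maxHeartbeats 1000000 in
lemma core_lower (D : ℝ) (hD : 1 ≤ D) (x1 x2 x3 d s1 s2 s3 e1 e2 : ℝ)
    (h12 : |x2| ≤ |x1|) (h23 : |x3| ≤ |x2|) (h3 : d ≤ |x3|) (hd : 0 ≤ d)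
    (hs1 : s1 = 1 ∨ s1 = -1) (hs2 : s2 = 1 ∨ s2 = -1) (hs3 : s3 = 1 ∨ s3 = -1)
    (he1 : |e1| ≤ D * d) (he2 : |e2| ≤ D * d ^ 2)
    (hlin : s1 * x1 + s2 * x2 + s3 * x3 + e1 = 0)
    (hab : |x1| ≤ (D + 2) * |x2|)
    (hK : (2 * D * (D + 2) + D ^ 2 + D) * d ≤ |x3|) :
    |x3| ^ 2 ≤ |s1 * x1 ^ 2 + s2 * x2 ^ 2 + s3 * x3 ^ 2 + e2| := by
  set a := |x1| with ha
  set b := |x2| with hb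
  set c := |x3| with hc
  have ha2 : a ^ 2 = x1 ^ 2 := sq_abs x1
  have hb2 : b ^ 2 = x2 ^ 2 := sq_abs x2
  have hc2 : c ^ 2 = x3 ^ 2 := sq_abs x3
  have hc0 : 0 ≤ c := abs_nonneg _
  have hb0 : 0 ≤ b := abs_nonneg _
  have ha0 : 0 ≤ a := abs_nonneg _
  have key : ∀ y z w s e e' : ℝ, (s = 1 ∨ s = -1) → s * y + s * z - s * w + e = 0 →
      |e| ≤ D * d → |e'| ≤ D * d ^ 2 → b * c ≤ |y * z| → |w| ≤ a →
      c ^ 2 ≤ |s * y ^ 2 + s * z ^ 2 - s * w ^ 2 + e'| := by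
    intro y z w s e e' hs hl he he' hyz hw
    have h1 : s * y ^ 2 + s * z ^ 2 - s * w ^ 2 + e' = -2 * s * (y * z) - (2 * (e * w) - s * e ^ 2 - e') := by
      rcases hs with rfl | rfl
      · have : w = y + z + e := by linarith
        subst this; ring
      · have : w = y + z - e := by linarith
        subst this; ring
    have h2 : |-2 * s * (y * z)| = 2 * |y * z| := by
      rw [abs_mul]
      rcases hs with rfl | rfl <;> norm_num
    have h3' : |e * w| ≤ D * d * a := by
      rw [abs_mul]; exact mul_le_mul he hw (abs_nonneg _) (by positivity)
    have h4 : |s * e ^ 2| ≤ (D * d) ^ 2 := by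
      rw [abs_mul, abs_pow]
      have : |s| = 1 := by rcases hs with rfl | rfl <;> norm_num
      rw [this, one_mul]
      exact pow_le_pow_left₀ (abs_nonneg _) he 2
    have h5 : |2 * (e * w) - s * e ^ 2 - e'| ≤ 2 * (D * d * a) + (D * d) ^ 2 + D * d ^ 2 := by
      rw [abs_le] at h3' h4 he' ⊢
      constructor <;> linarith [h3'.1, h3'.2, h4.1, h4.2, he'.1, he'.2]
    have h6 := abs_sub_abs_le_abs_sub (-2 * s * (y * z)) (2 * (e * w) - s * e ^ 2 - e')
    rw [h1]
    have hdb : d ≤ b := h3.trans h23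
    have h7 : 2 * (D * d * a) + (D * d) ^ 2 + D * d ^ 2 ≤ b * c := by
      have i1 : D * d * a ≤ D * d * ((D + 2) * b) := by gcongr
      have i2 : (D * d) ^ 2 ≤ D ^ 2 * d * b := by
        have : d * d ≤ d * b := by gcongr
        have h := mul_le_mul_of_nonneg_left this (sq_nonneg D)
        calc (D * d) ^ 2 = D ^ 2 * (d * d) := by ring
          _ ≤ D ^ 2 * (d * b) := h
          _ = _ := by ring
      have i3 : D * d ^ 2 ≤ D * d * b := by
        have : d * d ≤ d * b := by gcongr
        have h := mul_le_mul_of_nonneg_left this (by linarith : (0:ℝ) ≤ D)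
        calc D * d ^ 2 = D * (d * d) := by ring
          _ ≤ D * (d * b) := h
          _ = _ := by ring
      have i4 := mul_le_mul_of_nonneg_left hK hb0
      have i5 : b * ((2 * D * (D + 2) + D ^ 2 + D) * d) = 2 * (D * d * ((D + 2) * b)) + D ^ 2 * d * b + D * d * b := by ring
      linarith
    have h8 : c ^ 2 ≤ b * c := by nlinarith
    linarith
  have hbc1 : b * c ≤ |x1 * x2| := by
    rw [abs_mul]; exact mul_le_mul h12 h23 hc0 ha0
  have hbc2 : b * c ≤ |x1 * x3| := by
    rw [abs_mul]; exact mul_le_mul_of_nonneg_right h12 hc0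
  have hbc3 : b * c ≤ |x2 * x3| := by
    rw [abs_mul]
  have same : ∀ s : ℝ, (s = 1 ∨ s = -1) → c ^ 2 ≤ |s * x1 ^ 2 + s * x2 ^ 2 + s * x3 ^ 2 + e2| := by
    intro s hs
    have hdc : D * d ^ 2 ≤ c ^ 2 := by
      have t1 : D * d ≤ c := by nlinarith
      nlinarith
    have hca : c ^ 2 ≤ a ^ 2 := by gcongr; linarith
    have h6 := abs_sub_abs_le_abs_sub (s * x1 ^ 2 + s * x2 ^ 2 + s * x3 ^ 2) (-e2)
    have h7 : |s * x1 ^ 2 + s * x2 ^ 2 + s * x3 ^ 2| = x1 ^ 2 + x2 ^ 2 + x3 ^ 2 := by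
      have : s * x1 ^ 2 + s * x2 ^ 2 + s * x3 ^ 2 = s * (x1 ^ 2 + x2 ^ 2 + x3 ^ 2) := by ring
      rw [this, abs_mul, abs_of_nonneg (by positivity : 0 ≤ x1 ^ 2 + x2 ^ 2 + x3 ^ 2)]
      rcases hs with rfl | rfl <;> norm_num
    rw [abs_neg, sub_neg_eq_add, h7] at h6
    nlinarith [sq_nonneg x2]
  have h13 : |x3| ≤ a := h23.trans h12
  rcases hs1 with rfl | rfl <;> rcases hs2 with rfl | rfl <;> rcases hs3 with rfl | rfl
  · exact same 1 (Or.inl rfl)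
  · have := key x1 x2 x3 1 e1 e2 (Or.inl rfl) (by linarith) he1 he2 hbc1 h13
    convert this using 2; ring
  · have := key x1 x3 x2 1 e1 e2 (Or.inl rfl) (by linarith) he1 he2 hbc2 h12
    convert this using 2; ring
  · have := key x2 x3 x1 (-1) e1 e2 (Or.inr rfl) (by linarith) he1 he2 hbc3 le_rfl
    convert this using 2; ring
  · have := key x2 x3 x1 1 e1 e2 (Or.inl rfl) (by linarith) he1 he2 hbc3 le_rfl
    convert this using 2; ring
  · have := key x1 x3 x2 (-1) e1 e2 (Or.inr rfl) (by linarith) he1 he2 hbc2 h12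
    convert this using 2; ring
  · have := key x1 x2 x3 (-1) e1 e2 (Or.inr rfl) (by linarith) he1 he2 hbc1 h13
    convert this using 2; ring
  · exact same (-1) (Or.inr rfl)

set_option maxHeartbeats 1000000 in
lemma core_upper (k : ℕ) (hk : 1 ≤ k) (D : ℝ) (hD : 1 ≤ D) (x1 x2 x3 d s1 s2 s3 e2 eM : ℝ)
    (h12 : |x2| ≤ |x1|) (h23 : |x3| ≤ |x2|) (h3 : d ≤ |x3|) (hd : 0 ≤ d)
    (hs1 : s1 = 1 ∨ s1 = -1) (hs2 : s2 = 1 ∨ s2 = -1) (hs3 : s3 = 1 ∨ s3 = -1)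
    (he2 : |e2| ≤ D * d ^ 2) (heM : |eM| ≤ D * d ^ (2 * k)) :
    |s1 * x1 ^ (2 * k) + s2 * x2 ^ (2 * k) + s3 * x3 ^ (2 * k) + eM| ≤
      (k + 3) * (D + 3) ^ 2 * |x1| ^ (2 * k - 2) *
        (|s1 * x1 ^ 2 + s2 * x2 ^ 2 + s3 * x3 ^ 2 + e2| + |x3| ^ 2) := by
  obtain ⟨j, rfl⟩ : ∃ j, k = j + 1 := ⟨k - 1, by omega⟩
  have hj : 2 * (j + 1) - 2 = 2 * j := by omega
  rw [hj]
  set Ω := s1 * x1 ^ 2 + s2 * x2 ^ 2 + s3 * x3 ^ 2 + e2 with hΩ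
  set a := |x1| with ha
  set b := |x2| with hb
  set c := |x3| with hc
  have hc0 : 0 ≤ c := abs_nonneg _
  have hb0 : 0 ≤ b := abs_nonneg _
  have ha0 : 0 ≤ a := abs_nonneg _
  have pa : ∀ x : ℝ, x ^ (2 * (j + 1)) = (x ^ 2) ^ (j + 1) := fun x => by rw [pow_mul]
  have P : 0 ≤ a ^ (2 * j) := by positivity
  have hca : c ≤ a := h23.trans h12
  have hs : ∀ s : ℝ, (s = 1 ∨ s = -1) → |s| = 1 := by
    rintro s (rfl | rfl) <;> norm_num
  have hdc2 : d ^ 2 ≤ c ^ 2 := by gcongr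
  have t3 : |s3 * x3 ^ (2 * (j + 1))| ≤ a ^ (2 * j) * c ^ 2 := by
    rw [abs_mul, hs s3 hs3, one_mul, abs_pow, mul_add, mul_one, pow_add]
    gcongr
  have tM : |eM| ≤ D * (a ^ (2 * j) * c ^ 2) := by
    refine heM.trans ?_
    rw [mul_add, mul_one, pow_add]
    have : d ≤ a := h3.trans hca
    gcongr
  have te : |s3 * x3 ^ 2 + e2| ≤ (D + 1) * c ^ 2 := by
    refine (abs_add_le _ _).trans ?_
    rw [abs_mul, hs s3 hs3, one_mul, abs_pow]
    nlinarith
  have hΩ' : s1 * x1 ^ 2 + s2 * x2 ^ 2 = Ω - (s3 * x3 ^ 2 + e2) := by rw [hΩ]; ring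
  have t12 : |s1 * x1 ^ 2 + s2 * x2 ^ 2| ≤ |Ω| + (D + 1) * c ^ 2 := by
    rw [hΩ']; exact (abs_sub _ _).trans (by linarith)
  have main : |s1 * x1 ^ (2 * (j + 1)) + s2 * x2 ^ (2 * (j + 1))| ≤
      (j + 2) * a ^ (2 * j) * |s1 * x1 ^ 2 + s2 * x2 ^ 2| := by
    have opp : ∀ s : ℝ, (s = 1 ∨ s = -1) → |s * x1 ^ (2 * (j + 1)) - s * x2 ^ (2 * (j + 1))| ≤
      (j + 2) * a ^ (2 * j) * |s * x1 ^ 2 - s * x2 ^ 2| := by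
      intro s h
      rw [← mul_sub, ← mul_sub, abs_mul, abs_mul, hs s h, one_mul, one_mul, pa, pa]
      refine (abs_pow_sub_pow_le (x1 ^ 2) (x2 ^ 2) (j + 1)).trans ?_
      have : max |x1 ^ 2| |x2 ^ 2| = a ^ 2 := by
        rw [abs_pow, abs_pow]
        exact max_eq_left (by gcongr)
      rw [this, Nat.add_sub_cancel, ← pow_mul]
      push_cast
      have : 0 ≤ a ^ (2 * j) * |x1 ^ 2 - x2 ^ 2| := by positivity
      nlinarith
    have same : ∀ s : ℝ, (s = 1 ∨ s = -1) → |s * x1 ^ (2 * (j + 1)) + s * x2 ^ (2 * (j + 1))| ≤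
      (j + 2) * a ^ (2 * j) * |s * x1 ^ 2 + s * x2 ^ 2| := by
      intro s h
      rw [← mul_add, ← mul_add, abs_mul, abs_mul, hs s h, one_mul, one_mul]
      refine (abs_add_le _ _).trans ?_
      rw [abs_pow, abs_pow, abs_of_nonneg (by positivity : 0 ≤ x1 ^ 2 + x2 ^ 2), ← sq_abs x1, ← sq_abs x2]
      rw [← ha, ← hb, mul_add 2 j 1, mul_one, pow_add, pow_add]
      have : b ^ (2 * j) ≤ a ^ (2 * j) := by gcongr
      have h0 : (0:ℝ) ≤ j := Nat.cast_nonneg _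
      have : b ^ (2 * j) * b ^ 2 ≤ a ^ (2 * j) * b ^ 2 := by gcongr
      have h1 : 0 ≤ a ^ (2 * j) * (a ^ 2 + b ^ 2) := by positivity
      nlinarith
    rcases hs1 with rfl | rfl <;> rcases hs2 with rfl | rfl
    · exact same 1 (Or.inl rfl)
    · have := opp 1 (Or.inl rfl)
      convert this using 2
      · ring
      · congr 1; ring
    · have := opp (-1) (Or.inr rfl)
      convert this using 2
      · ring
      · congr 1; ring
    · exact same (-1) (Or.inr rfl)
  have fin : |s1 * x1 ^ (2 * (j + 1)) + s2 * x2 ^ (2 * (j + 1)) + s3 * x3 ^ (2 * (j + 1)) + eM| ≤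
      (j + 2) * a ^ (2 * j) * (|Ω| + (D + 1) * c ^ 2) + a ^ (2 * j) * c ^ 2 + D * (a ^ (2 * j) * c ^ 2) := by
    refine (abs_add_le _ _).trans (add_le_add ((abs_add_le _ _).trans (add_le_add (main.trans ?_) t3)) tM)
    gcongr
  refine fin.trans ?_
  have h0 : (0:ℝ) ≤ j := Nat.cast_nonneg _
  have hΩ0 := abs_nonneg Ω
  have g1 : 0 ≤ a ^ (2 * j) * |Ω| := by positivity
  have g2 : 0 ≤ a ^ (2 * j) * c ^ 2 := by positivity
  push_cast
  have f1 : ((j:ℝ) + 2) ≤ (j + 1 + 3) * (D + 3) ^ 2 := by nlinarith [mul_nonneg h0 (by linarith : (0:ℝ) ≤ D)]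
  have f2 : ((j:ℝ) + 2) * (D + 1) + 1 + D ≤ (j + 1 + 3) * (D + 3) ^ 2 := by
    nlinarith [mul_nonneg h0 (by linarith : (0:ℝ) ≤ D)]
  have q1 := mul_le_mul_of_nonneg_right f1 g1
  have q2 := mul_le_mul_of_nonneg_right f2 g2
  calc _ = ((j:ℝ) + 2) * (a ^ (2 * j) * |Ω|) + (((j:ℝ) + 2) * (D + 1) + 1 + D) * (a ^ (2 * j) * c ^ 2) := by ring
    _ ≤ _ := add_le_add q1 q2
    _ = _ := by ring

lemma core_symbol (k : ℕ) (hk : 1 ≤ k) (D : ℝ) (hD : 1 ≤ D) : ∃ C : ℝ, 0 ≤ C ∧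
    ∀ (x1 x2 x3 d s1 s2 s3 e1 e2 eM : ℝ)
    (_ : |x2| ≤ |x1|) (_ : |x3| ≤ |x2|) (_ : d ≤ |x3|) (_ : 0 ≤ d)
    (_ : s1 = 1 ∨ s1 = -1) (_ : s2 = 1 ∨ s2 = -1) (_ : s3 = 1 ∨ s3 = -1)
    (_ : |e1| ≤ D * d) (_ : |e2| ≤ D * d ^ 2) (_ : |eM| ≤ D * d ^ (2 * k))
    (_ : s1 * x1 + s2 * x2 + s3 * x3 + e1 = 0),
    |s1 * x1 ^ (2 * k) + s2 * x2 ^ (2 * k) + s3 * x3 ^ (2 * k) + eM| ≤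
      C * (|x1| ^ (k - 1) * |x2| ^ (k - 1) *
        (|s1 * x1 ^ 2 + s2 * x2 ^ 2 + s3 * x3 ^ 2 + e2| + |x3| * d)) := by
  set K := 2 * D * (D + 2) + D ^ 2 + D with hKdef
  have hK1 : 1 ≤ K := by nlinarith
  refine ⟨(k + 3) * (D + 3) ^ 2 * (D + 2) ^ (k - 1) * (2 + K), by positivity, ?_⟩
  intro x1 x2 x3 d s1 s2 s3 e1 e2 eM h12 h23 h3 hd hs1 hs2 hs3 he1 he2 heM hlin
  have hs : ∀ s : ℝ, (s = 1 ∨ s = -1) → ∀ x, |s * x| = |x| := by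
    rintro s (rfl | rfl) <;> norm_num
  have hab : |x1| ≤ (D + 2) * |x2| := by
    have : s1 * x1 = -(s2 * x2 + s3 * x3 + e1) := by linarith
    have h := congrArg abs this
    rw [hs s1 hs1, abs_neg] at h
    rw [h]
    refine (abs_add_le _ _).trans ?_
    have h' := abs_add_le (s2 * x2) (s3 * x3)
    rw [hs s2 hs2, hs s3 hs3] at h'
    nlinarith
  have hu := core_upper k hk D hD x1 x2 x3 d s1 s2 s3 e2 eM h12 h23 h3 hd hs1 hs2 hs3 he2 heM
  set Ω := s1 * x1 ^ 2 + s2 * x2 ^ 2 + s3 * x3 ^ 2 + e2 with hΩ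
  have hpow : |x1| ^ (2 * k - 2) ≤ (D + 2) ^ (k - 1) * (|x1| ^ (k - 1) * |x2| ^ (k - 1)) := by
    have : 2 * k - 2 = (k - 1) + (k - 1) := by omega
    rw [this, pow_add]
    calc |x1| ^ (k - 1) * |x1| ^ (k - 1) ≤ |x1| ^ (k - 1) * ((D + 2) * |x2|) ^ (k - 1) := by gcongr
      _ = _ := by rw [mul_pow]; ring
  have hcd : |x3| ^ 2 ≤ |Ω| + K * (|x3| * d) := by
    by_cases h : K * d ≤ |x3|
    · have := core_lower D hD x1 x2 x3 d s1 s2 s3 e1 e2 h12 h23 h3 hd hs1 hs2 hs3 he1 he2 hlin hab h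
      have : 0 ≤ K * (|x3| * d) := by positivity
      linarith
    · push Not at h
      have := mul_le_mul_of_nonneg_left h.le (abs_nonneg x3)
      nlinarith [abs_nonneg Ω]
  have hfin : |Ω| + |x3| ^ 2 ≤ (2 + K) * (|Ω| + |x3| * d) := by
    have : 0 ≤ |x3| * d := by positivity
    nlinarith [abs_nonneg Ω]
  refine hu.trans ?_
  calc (k + 3) * (D + 3) ^ 2 * |x1| ^ (2 * k - 2) * (|Ω| + |x3| ^ 2)
      ≤ (k + 3) * (D + 3) ^ 2 * ((D + 2) ^ (k - 1) * (|x1| ^ (k - 1) * |x2| ^ (k - 1))) *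
        ((2 + K) * (|Ω| + |x3| * d)) := by gcongr
    _ = _ := by ring

lemma exists_top4 {D : ℕ} (hD : 4 ≤ D) (g : Fin D → ℝ) :
    ∃ f : Fin 4 → Fin D, Function.Injective f ∧ g (f 1) ≤ g (f 0) ∧ g (f 2) ≤ g (f 1) ∧
      g (f 3) ≤ g (f 2) ∧ ∀ i, i ≠ f 0 → i ≠ f 1 → i ≠ f 2 → g i ≤ g (f 3) := by
  classical
  have ex : ∀ s : Finset (Fin D), s.card < 4 → ∃ i, i ∉ s ∧ ∀ j, j ∉ s → g j ≤ g i := by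
    intro s hs
    have : (sᶜ).Nonempty := by
      rw [← Finset.card_pos, Finset.card_compl, Fintype.card_fin]; omega
    obtain ⟨i, hi, h⟩ := Finset.exists_max_image sᶜ g this
    exact ⟨i, by simpa using hi, fun j hj => h j (by simpa using hj)⟩
  obtain ⟨i0, -, h0⟩ := ex ∅ (by simp)
  obtain ⟨i1, h1n, h1⟩ := ex {i0} (by simp)
  obtain ⟨i2, h2n, h2⟩ := ex {i0, i1} (lt_of_le_of_lt Finset.card_le_two (by norm_num))
  obtain ⟨i3, h3n, h3⟩ := ex {i0, i1, i2} (lt_of_le_of_lt Finset.card_le_three (by norm_num))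
  simp only [Finset.mem_insert, Finset.mem_singleton, not_or] at h1n h2n h3n h1 h2 h3
  refine ⟨![i0, i1, i2, i3], ?_, h0 i1 (by simp), h1 i2 h2n.1, h2 i3 ⟨h3n.1, h3n.2.1⟩,
    fun i a b c => h3 i ⟨a, b, c⟩⟩
  intro a b hab
  fin_cases a <;> fin_cases b <;> simp_all

lemma sum_split3 {D : ℕ} (f : Fin D → ℝ) (i0 i1 i2 : Fin D) (h01 : i0 ≠ i1) (h02 : i0 ≠ i2) (h12 : i1 ≠ i2) :
    ∑ i, f i = f i0 + f i1 + f i2 + ∑ i ∈ Finset.univ \ {i0, i1, i2}, f i := by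
  classical
  rw [← Finset.sum_sdiff (Finset.subset_univ {i0, i1, i2}), Finset.sum_insert (by simp [h01, h02]),
    Finset.sum_insert (by simp [h12]), Finset.sum_singleton]
  ring

lemma symbol_bound (k : ℕ) (hk : 1 ≤ k) (D : ℕ) (hD : 4 ≤ D) : ∃ C : ℝ, 0 ≤ C ∧
    ∀ (σ : Fin D → ℤ) (_ : ∀ i, σ i = 1 ∨ σ i = -1) (n : Fin D → ℤ) (_ : ∑ i, σ i * n i = 0),
    ∃ f : Fin 4 → Fin D, Function.Injective f ∧
      |((∑ i, σ i * n i ^ (2 * k) : ℤ) : ℝ)| ≤ C * (|(n (f 0) : ℝ)| ^ (k - 1) * |(n (f 1) : ℝ)| ^ (k - 1) *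
        (|((∑ i, σ i * n i ^ 2 : ℤ) : ℝ)| + |(n (f 2) : ℝ)| * |(n (f 3) : ℝ)|)) := by
  classical
  obtain ⟨C, hC, h⟩ := core_symbol k hk D (by exact_mod_cast (by omega : 1 ≤ D))
  refine ⟨C, hC, fun σ hσ n hn => ?_⟩
  obtain ⟨f, hf, h10, h21, h32, hrest⟩ := exists_top4 hD (fun i => |(n i : ℝ)|)
  refine ⟨f, hf, ?_⟩
  have hσ' : ∀ i, (σ i : ℝ) = 1 ∨ (σ i : ℝ) = -1 := fun i => by
    rcases hσ i with h | h <;> simp [h]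
  have d01 : f 0 ≠ f 1 := fun h => by simpa using hf h
  have d02 : f 0 ≠ f 2 := fun h => by simpa using hf h
  have d12 : f 1 ≠ f 2 := fun h => by simpa using hf h
  have rest : ∀ m : ℕ, |∑ i ∈ Finset.univ \ {f 0, f 1, f 2}, (σ i : ℝ) * (n i : ℝ) ^ m| ≤
      D * |(n (f 3) : ℝ)| ^ m := by
    intro m
    refine (Finset.abs_sum_le_sum_abs _ _).trans ?_
    calc _ ≤ ∑ i ∈ Finset.univ \ {f 0, f 1, f 2}, |(n (f 3) : ℝ)| ^ m := by
            refine Finset.sum_le_sum fun i hi => ?_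
            simp only [Finset.mem_sdiff, Finset.mem_univ, true_and, Finset.mem_insert,
              Finset.mem_singleton, not_or] at hi
            rw [abs_mul, abs_pow]
            have : |(σ i : ℝ)| = 1 := by rcases hσ' i with h | h <;> simp [h]
            rw [this, one_mul]
            exact pow_le_pow_left₀ (abs_nonneg _) (hrest i hi.1 hi.2.1 hi.2.2) m
      _ ≤ ∑ i : Fin D, |(n (f 3) : ℝ)| ^ m :=
            Finset.sum_le_sum_of_subset_of_nonneg (Finset.subset_univ _) (fun _ _ _ => by positivity)
      _ = _ := by simp
  have e1 := sum_split3 (fun i => (σ i : ℝ) * (n i : ℝ) ^ 1) (f 0) (f 1) (f 2) d01 d02 d12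
  have e2 := sum_split3 (fun i => (σ i : ℝ) * (n i : ℝ) ^ 2) (f 0) (f 1) (f 2) d01 d02 d12
  have eM := sum_split3 (fun i => (σ i : ℝ) * (n i : ℝ) ^ (2 * k)) (f 0) (f 1) (f 2) d01 d02 d12
  have hn' : ∑ i, (σ i : ℝ) * (n i : ℝ) ^ 1 = 0 := by
    have : ((∑ i, σ i * n i : ℤ) : ℝ) = 0 := by rw [hn]; simp
    push_cast at this
    simpa using this
  push_cast
  rw [e2, eM]
  refine h _ _ _ _ _ _ _ (∑ i ∈ Finset.univ \ {f 0, f 1, f 2}, (σ i : ℝ) * (n i : ℝ) ^ 1) _ _ h10 h21 h32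
    (abs_nonneg _) (hσ' _) (hσ' _) (hσ' _) (by simpa only [pow_one] using rest 1) (rest 2) (rest (2 * k)) ?_
  rw [hn'] at e1
  simp only [pow_one] at e1 ⊢
  linarith


lemma ecs {ι : Type*} (f g : ι → ℝ≥0∞) :
    (∑' i, f i * g i) ^ 2 ≤ (∑' i, f i ^ 2) * (∑' i, g i ^ 2) := by
  let _ : MeasurableSpace ι := ⊤
  have h := ENNReal.lintegral_mul_le_Lp_mul_Lq (Measure.count : Measure ι)
    (Real.HolderConjugate.two_two) (f := f) (g := g)
    (measurable_from_top.aemeasurable) (measurable_from_top.aemeasurable)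
  simp only [Pi.mul_apply, lintegral_count] at h
  have h2 := pow_le_pow_left' h 2
  rw [mul_pow] at h2
  have e : ∀ x : ℝ≥0∞, (x ^ (1 / (2:ℝ))) ^ 2 = x := fun x => by
    rw [← ENNReal.rpow_natCast, ← ENNReal.rpow_mul]; norm_num
  simpa only [e, ENNReal.rpow_two] using h2

lemma esq_le {x A : ℝ≥0∞} (h : x ^ 2 ≤ A ^ 2) : x ≤ A :=
  (ENNReal.pow_le_pow_left_iff two_ne_zero).1 h

lemma collapse (s : ℤ) (hs : s = 1 ∨ s = -1) (m : ℤ) (G : ℤ → ℝ≥0∞) :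
    (∑' b : ℤ, if s * b = m then G b else 0) = G (s * m) := by
  rw [tsum_eq_single (s * m)]
  · rw [if_pos]; rcases hs with rfl | rfl <;> ring
  · intro b hb
    rw [if_neg]
    rintro rfl
    apply hb
    rcases hs with rfl | rfl <;> ring

lemma collapse2 (s1 s2 : ℤ) (hs : s2 = 1 ∨ s2 = -1) (a m : ℤ) (G : ℤ → ℝ≥0∞) :
    (∑' b : ℤ, if s1 * a + s2 * b = m then G b else 0) = G (s2 * (m - s1 * a)) := by
  rw [← collapse s2 hs (m - s1 * a) G]
  refine tsum_congr fun b => ?_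
  congr 1
  exact propext ⟨fun h => by linarith, fun h => by linarith⟩

lemma pair_bound (s1 s2 : ℤ) (hs1 : s1 = 1 ∨ s1 = -1) (hs2 : s2 = 1 ∨ s2 = -1) (m : ℤ)
    (f g : ℤ → ℝ≥0∞) (A B : ℝ≥0∞) (hf : ∑' a, f a ^ 2 ≤ A ^ 2) (hg : ∑' a, g a ^ 2 ≤ B ^ 2) :
    (∑' a : ℤ, ∑' b : ℤ, if s1 * a + s2 * b = m then f a * g b else 0) ≤ A * B := by
  have : ∀ a : ℤ, (∑' b : ℤ, if s1 * a + s2 * b = m then f a * g b else 0) =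
      f a * g (s2 * (m - s1 * a)) := fun a => collapse2 s1 s2 hs2 a m (fun b => f a * g b)
  simp_rw [this]
  apply esq_le
  refine (ecs _ _).trans ?_
  rw [mul_pow]
  refine mul_le_mul' hf (le_trans ?_ hg)
  refine ENNReal.tsum_comp_le_tsum_of_injective (f := fun a : ℤ => s2 * (m - s1 * a)) ?_ (fun b => g b ^ 2)
  intro a b h
  simp only at h
  rcases hs1 with rfl | rfl <;> rcases hs2 with rfl | rfl <;> linarith

def qw (z : ℤ) : ℝ≥0∞ := ENNReal.ofReal ((max 1 |(z : ℝ)|) ^ (-(1/8) : ℝ))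

lemma qw_pow (z : ℤ) (j : ℕ) : qw z ^ j = ENNReal.ofReal ((max 1 |(z : ℝ)|) ^ (-(j/8) : ℝ)) := by
  have : (0:ℝ) < max 1 |(z : ℝ)| := lt_of_lt_of_le one_pos (le_max_left _ _)
  rw [qw, ← ENNReal.ofReal_pow (by positivity), ← Real.rpow_natCast, ← Real.rpow_mul this.le]
  congr 2; ring

lemma qw_le_one (z : ℤ) : qw z ≤ 1 := by
  rw [qw, ← ENNReal.ofReal_one]
  apply ENNReal.ofReal_le_ofReal
  exact Real.rpow_le_one_of_one_le_of_nonpos (le_max_left _ _) (by norm_num)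

def gw (z : ℤ) : ℝ≥0∞ := ENNReal.ofReal ((1 + |(z : ℝ)|) ^ (-(5/4) : ℝ))

lemma gw_sum : ∑' z, gw z ≠ ⊤ := by
  have : Summable (fun z : ℤ => (1 + |(z : ℝ)|) ^ (-(5/4) : ℝ)) := by
    have h0 : Summable (fun n : ℕ => (((n + 1 : ℕ) : ℝ)) ^ (-(5/4) : ℝ)) :=
      (summable_nat_add_iff 1).2 (Real.summable_nat_rpow.2 (by norm_num))
    apply Summable.of_nat_of_neg
    · refine h0.congr fun n => ?_
      push_cast; rw [abs_of_nonneg (by positivity)]; ring_nf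
    · refine h0.congr fun n => ?_
      push_cast; rw [abs_neg, abs_of_nonneg (by positivity)]; ring_nf
  exact this.tsum_ofReal_ne_top

lemma qw_gw (z x : ℤ) (h : (1 + |(x:ℝ)|) ^ 2 ≤ 18 * max 1 |(z:ℝ)|) : qw z ^ 6 ≤ 18 * gw x := by
  rw [qw_pow, gw, show (18 : ℝ≥0∞) = ENNReal.ofReal 18 by simp, ← ENNReal.ofReal_mul (by norm_num)]
  apply ENNReal.ofReal_le_ofReal
  have h1 : (1:ℝ) ≤ 1 + |(x:ℝ)| := by linarith [abs_nonneg (x:ℝ)]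
  have h0 : (0:ℝ) < max 1 |(z : ℝ)| := lt_of_lt_of_le one_pos (le_max_left _ _)
  have e1 : (1 + |(x:ℝ)|) ^ (5/4 : ℝ) ≤ ((1 + |(x:ℝ)|) ^ 2) ^ (3/4 : ℝ) := by
    rw [← Real.rpow_natCast, ← Real.rpow_mul (by positivity)]
    exact Real.rpow_le_rpow_of_exponent_le h1 (by norm_num)
  have e2 : ((1 + |(x:ℝ)|) ^ 2) ^ (3/4 : ℝ) ≤ (18 * max 1 |(z:ℝ)|) ^ (3/4 : ℝ) :=
    Real.rpow_le_rpow (by positivity) h (by norm_num)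
  rw [Real.mul_rpow (by norm_num) h0.le] at e2
  have e3 : (18:ℝ) ^ (3/4:ℝ) ≤ 18 := by
    calc (18:ℝ) ^ (3/4:ℝ) ≤ 18 ^ (1:ℝ) := Real.rpow_le_rpow_of_exponent_le (by norm_num) (by norm_num)
      _ = 18 := by simp
  have e4 : (1 + |(x:ℝ)|) ^ (5/4 : ℝ) ≤ 18 * (max 1 |(z:ℝ)|) ^ (3/4 : ℝ) :=
    e1.trans (e2.trans (by gcongr))
  have e5 : (-((6:ℕ)/8) : ℝ) = -(3/4) := by norm_num
  rw [e5, Real.rpow_neg h0.le, Real.rpow_neg (by positivity)]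
  rw [inv_eq_one_div, inv_eq_one_div, mul_one_div, div_le_div_iff₀ (by positivity) (by positivity)]
  linarith

lemma qw_gw' (z : ℤ) : qw z ^ 10 ≤ 18 * gw z := by
  rw [qw_pow, gw, show (18 : ℝ≥0∞) = ENNReal.ofReal 18 by simp, ← ENNReal.ofReal_mul (by norm_num)]
  apply ENNReal.ofReal_le_ofReal
  have h0 : (0:ℝ) < max 1 |(z : ℝ)| := lt_of_lt_of_le one_pos (le_max_left _ _)
  have h1 : 1 + |(z:ℝ)| ≤ 2 * max 1 |(z:ℝ)| := by
    linarith [le_max_left 1 |(z:ℝ)|, le_max_right 1 |(z:ℝ)|]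
  have e2 : ((1 + |(z:ℝ)|)) ^ (5/4 : ℝ) ≤ (2 * max 1 |(z:ℝ)|) ^ (5/4 : ℝ) :=
    Real.rpow_le_rpow (by positivity) h1 (by norm_num)
  rw [Real.mul_rpow (by norm_num) h0.le] at e2
  have e3 : (2:ℝ) ^ (5/4:ℝ) ≤ 18 := by
    calc (2:ℝ) ^ (5/4:ℝ) ≤ 2 ^ (2:ℝ) := Real.rpow_le_rpow_of_exponent_le (by norm_num) (by norm_num)
      _ ≤ 18 := by norm_num
  have e4 : (1 + |(z:ℝ)|) ^ (5/4 : ℝ) ≤ 18 * (max 1 |(z:ℝ)|) ^ (5/4 : ℝ) :=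
    (e2.trans (by gcongr))
  have e5 : (-((10:ℕ)/8) : ℝ) = -(5/4) := by norm_num
  rw [e5, Real.rpow_neg h0.le, Real.rpow_neg (by positivity)]
  rw [inv_eq_one_div, inv_eq_one_div, mul_one_div, div_le_div_iff₀ (by positivity) (by positivity)]
  linarith

lemma quad_sep (A : ℤ) : ∃ r : ℤ, ∀ d : ℤ,
    (1 + |d - r|) ^ 2 ≤ 9 * max 1 |d ^ 2 + A| ∨ (1 + |d + r|) ^ 2 ≤ 9 * max 1 |d ^ 2 + A| := by
  rcases le_or_gt 0 A with hA | hA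
  · refine ⟨0, fun d => Or.inl ?_⟩
    have h1 : d ^ 2 ≤ |d ^ 2 + A| := le_trans (by linarith) (le_abs_self _)
    rw [sub_zero]
    have h2 : |d| ^ 2 = d ^ 2 := sq_abs d
    have h3 := le_max_left 1 |d ^ 2 + A|
    have h4 := le_max_right 1 |d ^ 2 + A|
    nlinarith [sq_nonneg (|d| - 1)]
  · obtain ⟨a, rfl⟩ : ∃ a : ℕ, A = -(a:ℤ) := ⟨A.natAbs, by omega⟩
    set r := Nat.sqrt a with hr
    have hr1 : (r:ℤ) * r ≤ a := by exact_mod_cast Nat.sqrt_le a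
    have hr2 : (a:ℤ) < (r + 1) * (r + 1) := by exact_mod_cast Nat.lt_succ_sqrt a
    have main : ∀ d : ℤ, 0 ≤ d → (1 + |d - r|) ^ 2 ≤ 9 * max 1 |d ^ 2 + -(a:ℤ)| := by
      intro d hd
      have h3 := le_max_left 1 |d ^ 2 + -(a:ℤ)|
      have h4 := le_max_right 1 |d ^ 2 + -(a:ℤ)|
      have hr0 : (0:ℤ) ≤ r := by positivity
      rcases le_or_gt d r with h | h
      · have h5 : (r - d) ^ 2 ≤ |d ^ 2 + -(a:ℤ)| := by
          refine le_trans ?_ (neg_le_abs _)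
          nlinarith
        rw [abs_of_nonpos (by linarith)]
        nlinarith [sq_nonneg ((r:ℤ) - d - 1)]
      · have h5 : (d - r - 1) ^ 2 ≤ |d ^ 2 + -(a:ℤ)| := by
          refine le_trans ?_ (le_abs_self _)
          nlinarith
        rw [abs_of_nonneg (by linarith)]
        nlinarith [sq_nonneg (d - r - 2)]
    refine ⟨r, fun d => ?_⟩
    rcases le_or_gt 0 d with h | h
    · exact Or.inl (main d h)
    · right
      have := main (-d) (by linarith)
      rw [show -d - (r:ℤ) = -(d + r) by ring, abs_neg, neg_sq] at this
      exact this

lemma quad_bound (s : ℤ) (hs : s = 1 ∨ s = -1) (m l : ℤ) :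
    (∑' a : ℤ, ∑' b : ℤ, if s * a + s * b = m then qw (s * a ^ 2 + s * b ^ 2 + l) ^ 6 else 0) ≤
      36 * ∑' z, gw z := by
  have : ∀ a : ℤ, (∑' b : ℤ, if s * a + s * b = m then qw (s * a ^ 2 + s * b ^ 2 + l) ^ 6 else 0) =
      qw (s * a ^ 2 + s * (s * (m - s * a)) ^ 2 + l) ^ 6 :=
    fun a => collapse2 s s hs a m (fun b => qw (s * a ^ 2 + s * b ^ 2 + l) ^ 6)
  simp_rw [this]
  set μ := s * m with hμ
  obtain ⟨r, hr⟩ := quad_sep (μ ^ 2 + 2 * s * l)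
  have key : ∀ a : ℤ, qw (s * a ^ 2 + s * (s * (m - s * a)) ^ 2 + l) ^ 6 ≤
      18 * gw (2 * a - μ - r) + 18 * gw (2 * a - μ + r) := by
    intro a
    have h2 : 2 * |s * a ^ 2 + s * (s * (m - s * a)) ^ 2 + l| = |(2 * a - μ) ^ 2 + (μ ^ 2 + 2 * s * l)| := by
      rw [show (2:ℤ) * |s * a ^ 2 + s * (s * (m - s * a)) ^ 2 + l| =
        |2 * (s * a ^ 2 + s * (s * (m - s * a)) ^ 2 + l)| by rw [abs_mul]; norm_num]
      rcases hs with rfl | rfl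
      · congr 1; rw [hμ]; ring
      · rw [← abs_neg]; congr 1; rw [hμ]; ring
    have h3 : max 1 |(2 * a - μ) ^ 2 + (μ ^ 2 + 2 * s * l)| ≤
        2 * max 1 |s * a ^ 2 + s * (s * (m - s * a)) ^ 2 + l| := by
      rw [← h2]
      apply max_le
      · linarith [le_max_left 1 |s * a ^ 2 + s * (s * (m - s * a)) ^ 2 + l|]
      · linarith [le_max_right 1 |s * a ^ 2 + s * (s * (m - s * a)) ^ 2 + l|]
    rcases hr (2 * a - μ) with h | h
    · refine le_trans (qw_gw _ (2 * a - μ - r) ?_) le_self_add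
      have : (1 + |2 * a - μ - r|) ^ 2 ≤ 18 * max 1 |s * a ^ 2 + s * (s * (m - s * a)) ^ 2 + l| := by linarith
      exact_mod_cast this
    · refine le_trans (qw_gw _ (2 * a - μ + r) ?_) le_add_self
      have : (1 + |2 * a - μ + r|) ^ 2 ≤ 18 * max 1 |s * a ^ 2 + s * (s * (m - s * a)) ^ 2 + l| := by linarith
      exact_mod_cast this
  refine (ENNReal.tsum_le_tsum key).trans ?_
  rw [ENNReal.tsum_add, ENNReal.tsum_mul_left, ENNReal.tsum_mul_left]
  have i1 : ∑' a : ℤ, gw (2 * a - μ - r) ≤ ∑' z, gw z :=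
    ENNReal.tsum_comp_le_tsum_of_injective (f := fun a : ℤ => 2 * a - μ - r)
      (fun a b h => by simp only at h; linarith) gw
  have i2 : ∑' a : ℤ, gw (2 * a - μ + r) ≤ ∑' z, gw z :=
    ENNReal.tsum_comp_le_tsum_of_injective (f := fun a : ℤ => 2 * a - μ + r)
      (fun a b h => by simp only at h; linarith) gw
  calc _ ≤ 18 * (∑' z, gw z) + 18 * ∑' z, gw z := by gcongr
    _ = _ := by rw [← add_mul]; norm_num

lemma lin_bound (s : ℤ) (hs : s = 1 ∨ s = -1) (m l : ℤ) (hm : m ≠ 0) :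
    (∑' a : ℤ, ∑' b : ℤ, if s * a + (-s) * b = m then qw (s * a ^ 2 + (-s) * b ^ 2 + l) ^ 10 else 0) ≤
      36 * ∑' z, gw z := by
  have : ∀ a : ℤ, (∑' b : ℤ, if s * a + (-s) * b = m then qw (s * a ^ 2 + (-s) * b ^ 2 + l) ^ 10 else 0) =
      qw (s * a ^ 2 + (-s) * ((-s) * (m - s * a)) ^ 2 + l) ^ 10 :=
    fun a => collapse2 s (-s) (by rcases hs with rfl | rfl <;> simp) a m
      (fun b => qw (s * a ^ 2 + (-s) * b ^ 2 + l) ^ 10)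
  simp_rw [this]
  refine (ENNReal.tsum_le_tsum fun a => qw_gw' _).trans ?_
  rw [ENNReal.tsum_mul_left]
  refine mul_le_mul' (by norm_num) ?_
  refine ENNReal.tsum_comp_le_tsum_of_injective
    (f := fun a : ℤ => s * a ^ 2 + (-s) * ((-s) * (m - s * a)) ^ 2 + l) ?_ gw
  intro a b h
  simp only at h
  rcases hs with rfl | rfl
  · have : m * (a - b) = 0 := by nlinarith
    rcases mul_eq_zero.1 this with h | h
    · exact absurd h hm
    · linarith
  · have : m * (a - b) = 0 := by nlinarith
    rcases mul_eq_zero.1 this with h | h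
    · exact absurd h hm
    · linarith


lemma prod_sq (f g : ℤ → ℝ≥0∞) (A B : ℝ≥0∞) (hf : ∑' a, f a ^ 2 ≤ A ^ 2)
    (hg : ∑' a, g a ^ 2 ≤ B ^ 2) : ∑' x : ℤ × ℤ, (f x.1 * g x.2) ^ 2 ≤ (A * B) ^ 2 := by
  rw [ENNReal.tsum_prod (f := fun a b => (f a * g b) ^ 2)]
  simp_rw [mul_pow, ENNReal.tsum_mul_left, ENNReal.tsum_mul_right]
  exact mul_le_mul' hf hg

lemma schur {α β : Type*} (φ : α → ℝ≥0∞) (ψ : β → ℝ≥0∞) (w v : α → β → ℝ≥0∞) (K A B : ℝ≥0∞)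
    (hφ : ∑' x, φ x ^ 2 ≤ A ^ 2) (hψ : ∑' y, ψ y ^ 2 ≤ B ^ 2)
    (hw : ∀ y, ∑' x, w x y ^ 2 ≤ K) (hv : ∀ x, ∑' y, v x y ^ 2 ≤ K) :
    ∑' x, ∑' y, φ x * ψ y * (w x y * v x y) ≤ K * (A * B) := by
  apply esq_le
  have e : ∑' x, ∑' y, φ x * ψ y * (w x y * v x y) =
      ∑' z : α × β, (ψ z.2 * w z.1 z.2) * (φ z.1 * v z.1 z.2) := by
    rw [ENNReal.tsum_prod (f := fun x y => (ψ y * w x y) * (φ x * v x y))]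
    refine tsum_congr fun x => tsum_congr fun y => by ring
  rw [e]
  refine (ecs _ _).trans ?_
  have h1 : ∑' z : α × β, (ψ z.2 * w z.1 z.2) ^ 2 ≤ K * B ^ 2 := by
    rw [ENNReal.tsum_prod (f := fun x y => (ψ y * w x y) ^ 2), ENNReal.tsum_comm]
    simp_rw [mul_pow, ENNReal.tsum_mul_left]
    calc _ ≤ ∑' y, ψ y ^ 2 * K := ENNReal.tsum_le_tsum fun y => mul_le_mul' le_rfl (hw y)
      _ ≤ _ := by rw [ENNReal.tsum_mul_right, mul_comm]; exact mul_le_mul' le_rfl hψ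
  have h2 : ∑' z : α × β, (φ z.1 * v z.1 z.2) ^ 2 ≤ K * A ^ 2 := by
    rw [ENNReal.tsum_prod (f := fun x y => (φ x * v x y) ^ 2)]
    simp_rw [mul_pow, ENNReal.tsum_mul_left]
    calc _ ≤ ∑' y, φ y ^ 2 * K := ENNReal.tsum_le_tsum fun y => mul_le_mul' le_rfl (hv y)
      _ ≤ _ := by rw [ENNReal.tsum_mul_right, mul_comm]; exact mul_le_mul' le_rfl hφ
  refine (mul_le_mul' h1 h2).trans (le_of_eq ?_)
  ring

def Kg : ℝ≥0∞ := 36 * ∑' z, gw z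

lemma Kg_ne_top : Kg ≠ ⊤ := ENNReal.mul_ne_top (by norm_num) gw_sum

lemma qw_anti (z : ℤ) {i j : ℕ} (h : i ≤ j) : qw z ^ j ≤ qw z ^ i :=
  pow_le_pow_right_of_le_one' (qw_le_one z) h

lemma good_bound (s3 s4 : ℤ) (h3 : s3 = 1 ∨ s3 = -1) (h4 : s4 = 1 ∨ s4 = -1) (m l : ℤ)
    (hm : s3 ≠ s4 → m ≠ 0) :
    (∑' y : ℤ × ℤ, if s3 * y.1 + s4 * y.2 = m then qw (s3 * y.1 ^ 2 + s4 * y.2 ^ 2 + l) ^ 10 else 0) ≤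
      Kg := by
  rw [ENNReal.tsum_prod (f := fun a b : ℤ => if s3 * a + s4 * b = m then
    qw (s3 * a ^ 2 + s4 * b ^ 2 + l) ^ 10 else 0)]
  by_cases h : s3 = s4
  · subst h
    refine le_trans ?_ (quad_bound s3 h3 m l)
    refine ENNReal.tsum_le_tsum fun a => ENNReal.tsum_le_tsum fun b => ?_
    split_ifs
    · exact qw_anti _ (by norm_num)
    · exact le_rfl
  · have : s4 = -s3 := by
      rcases h3 with rfl | rfl <;> rcases h4 with rfl | rfl <;> simp_all
    subst this
    exact lin_bound s3 h3 m l (hm h)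

lemma Q0 (s s3 s4 : ℤ) (hs : s = 1 ∨ s = -1) (h3 : s3 = 1 ∨ s3 = -1) (h4 : s4 = 1 ∨ s4 = -1)
    (m l : ℤ) (f1 f2 f3 f4 : ℤ → ℝ≥0∞) (A1 A2 A3 A4 : ℝ≥0∞)
    (H1 : ∑' a, f1 a ^ 2 ≤ A1 ^ 2) (H2 : ∑' a, f2 a ^ 2 ≤ A2 ^ 2)
    (H3 : ∑' a, f3 a ^ 2 ≤ A3 ^ 2) (H4 : ∑' a, f4 a ^ 2 ≤ A4 ^ 2) :
    (∑' x : ℤ × ℤ, ∑' y : ℤ × ℤ, if s * x.1 + s * x.2 + (s3 * y.1 + s4 * y.2) = m then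
      f1 x.1 * f2 x.2 * (f3 y.1 * f4 y.2) *
        qw (s * x.1 ^ 2 + s * x.2 ^ 2 + (s3 * y.1 ^ 2 + s4 * y.2 ^ 2) + l) ^ 8 else 0) ≤
      (1 + Kg) * ((A1 * A2) * (A3 * A4)) := by
  classical
  set I : ℤ × ℤ → ℤ × ℤ → Prop := fun x y => s * x.1 + s * x.2 + (s3 * y.1 + s4 * y.2) = m with hI
  set q : ℤ × ℤ → ℤ × ℤ → ℝ≥0∞ := fun x y =>
    qw (s * x.1 ^ 2 + s * x.2 ^ 2 + (s3 * y.1 ^ 2 + s4 * y.2 ^ 2) + l) with hq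
  set bad : ℤ × ℤ → Prop := fun y => s3 ≠ s4 ∧ s3 * y.1 + s4 * y.2 = 0 with hb
  have split : ∀ x y : ℤ × ℤ, (if I x y then f1 x.1 * f2 x.2 * (f3 y.1 * f4 y.2) * q x y ^ 8 else 0) ≤
      (if s * x.1 + s * x.2 = m then f1 x.1 * f2 x.2 else 0) *
        (if s3 * y.1 + s4 * y.2 = 0 then f3 y.1 * f4 y.2 else 0) +
      (f1 x.1 * f2 x.2) * (f3 y.1 * f4 y.2) *
        ((if I x y then q x y ^ 3 else 0) * (if I x y ∧ ¬ bad y then q x y ^ 5 else 0)) := by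
    intro x y
    by_cases h : I x y
    · by_cases hby : bad y
      · have e1 : s * x.1 + s * x.2 = m := by
          have := hby.2
          simp only [hI] at h
          linarith
        rw [if_pos h, if_pos e1, if_pos hby.2]
        refine le_trans ?_ le_self_add
        calc _ ≤ f1 x.1 * f2 x.2 * (f3 y.1 * f4 y.2) * 1 := by
              gcongr
              exact pow_le_one' (qw_le_one _) _
          _ = _ := mul_one _
      · have hc : I x y ∧ ¬ bad y := ⟨h, hby⟩
        simp only [if_pos h, if_pos hc]
        refine le_trans (le_of_eq ?_) le_add_self
        ring
    · rw [if_neg h]; exact bot_le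
  refine (ENNReal.tsum_le_tsum fun x => ENNReal.tsum_le_tsum fun y => split x y).trans ?_
  simp_rw [ENNReal.tsum_add]
  rw [add_mul, one_mul]
  refine add_le_add ?_ ?_
  · simp_rw [ENNReal.tsum_mul_left, ENNReal.tsum_mul_right]
    refine mul_le_mul' ?_ ?_
    · rw [ENNReal.tsum_prod (f := fun a b : ℤ => if s * a + s * b = m then f1 a * f2 b else 0)]
      exact pair_bound s s hs hs m f1 f2 A1 A2 H1 H2
    · rw [ENNReal.tsum_prod (f := fun a b : ℤ => if s3 * a + s4 * b = 0 then f3 a * f4 b else 0)]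
      exact pair_bound s3 s4 h3 h4 0 f3 f4 A3 A4 H3 H4
  · refine schur (fun x : ℤ × ℤ => f1 x.1 * f2 x.2) (fun y : ℤ × ℤ => f3 y.1 * f4 y.2)
      (fun x y => if I x y then q x y ^ 3 else 0) (fun x y => if I x y ∧ ¬ bad y then q x y ^ 5 else 0)
      Kg (A1 * A2) (A3 * A4) (prod_sq _ _ _ _ H1 H2) (prod_sq _ _ _ _ H3 H4) ?_ ?_
    · intro y
      have := quad_bound s hs (m - (s3 * y.1 + s4 * y.2)) (s3 * y.1 ^ 2 + s4 * y.2 ^ 2 + l)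
      rw [← ENNReal.tsum_prod (f := fun a b : ℤ => if s * a + s * b = m - (s3 * y.1 + s4 * y.2) then
        qw (s * a ^ 2 + s * b ^ 2 + (s3 * y.1 ^ 2 + s4 * y.2 ^ 2 + l)) ^ 6 else 0)] at this
      refine le_trans (le_of_eq (tsum_congr fun x => ?_)) this
      by_cases h : I x y
      · rw [if_pos h, if_pos (by simp only [hI] at h; linarith), ← pow_mul]
        simp only [hq, add_assoc]
      · rw [if_neg h, if_neg (by simp only [hI] at h; intro h'; apply h; linarith)]
        simp
    · intro x
      by_cases hm : s3 ≠ s4 ∧ m - (s * x.1 + s * x.2) = 0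
      · refine le_trans (le_of_eq ?_) bot_le
        rw [bot_eq_zero]
        refine ENNReal.tsum_eq_zero.2 fun y => ?_
        rw [if_neg]
        · simp
        · rintro ⟨h, h'⟩
          apply h'
          refine ⟨hm.1, ?_⟩
          have := hm.2
          simp only [hI] at h
          linarith
      · have := good_bound s3 s4 h3 h4 (m - (s * x.1 + s * x.2)) (s * x.1 ^ 2 + s * x.2 ^ 2 + l)
          (fun h h' => hm ⟨h, h'⟩)
        refine le_trans (ENNReal.tsum_le_tsum fun y => ?_) this
        by_cases h : I x y ∧ ¬ bad y
        · have h1 := h.1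
          rw [if_pos h, if_pos (by simp only [hI] at h1; linarith), ← pow_mul]
          simp only [hq]
          refine le_of_eq ?_
          congr 2
          ring
        · rw [if_neg h]; simp

def vecEquiv : (ℤ × ℤ) × (ℤ × ℤ) ≃ (Fin 4 → ℤ) where
  toFun z := ![z.1.1, z.1.2, z.2.1, z.2.2]
  invFun n := ((n 0, n 1), (n 2, n 3))
  left_inv z := rfl
  right_inv n := by ext i; fin_cases i <;> rfl

lemma Q1 (σ : Fin 4 → ℤ) (hσ : ∀ i, σ i = 1 ∨ σ i = -1) (h01 : σ 0 = σ 1) (m l : ℤ)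
    (f : Fin 4 → ℤ → ℝ≥0∞) (A : Fin 4 → ℝ≥0∞) (H : ∀ i, ∑' a, f i a ^ 2 ≤ A i ^ 2) :
    (∑' n : Fin 4 → ℤ, if ∑ i, σ i * n i = m then
      (∏ i, f i (n i)) * qw (∑ i, σ i * n i ^ 2 + l) ^ 8 else 0) ≤ (1 + Kg) * ∏ i, A i := by
  have := Q0 (σ 0) (σ 2) (σ 3) (hσ 0) (hσ 2) (hσ 3) m l (f 0) (f 1) (f 2) (f 3) (A 0) (A 1) (A 2) (A 3)
    (H 0) (H 1) (H 2) (H 3)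
  have hA : ∏ i, A i = (A 0 * A 1) * (A 2 * A 3) := by simp [Fin.prod_univ_four]; ring
  rw [hA]
  refine le_trans (le_of_eq ?_) this
  rw [← vecEquiv.tsum_eq, ENNReal.tsum_prod']
  refine tsum_congr fun x => tsum_congr fun y => ?_
  have v0 : vecEquiv (x, y) 0 = x.1 := rfl
  have v1 : vecEquiv (x, y) 1 = x.2 := rfl
  have v2 : vecEquiv (x, y) 2 = y.1 := rfl
  have v3 : vecEquiv (x, y) 3 = y.2 := rfl
  simp only [v0, v1, v2, v3, Fin.sum_univ_four, Fin.prod_univ_four, ← h01]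
  simp only [add_assoc, mul_assoc]

lemma Q2 (σ : Fin 4 → ℤ) (hσ : ∀ i, σ i = 1 ∨ σ i = -1) (m l : ℤ)
    (f : Fin 4 → ℤ → ℝ≥0∞) (A : Fin 4 → ℝ≥0∞) (H : ∀ i, ∑' a, f i a ^ 2 ≤ A i ^ 2) :
    (∑' n : Fin 4 → ℤ, if ∑ i, σ i * n i = m then
      (∏ i, f i (n i)) * qw (∑ i, σ i * n i ^ 2 + l) ^ 8 else 0) ≤ (1 + Kg) * ∏ i, A i := by
  obtain ⟨e, he⟩ : ∃ e : Equiv.Perm (Fin 4), σ (e 0) = σ (e 1) := by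
    by_cases h1 : σ 0 = σ 1
    · exact ⟨1, h1⟩
    by_cases h2 : σ 0 = σ 2
    · exact ⟨Equiv.swap 1 2, by simpa [Equiv.swap_apply_of_ne_of_ne] using h2⟩
    · refine ⟨Equiv.swap 0 2, ?_⟩
      have : σ 2 = σ 1 := by
        rcases hσ 0 with h | h <;> rcases hσ 1 with h' | h' <;> rcases hσ 2 with h'' | h'' <;> simp_all
      rw [Equiv.swap_apply_left, Equiv.swap_apply_of_ne_of_ne (by decide) (by decide)]
      exact this
  have := Q1 (fun i => σ (e i)) (fun i => hσ _) he m l (fun i => f (e i)) (fun i => A (e i)) (fun i => H _)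
  rw [Equiv.prod_comp e A] at this
  refine le_trans (le_of_eq ?_) this
  rw [← (Equiv.arrowCongr e (Equiv.refl ℤ)).tsum_eq]
  refine tsum_congr fun n => ?_
  have e1 : ∀ g : Fin 4 → ℤ → ℤ, ∑ i, g i ((Equiv.arrowCongr e (Equiv.refl ℤ)) n i) =
      ∑ i, g (e i) (n i) := by
    intro g
    rw [← Equiv.sum_comp e]
    simp
  have e2 : ∏ i, f i ((Equiv.arrowCongr e (Equiv.refl ℤ)) n i) = ∏ i, f (e i) (n i) := by
    rw [← Equiv.prod_comp e]
    simp
  rw [e1 (fun i a => σ i * a), e1 (fun i a => σ i * a ^ 2), e2]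


lemma tsum_prod_fin (d : ℕ) (g : Fin d → ℤ → ℝ≥0∞) :
    ∑' b : Fin d → ℤ, ∏ k, g k (b k) = ∏ k, ∑' a, g k a := by
  induction d with
  | zero => simp
  | succ d ih =>
    rw [← (Fin.consEquiv (fun _ : Fin (d+1) => ℤ)).tsum_eq, ENNReal.tsum_prod', Fin.prod_univ_succ]
    simp only [Fin.consEquiv_apply, Fin.prod_univ_succ, Fin.cons_zero, Fin.cons_succ]
    simp_rw [ENNReal.tsum_mul_left, ENNReal.tsum_mul_right]
    rw [ih (fun k => g k.succ)]

lemma tsum_prod_fintype {κ : Type*} [Fintype κ] (g : κ → ℤ → ℝ≥0∞) :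
    ∑' b : κ → ℤ, ∏ k, g k (b k) = ∏ k, ∑' a, g k a := by
  set e := Fintype.equivFin κ
  rw [← (Equiv.arrowCongr e.symm (Equiv.refl ℤ)).tsum_eq, ← Equiv.prod_comp e.symm,
    ← tsum_prod_fin _ (fun k => g (e.symm k))]
  refine tsum_congr fun b => ?_
  rw [← Equiv.prod_comp e.symm]
  simp

lemma split_bound {r D : ℕ} (f : Fin r → Fin D) (hf : Function.Injective f) (σ : Fin D → ℤ)
    (w : Fin r → ℤ → ℝ≥0∞) (v : Fin D → ℤ → ℝ≥0∞) (W : ℤ → ℝ≥0∞) (B L : ℝ≥0∞) (hL : 1 ≤ L)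
    (hv : ∀ i, (∀ j, f j ≠ i) → ∑' a, v i a ≤ L)
    (hB : ∀ m l : ℤ, (∑' a : Fin r → ℤ, if ∑ j, σ (f j) * a j = m then
      (∏ j, (w j (a j) * v (f j) (a j))) * W (∑ j, σ (f j) * a j ^ 2 + l) else 0) ≤ B) :
    (∑' n : Fin D → ℤ, if ∑ i, σ i * n i = 0 then
      (∏ j, w j (n (f j))) * (∏ i, v i (n i)) * W (∑ i, σ i * n i ^ 2) else 0) ≤ B * L ^ D := by
  classical
  obtain ⟨P, hP⟩ : ∃ P : Fin D → Prop, ∀ i, P i ↔ ∃ j, f j = i := ⟨fun i => ∃ j, f j = i, fun i => Iff.rfl⟩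
  set e : Fin r ≃ {i // P i} := Equiv.ofBijective (fun j => ⟨f j, (hP _).2 ⟨j, rfl⟩⟩)
    ⟨fun a b h => hf (by simpa using h), fun y => by
      obtain ⟨j, hj⟩ := (hP _).1 y.2
      exact ⟨j, Subtype.ext hj⟩⟩ with he
  set E : (Fin r → ℤ) × ({i // ¬ P i} → ℤ) ≃ (Fin D → ℤ) :=
    ((Equiv.arrowCongr e (Equiv.refl ℤ)).prodCongr (Equiv.refl _)).trans
      (Equiv.piEquivPiSubtypeProd P (fun _ => ℤ)).symm with hE
  have E1 : ∀ a b j, E (a, b) (f j) = a j := by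
    intro a b j
    have hj : P (f j) := (hP _).2 ⟨j, rfl⟩
    have h1 : e.symm ⟨f j, hj⟩ = j := by
      rw [Equiv.symm_apply_eq]; rfl
    simp [hE, Equiv.piEquivPiSubtypeProd, hj, h1]
  have E2 : ∀ a b (i : {i // ¬ P i}), E (a, b) i = b i := by
    intro a b i
    simp [hE, Equiv.piEquivPiSubtypeProd, i.2]
  have S : ∀ g : Fin D → ℤ → ℤ, ∀ a b, ∑ i, g i (E (a, b) i) =
      ∑ j, g (f j) (a j) + ∑ i : {i // ¬ P i}, g i (b i) := by
    intro g a b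
    rw [← Fintype.sum_subtype_add_sum_subtype P]
    congr 1
    · rw [← Equiv.sum_comp e]
      refine Finset.sum_congr rfl fun j _ => ?_
      have : ((e j : {i // P i}) : Fin D) = f j := rfl
      rw [this, E1]
    · refine Finset.sum_congr rfl fun j _ => ?_
      rw [E2]
  have Pd : ∀ g : Fin D → ℤ → ℝ≥0∞, ∀ a b, ∏ i, g i (E (a, b) i) =
      (∏ j, g (f j) (a j)) * ∏ i : {i // ¬ P i}, g i (b i) := by
    intro g a b
    rw [← Fintype.prod_subtype_mul_prod_subtype P]
    congr 1
    · rw [← Equiv.prod_comp e]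
      refine Finset.prod_congr rfl fun j _ => ?_
      have : ((e j : {i // P i}) : Fin D) = f j := rfl
      rw [this, E1]
    · refine Finset.prod_congr rfl fun j _ => ?_
      rw [E2]
  rw [← E.tsum_eq, ENNReal.tsum_prod', ENNReal.tsum_comm]
  have step : ∀ b : {i // ¬ P i} → ℤ, (∑' a : Fin r → ℤ, if ∑ i, σ i * E (a, b) i = 0 then
      (∏ j, w j (E (a, b) (f j))) * (∏ i, v i (E (a, b) i)) * W (∑ i, σ i * E (a, b) i ^ 2) else 0) ≤
      B * ∏ i : {i // ¬ P i}, v i (b i) := by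
    intro b
    refine le_trans (le_of_eq ?_) (mul_le_mul' (hB (-∑ i : {i // ¬ P i}, σ i * b i)
      (∑ i : {i // ¬ P i}, σ i * b i ^ 2)) le_rfl)
    rw [← ENNReal.tsum_mul_right]
    refine tsum_congr fun a => ?_
    rw [S (fun i z => σ i * z), S (fun i z => σ i * z ^ 2), Pd v]
    simp only [E1]
    by_cases h : ∑ j, σ (f j) * a j = -∑ i : {i // ¬ P i}, σ i * b i
    · rw [if_pos (by rw [h]; ring), if_pos h, Finset.prod_mul_distrib]
      ring
    · rw [if_neg (by intro h'; apply h; linarith), if_neg h, zero_mul]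
  refine (ENNReal.tsum_le_tsum step).trans ?_
  rw [ENNReal.tsum_mul_left, tsum_prod_fintype (fun (i : {i // ¬ P i}) => v i)]
  refine mul_le_mul' le_rfl ?_
  refine (Finset.prod_le_prod' fun (i : {i // ¬ P i}) _ => hv i fun j hj => i.2 ((hP _).2 ⟨j, hj⟩)).trans ?_
  rw [Finset.prod_const]
  refine pow_le_pow_right₀ hL ?_
  rw [Finset.card_univ]
  exact (Fintype.card_subtype_le _).trans (by simp)

def l2 (w v : ℤ → ℝ≥0∞) (A : ℝ≥0∞) : Prop := ∑' a, (w a * v a) ^ 2 ≤ A ^ 2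

lemma split4 {D : ℕ} (f : Fin 4 → Fin D) (hf : Function.Injective f) (σ : Fin D → ℤ)
    (hσ : ∀ i, σ i = 1 ∨ σ i = -1)
    (w : Fin 4 → ℤ → ℝ≥0∞) (v : Fin D → ℤ → ℝ≥0∞) (A : Fin 4 → ℝ≥0∞) (L : ℝ≥0∞) (hL : 1 ≤ L)
    (hv : ∀ i, (∀ j, f j ≠ i) → ∑' a, v i a ≤ L) (h : ∀ j, l2 (w j) (v (f j)) (A j)) :
    (∑' n : Fin D → ℤ, if ∑ i, σ i * n i = 0 then
      (∏ j, w j (n (f j))) * (∏ i, v i (n i)) * qw (∑ i, σ i * n i ^ 2) ^ 8 else 0) ≤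
      ((1 + Kg) * ∏ j, A j) * L ^ D :=
  split_bound f hf σ w v (fun z => qw z ^ 8) _ L hL hv fun m l =>
    Q2 (fun j => σ (f j)) (fun _ => hσ _) m l (fun j a => w j a * v (f j) a) A h

lemma split2 {D : ℕ} (f : Fin 2 → Fin D) (hf : Function.Injective f) (σ : Fin D → ℤ)
    (hσ : ∀ i, σ i = 1 ∨ σ i = -1)
    (w : Fin 2 → ℤ → ℝ≥0∞) (v : Fin D → ℤ → ℝ≥0∞) (A : Fin 2 → ℝ≥0∞) (L : ℝ≥0∞) (hL : 1 ≤ L)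
    (hv : ∀ i, (∀ j, f j ≠ i) → ∑' a, v i a ≤ L) (h : ∀ j, l2 (w j) (v (f j)) (A j)) :
    (∑' n : Fin D → ℤ, if ∑ i, σ i * n i = 0 then
      (∏ j, w j (n (f j))) * (∏ i, v i (n i)) else 0) ≤
      (∏ j, A j) * L ^ D := by
  have := split_bound f hf σ w v (fun z => 1) (∏ j, A j) L hL hv fun m l => by
    rw [← (finTwoArrowEquiv ℤ).symm.tsum_eq, ENNReal.tsum_prod']
    simp only [finTwoArrowEquiv_symm_apply, Fin.sum_univ_two, Fin.prod_univ_two, mul_one,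
      Matrix.cons_val_zero, Matrix.cons_val_one]
    exact pair_bound (σ (f 0)) (σ (f 1)) (hσ _) (hσ _) m (fun a => w 0 a * v (f 0) a)
      (fun a => w 1 a * v (f 1) a) (A 0) (A 1) (h 0) (h 1)
  simpa only [mul_one] using this


def wt (s : ℕ) (a : ℤ) : ℝ≥0∞ := (a.natAbs : ℝ≥0∞) ^ s

structure SN (k : ℕ) (c : ℤ → ℂ) (L H : ℝ≥0∞) : Prop where
  one : ∑' a, ‖c a‖ₑ ≤ L
  h1 : ∑' a, (wt 1 a * ‖c a‖ₑ) ^ 2 ≤ L ^ 2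
  hk : ∑' a, (wt (k - 1) a * ‖c a‖ₑ) ^ 2 ≤ (L * H) ^ 2

lemma enorm_le_of_real {z : ℂ} {x : ℝ} (h : ‖z‖ ≤ x) : ‖z‖ₑ ≤ ENNReal.ofReal x := by
  rw [← ofReal_norm]
  exact ENNReal.ofReal_le_ofReal h

lemma wt_eq (s : ℕ) (a : ℤ) : wt s a = ENNReal.ofReal (|(a:ℝ)| ^ s) := by
  rw [wt, ENNReal.ofReal_pow (abs_nonneg _)]
  congr 1
  rw [← Int.cast_abs, Int.abs_eq_natAbs, Int.cast_natCast, ENNReal.ofReal_natCast]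

lemma qw8 (z : ℤ) : qw z ^ 8 = ENNReal.ofReal (max 1 |(z:ℝ)|)⁻¹ := by
  have h0 : (0:ℝ) < max 1 |(z : ℝ)| := lt_of_lt_of_le one_pos (le_max_left _ _)
  rw [qw_pow, show (-((8:ℕ)/8) : ℝ) = -1 by norm_num, Real.rpow_neg_one]

def MM (k : ℕ) {D : ℕ} (σ : Fin D → ℤ) (n : Fin D → ℤ) : ℤ := ∑ i, σ i * n i ^ (2 * k)
def OO {D : ℕ} (σ : Fin D → ℤ) (n : Fin D → ℤ) : ℤ := ∑ i, σ i * n i ^ 2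

def mu1 (k : ℕ) {D : ℕ} (σ : Fin D → ℤ) (n : Fin D → ℤ) : ℂ :=
  if OO σ n = 0 then 0 else (MM k σ n : ℂ) / (OO σ n : ℂ)
def mu2 (k : ℕ) {D : ℕ} (σ : Fin D → ℤ) (n : Fin D → ℤ) : ℂ :=
  if OO σ n = 0 then (MM k σ n : ℂ) else 0

def TT {D : ℕ} (σ : Fin D → ℤ) (μ : (Fin D → ℤ) → ℂ) (v : Fin D → ℤ → ℂ) (n : Fin D → ℤ) : ℂ :=
  if ∑ i, σ i * n i = 0 then μ n * ∏ i, v i (n i) else 0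

lemma mu_bound (k : ℕ) (hk : 1 ≤ k) (D : ℕ) (hD : 4 ≤ D) : ∃ C : ℝ, 0 ≤ C ∧
    ∀ σ : Fin D → ℤ, (∀ i, σ i = 1 ∨ σ i = -1) → ∀ n : Fin D → ℤ, ∑ i, σ i * n i = 0 →
    ∃ f : Fin 4 → Fin D, Function.Injective f ∧ ∀ μ ∈ ({mu1 k σ, mu2 k σ} : Set ((Fin D → ℤ) → ℂ)),
      ‖μ n‖ ≤ C * (|(n (f 0) : ℝ)| ^ (k - 1) * |(n (f 1) : ℝ)| ^ (k - 1) *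
        (1 + |(n (f 2) : ℝ)| * |(n (f 3) : ℝ)| * (max 1 |((OO σ n : ℤ) : ℝ)|)⁻¹)) := by
  obtain ⟨C, hC, h⟩ := symbol_bound k hk D hD
  refine ⟨C, hC, fun σ hσ n hn => ?_⟩
  obtain ⟨f, hf, hb⟩ := h σ hσ n hn
  refine ⟨f, hf, fun μ hμ => ?_⟩
  change |((MM k σ n : ℤ) : ℝ)| ≤ C * (_ * (|((OO σ n : ℤ) : ℝ)| + _)) at hb
  have hM : ‖((MM k σ n : ℤ) : ℂ)‖ = |((MM k σ n : ℤ) : ℝ)| := by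
    rw [Complex.norm_intCast]
  have hO : ‖((OO σ n : ℤ) : ℂ)‖ = |((OO σ n : ℤ) : ℝ)| := by
    rw [Complex.norm_intCast]
  rcases hμ with rfl | hμ
  · unfold mu1
    split_ifs with h0
    · rw [norm_zero]
      have : 0 < max 1 |((OO σ n : ℤ) : ℝ)| := lt_of_lt_of_le one_pos (le_max_left _ _)
      positivity
    · have h1 : (1:ℝ) ≤ |((OO σ n : ℤ) : ℝ)| := by
        have : (1:ℤ) ≤ |OO σ n| := Int.one_le_abs h0
        exact_mod_cast this
      rw [norm_div, hM, hO, max_eq_right h1, div_le_iff₀ (by linarith)]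
      refine hb.trans (le_of_eq ?_)
      have : |((OO σ n : ℤ) : ℝ)| ≠ 0 := by linarith
      field_simp
  · rw [Set.mem_singleton_iff] at hμ
    subst hμ
    unfold mu2
    split_ifs with h0
    · rw [hM]
      refine hb.trans ?_
      rw [h0]
      simp only [Int.cast_zero, abs_zero, zero_add, max_eq_left zero_le_one, inv_one, mul_one]
      gcongr
      linarith
    · rw [norm_zero]
      have : 0 < max 1 |((OO σ n : ℤ) : ℝ)| := lt_of_lt_of_le one_pos (le_max_left _ _)
      positivity

def www (k : ℕ) (j : Fin 4) : ℤ → ℝ≥0∞ := if j.val < 2 then wt (k - 1) else wt 1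

lemma Lam_bound (k : ℕ) (hk : 1 ≤ k) (D : ℕ) (hD : 4 ≤ D) : ∃ C : ℝ≥0∞, C ≠ ⊤ ∧
    ∀ σ : Fin D → ℤ, (∀ i, σ i = 1 ∨ σ i = -1) → ∀ (v : Fin D → ℤ → ℂ) (L H : ℝ≥0∞), 1 ≤ L →
    (∀ i, SN k (v i) L H) → ∀ μ ∈ ({mu1 k σ, mu2 k σ} : Set ((Fin D → ℤ) → ℂ)),
    ∑' n, ‖TT σ μ v n‖ₑ ≤ C * L ^ (D + 4) * H ^ 2 := by
  classical
  obtain ⟨C, hC, hb⟩ := mu_bound k hk D hD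
  set K : ℝ≥0∞ := ENNReal.ofReal C with hK
  refine ⟨(Fintype.card (Fin 4 → Fin D)) * (K * (2 + Kg)), ?_, ?_⟩
  · refine ENNReal.mul_ne_top (by simp) (ENNReal.mul_ne_top (by simp [hK]) ?_)
    exact ENNReal.add_ne_top.2 ⟨by norm_num, Kg_ne_top⟩
  intro σ hσ v L H hL hv μ hμ
  set V : Fin D → ℤ → ℝ≥0∞ := fun i a => ‖v i a‖ₑ with hV
  set X : (Fin 4 → Fin D) → (Fin D → ℤ) → ℝ≥0∞ := fun f n => if Function.Injective f then
    K * ((if ∑ i, σ i * n i = 0 then (∏ j : Fin 2, wt (k-1) (n (f (Fin.castLE (by norm_num) j)))) * (∏ i, V i (n i)) else 0) +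
      (if ∑ i, σ i * n i = 0 then (∏ j, www k j (n (f j))) * (∏ i, V i (n i)) *
        qw (∑ i, σ i * n i ^ 2) ^ 8 else 0)) else 0 with hX
  have key : ∀ n, ‖TT σ μ v n‖ₑ ≤ ∑ f, X f n := by
    intro n
    unfold TT
    split_ifs with h0
    · obtain ⟨f, hf, hb'⟩ := hb σ hσ n h0
      refine le_trans ?_ (Finset.single_le_sum (f := fun f => X f n) (fun _ _ => bot_le) (Finset.mem_univ f))
      simp only [hX, if_pos hf, if_pos h0]
      have h1 := enorm_le_of_real (hb' μ hμ)
      rw [enorm_mul]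
      have h2 : ‖∏ i, v i (n i)‖ₑ = ∏ i, V i (n i) := by
        simp only [hV, enorm_eq_nnnorm]
        rw [nnnorm_prod]; push_cast; rfl
      rw [h2]
      have hp : 0 < max 1 |((OO σ n : ℤ) : ℝ)| := lt_of_lt_of_le one_pos (le_max_left _ _)
      have h3 : ENNReal.ofReal (C * (|(n (f 0) : ℝ)| ^ (k - 1) * |(n (f 1) : ℝ)| ^ (k - 1) *
        (1 + |(n (f 2) : ℝ)| * |(n (f 3) : ℝ)| * (max 1 |((OO σ n : ℤ) : ℝ)|)⁻¹))) =
        K * (wt (k-1) (n (f 0)) * wt (k-1) (n (f 1)) * (1 + wt 1 (n (f 2)) * wt 1 (n (f 3)) * qw (OO σ n) ^ 8)) := by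
        rw [wt_eq, wt_eq, wt_eq, wt_eq, qw8, hK, ← ENNReal.ofReal_mul (by positivity),
          ← ENNReal.ofReal_mul (by positivity), ← ENNReal.ofReal_mul (by positivity),
          ← ENNReal.ofReal_one, ← ENNReal.ofReal_add (by positivity) (by positivity),
          ← ENNReal.ofReal_mul (by positivity), ← ENNReal.ofReal_mul (by positivity), pow_one, pow_one]
      rw [h3] at h1
      refine (mul_le_mul' h1 le_rfl).trans (le_of_eq ?_)
      have h4 : ∏ j : Fin 2, wt (k-1) (n (f (Fin.castLE (by norm_num) j))) =
          wt (k-1) (n (f 0)) * wt (k-1) (n (f 1)) := by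
        rw [Fin.prod_univ_two]; rfl
      have h5 : ∏ j, www k j (n (f j)) =
          wt (k-1) (n (f 0)) * wt (k-1) (n (f 1)) * (wt 1 (n (f 2)) * wt 1 (n (f 3))) := by
        rw [Fin.prod_univ_four]; simp [www]; ring
      rw [h4, h5]
      unfold OO
      ring
    · rw [enorm_zero]; exact bot_le
  refine (ENNReal.tsum_le_tsum key).trans ?_
  rw [Summable.tsum_finsetSum (fun _ _ => ENNReal.summable)]
  have fin : ∀ f, ∑' n, X f n ≤ K * (2 + Kg) * L ^ (D + 4) * H ^ 2 := by
    intro f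
    by_cases hf : Function.Injective f
    · simp only [hX, if_pos hf]
      rw [ENNReal.tsum_mul_left, ENNReal.tsum_add]
      have b1 := split2 (fun j => f (Fin.castLE (by norm_num) j)) (hf.comp (Fin.castLE_injective (by norm_num))) σ hσ
        (fun _ => wt (k-1)) V (fun _ => L * H) L hL (fun i _ => (hv i).one) (fun j => (hv _).hk)
      have b2 := split4 f hf σ hσ (www k) V (fun j => if j.val < 2 then L * H else L) L hL
        (fun i _ => (hv i).one) (fun j => by
          by_cases hj : j.val < 2
          · simp only [www, if_pos hj]; exact (hv _).hk
          · simp only [www, if_neg hj]; exact (hv _).h1)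
      refine (mul_le_mul' le_rfl (add_le_add b1 b2)).trans ?_
      rw [Fin.prod_univ_two, Fin.prod_univ_four]
      simp only [Fin.val_zero, Fin.val_one, Fin.val_two, show ((3:Fin 4)).val = 3 from rfl]
      norm_num
      have e1 : L * H * (L * H) * L ^ D ≤ L ^ (D + 4) * H ^ 2 := by
        calc L * H * (L * H) * L ^ D = L ^ (D + 2) * H ^ 2 := by ring
          _ ≤ _ := by gcongr <;> first | exact hL | norm_num
      have e2 : (1 + Kg) * (L * H * (L * H) * L * L) * L ^ D = (1 + Kg) * (L ^ (D + 4) * H ^ 2) := by ring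
      rw [e2]
      calc _ ≤ K * (L ^ (D + 4) * H ^ 2 + (1 + Kg) * (L ^ (D + 4) * H ^ 2)) := by gcongr
        _ = _ := by ring
    · simp only [hX, if_neg hf, tsum_zero]; exact bot_le
  refine (Finset.sum_le_sum fun f _ => fin f).trans (le_of_eq ?_)
  rw [Finset.sum_const, nsmul_eq_mul, Finset.card_univ]
  ring


def GG {D : ℕ} (σ : Fin D → ℤ) (j : Fin D) (x : Fin D → ℤ → ℝ≥0∞) (n : ℤ) : ℝ≥0∞ :=
  ∑' m : Fin D → ℤ, if ∑ i, σ i * m i = 0 then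
    ∏ i, (Function.update x j (fun a => if a = n then 1 else 0)) i (m i) else 0

lemma prod_update {D : ℕ} {R : Type*} [CommMonoid R] (j : Fin D) (x : Fin D → ℤ → R) (h : ℤ → R) (m : Fin D → ℤ) :
    ∏ i, (Function.update x j h) i (m i) = h (m j) * ∏ i ∈ Finset.univ.erase j, x i (m i) := by
  rw [← Finset.mul_prod_erase _ _ (Finset.mem_univ j), Function.update_self]
  congr 1
  refine Finset.prod_congr rfl fun i hi => ?_
  rw [Function.update_of_ne (Finset.ne_of_mem_erase hi)]

lemma GG_pair {D : ℕ} (σ : Fin D → ℤ) (j : Fin D) (x : Fin D → ℤ → ℝ≥0∞) (g : ℤ → ℝ≥0∞) :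
    ∑' n, g n * GG σ j x n = ∑' m : Fin D → ℤ, if ∑ i, σ i * m i = 0 then
      ∏ i, (Function.update x j g) i (m i) else 0 := by
  unfold GG
  simp_rw [← ENNReal.tsum_mul_left]
  rw [ENNReal.tsum_comm]
  refine tsum_congr fun m => ?_
  split_ifs with h
  · simp_rw [prod_update]
    rw [tsum_eq_single (m j)]
    · simp
    · intro b hb
      rw [if_neg (Ne.symm hb)]; simp
  · simp

lemma NL1 {D : ℕ} (σ : Fin D → ℤ) (hσ : ∀ i, σ i = 1 ∨ σ i = -1) (j : Fin D) (x : Fin D → ℤ → ℝ≥0∞)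
    (L : ℝ≥0∞) (hL : 1 ≤ L) (hx : ∀ i, ∑' a, x i a ≤ L) : ∑' n, GG σ j x n ≤ L ^ D := by
  have h := GG_pair σ j x (fun _ => 1)
  simp only [one_mul] at h
  rw [h]
  have := split_bound (fun _ : Fin 1 => j) (fun _ _ _ => Subsingleton.elim _ _) σ (fun _ _ => 1)
    (Function.update x j (fun _ => 1)) (fun _ => 1) 1 L hL (fun i hi => by
      rw [Function.update_of_ne (fun h => hi 0 h.symm)]; exact hx i) (fun m l => by
      rw [← (Equiv.funUnique (Fin 1) ℤ).symm.tsum_eq]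
      simp only [Finset.univ_unique, Finset.sum_singleton, Finset.prod_singleton, Function.update_self, mul_one]
      exact le_of_eq (collapse (σ j) (hσ j) m (fun _ => 1)))
  simpa using this

lemma duality (y : ℤ → ℝ≥0∞) (K : ℝ≥0∞) (hy : ∀ a, y a ≠ ⊤)
    (h : ∀ (g : ℤ → ℝ≥0∞) (B : ℝ≥0∞), ∑' a, g a ^ 2 ≤ B ^ 2 → ∑' a, y a * g a ≤ K * B) :
    ∑' a, y a ^ 2 ≤ K ^ 2 := by
  classical
  rw [ENNReal.tsum_eq_iSup_sum]
  refine iSup_le fun S => ?_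
  set X := ∑ a ∈ S, y a ^ 2 with hX
  set B := X ^ (1/2 : ℝ) with hB
  have hB2 : B ^ 2 = X := by
    rw [hB, ← ENNReal.rpow_natCast, ← ENNReal.rpow_mul]; norm_num
  have hXt : X ≠ ⊤ := by
    rw [hX]
    exact ENNReal.sum_ne_top.2 fun a _ => ENNReal.pow_ne_top (hy a)
  have hBt : B ≠ ⊤ := ENNReal.rpow_ne_top_of_nonneg (by norm_num) hXt
  have e1 : ∑' a, (if a ∈ S then y a else 0) ^ 2 = X := by
    rw [tsum_eq_sum (s := S), hX]
    · exact Finset.sum_congr rfl fun a ha => by rw [if_pos ha]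
    · intro a ha; rw [if_neg ha]; simp
  have e2 : ∑' a, y a * (if a ∈ S then y a else 0) = X := by
    rw [tsum_eq_sum (s := S), hX]
    · exact Finset.sum_congr rfl fun a ha => by rw [if_pos ha, sq]
    · intro a ha; rw [if_neg ha]; simp
  have h1 := h (fun a => if a ∈ S then y a else 0) B (by rw [e1, hB2])
  rw [e2, ← hB2, sq] at h1
  rw [← hB2]
  by_cases h0 : B = 0
  · rw [h0]; simp
  · have : B ≤ K := (ENNReal.mul_le_mul_iff_left h0 hBt).1 h1
    gcongr

lemma natAbs_sum_le {α : Type*} (S : Finset α) (f : α → ℤ) :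
    (∑ i ∈ S, f i).natAbs ≤ ∑ i ∈ S, (f i).natAbs := by
  classical
  induction S using Finset.induction_on with
  | empty => simp
  | insert a s ha ih =>
    rw [Finset.sum_insert ha, Finset.sum_insert ha]
    exact (Int.natAbs_add_le _ _).trans (by gcongr)

lemma wt_split {D : ℕ} (σ : Fin D → ℤ) (hσ : ∀ i, σ i = 1 ∨ σ i = -1) (j : Fin D) (m : Fin D → ℤ)
    (h : ∑ i, σ i * m i = 0) (hD : 2 ≤ D) (s : ℕ) :
    wt s (m j) ≤ (D : ℝ≥0∞) ^ s * ∑ i ∈ Finset.univ.erase j, wt s (m i) := by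
  have hne : (Finset.univ.erase j).Nonempty := by
    rw [← Finset.card_pos, Finset.card_erase_of_mem (Finset.mem_univ j)]; simp; omega
  obtain ⟨i0, hi0, hmax⟩ := Finset.exists_max_image (Finset.univ.erase j) (fun i => (m i).natAbs) hne
  have hab : ∀ i, (σ i * m i).natAbs = (m i).natAbs := by
    intro i; rcases hσ i with h | h <;> simp [h]
  have h1 : (m j).natAbs ≤ D * (m i0).natAbs := by
    rw [← hab j, show σ j * m j = -∑ i ∈ Finset.univ.erase j, σ i * m i by
      rw [← Finset.add_sum_erase _ _ (Finset.mem_univ j)] at h; linarith, Int.natAbs_neg]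
    refine (natAbs_sum_le _ _).trans ?_
    refine (Finset.sum_le_card_nsmul _ _ (m i0).natAbs fun i hi => by rw [hab]; exact hmax i hi).trans ?_
    rw [smul_eq_mul]
    exact Nat.mul_le_mul_right _ ((Finset.card_le_univ _).trans (by simp))
  have h2 : wt s (m j) ≤ (D : ℝ≥0∞) ^ s * wt s (m i0) := by
    unfold wt
    rw [← mul_pow]
    exact pow_le_pow_left' (by exact_mod_cast h1) s
  refine h2.trans (mul_le_mul' le_rfl ?_)
  exact Finset.single_le_sum (f := fun i => wt s (m i)) (fun _ _ => bot_le) hi0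

lemma NL2 {D : ℕ} (hD : 2 ≤ D) (σ : Fin D → ℤ) (hσ : ∀ i, σ i = 1 ∨ σ i = -1) (j : Fin D)
    (x : Fin D → ℤ → ℝ≥0∞) (s : ℕ) (A : ℝ≥0∞)
    (L : ℝ≥0∞) (hL : 1 ≤ L) (hLt : L ≠ ⊤) (hx : ∀ i, ∑' a, x i a ≤ L)
    (hA : ∀ i, ∑' a, (wt s a * x i a) ^ 2 ≤ A ^ 2) :
    ∑' n, (wt s n * GG σ j x n) ^ 2 ≤ ((D : ℝ≥0∞) ^ (s + 1) * A * L ^ D) ^ 2 := by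
  apply duality
  · intro a
    refine ENNReal.mul_ne_top (by simp [wt]) ?_
    have := (ENNReal.le_tsum a).trans (NL1 σ hσ j x L hL hx)
    exact ne_top_of_le_ne_top (ENNReal.pow_ne_top hLt) this
  intro g B hg
  have e : ∑' n, wt s n * GG σ j x n * g n = ∑' n, (wt s n * g n) * GG σ j x n :=
    tsum_congr fun n => by ring
  rw [e, GG_pair]
  have key : ∀ m : Fin D → ℤ, (if ∑ i, σ i * m i = 0 then
      ∏ i, (Function.update x j (fun n => wt s n * g n)) i (m i) else 0) ≤
      ∑ i0 ∈ Finset.univ.erase j, (D : ℝ≥0∞) ^ s * (if ∑ i, σ i * m i = 0 then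
        (∏ l, (![wt s, fun _ => 1] : Fin 2 → ℤ → ℝ≥0∞) l (m ((![i0, j] : Fin 2 → Fin D) l))) *
          ∏ i, (Function.update x j g) i (m i) else 0) := by
    intro m
    split_ifs with h
    · simp only [Fin.prod_univ_two, Matrix.cons_val_zero, Matrix.cons_val_one, mul_one]
      rw [prod_update, prod_update]
      have := wt_split σ hσ j m h hD s
      calc _ ≤ ((D : ℝ≥0∞) ^ s * ∑ i ∈ Finset.univ.erase j, wt s (m i)) * g (m j) *
            ∏ i ∈ Finset.univ.erase j, x i (m i) := by gcongr
        _ = _ := by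
          rw [← Finset.mul_sum, ← Finset.sum_mul]; ring
    · exact bot_le
  refine (ENNReal.tsum_le_tsum key).trans ?_
  rw [Summable.tsum_finsetSum (fun _ _ => ENNReal.summable)]
  have fin : ∀ i0 ∈ Finset.univ.erase j, ∑' m : Fin D → ℤ, (D : ℝ≥0∞) ^ s * (if ∑ i, σ i * m i = 0 then
        (∏ l, (![wt s, fun _ => 1] : Fin 2 → ℤ → ℝ≥0∞) l (m ((![i0, j] : Fin 2 → Fin D) l))) *
          ∏ i, (Function.update x j g) i (m i) else 0) ≤ (D : ℝ≥0∞) ^ s * (A * B * L ^ D) := by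
    intro i0 hi0
    have hne := Finset.ne_of_mem_erase hi0
    rw [ENNReal.tsum_mul_left]
    refine mul_le_mul' le_rfl ?_
    have := split2 (![i0, j] : Fin 2 → Fin D) (by
      intro a b hab
      fin_cases a <;> fin_cases b <;> simp_all [Ne.symm hne]) σ hσ (![wt s, fun _ => 1] : Fin 2 → ℤ → ℝ≥0∞)
      (Function.update x j g) ![A, B] L hL (fun i hi => by
        rw [Function.update_of_ne (fun h => hi 1 (by simp [h]))]; exact hx i) (fun l => by
        fin_cases l
        · simp [l2, Function.update_of_ne hne]; exact hA i0
        · simpa [l2] using hg)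
    simpa only [Fin.prod_univ_two, Matrix.cons_val_zero, Matrix.cons_val_one] using this
  refine (Finset.sum_le_sum fin).trans ?_
  rw [Finset.sum_const, nsmul_eq_mul]
  have hc : ((Finset.univ.erase j).card : ℝ≥0∞) ≤ D := by
    exact_mod_cast (Finset.card_le_univ _).trans (by simp)
  calc _ ≤ (D : ℝ≥0∞) * ((D : ℝ≥0∞) ^ s * (A * B * L ^ D)) := by gcongr
    _ = _ := by ring


def ee (n : ℤ) (x : ℝ) : ℂ := Complex.exp ((n : ℂ) * x * Complex.I)

lemma ee_zero (x : ℝ) : ee 0 x = 1 := by simp [ee]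
lemma ee_add (m n : ℤ) (x : ℝ) : ee (m + n) x = ee m x * ee n x := by
  simp only [ee, ← Complex.exp_add]; congr 1; push_cast; ring
lemma ee_norm (n : ℤ) (x : ℝ) : ‖ee n x‖ = 1 := by
  rw [ee, show ((n : ℂ) * x * Complex.I) = ((n * x : ℝ) : ℂ) * Complex.I by push_cast; ring,
    Complex.norm_exp_ofReal_mul_I]
lemma ee_conj (n : ℤ) (x : ℝ) : (starRingEnd ℂ) (ee n x) = ee (-n) x := by
  rw [ee, ee, ← Complex.exp_conj]; congr 1; simp
lemma ee_cont (n : ℤ) : Continuous (ee n) := by unfold ee; fun_prop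
lemma ee_sum {α : Type*} (S : Finset α) (f : α → ℤ) (x : ℝ) : ee (∑ i ∈ S, f i) x = ∏ i ∈ S, ee (f i) x := by
  classical
  induction S using Finset.induction_on with
  | empty => simp [ee_zero]
  | insert a s ha ih => rw [Finset.sum_insert ha, Finset.prod_insert ha, ee_add, ih]
lemma ee_deriv (n : ℤ) (x : ℝ) : HasDerivAt (ee n) (n * Complex.I * ee n x) x := by
  have h : HasDerivAt (fun y : ℝ => (n : ℂ) * y * Complex.I) ((n:ℂ) * 1 * Complex.I) x :=
    (((hasDerivAt_id x).ofReal_comp).const_mul (n:ℂ)).mul_const Complex.I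
  have := h.cexp
  simp only [mul_one] at this
  rw [mul_comm]
  exact this
lemma ee_two_pi (n : ℤ) : ee n (2 * π) = 1 := by
  rw [ee, show (n : ℂ) * ((2 * π : ℝ) : ℂ) * Complex.I = n * (2 * π * Complex.I) by push_cast; ring]
  exact Complex.exp_int_mul_two_pi_mul_I n
lemma ee_at_zero (n : ℤ) : ee n 0 = 1 := by simp [ee]

lemma ee_int (n : ℤ) : ∫ x in (0:ℝ)..(2 * π), ee n x = if n = 0 then (2 * π : ℂ) else 0 := by
  split_ifs with h
  · subst h; simp [ee_zero]
  · have hn : (n : ℂ) * Complex.I ≠ 0 := by simp [h]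
    have : ∀ x ∈ Set.uIcc (0:ℝ) (2 * π), HasDerivAt (fun y => ee n y / (n * Complex.I)) (ee n x) x := by
      intro x _
      have := (ee_deriv n x).div_const (n * Complex.I)
      rwa [mul_div_cancel_left₀ _ hn] at this
    rw [intervalIntegral.integral_eq_sub_of_hasDerivAt this ((ee_cont n).intervalIntegrable _ _)]
    rw [ee_two_pi, ee_at_zero, sub_self]

def fc (f : ℝ → ℂ) (n : ℤ) : ℂ := (2 * π : ℂ)⁻¹ * ∫ x in (0:ℝ)..(2 * π), f x * ee (-n) x

lemma two_pi_ne : (2 * π : ℂ) ≠ 0 := by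
  simp [Real.pi_ne_zero]

lemma fc_norm_le (f : ℝ → ℂ) (K : ℝ) (hf : ∀ x, ‖f x‖ ≤ K) (n : ℤ) : ‖fc f n‖ ≤ K := by
  have h := intervalIntegral.norm_integral_le_of_norm_le_const (a := 0) (b := 2 * π) (C := K)
    (f := fun x => f x * ee (-n) x) (fun x _ => by rw [norm_mul, ee_norm, mul_one]; exact hf x)
  have hpi := Real.pi_pos
  rw [fc, norm_mul, norm_inv]
  have : ‖(2 * π : ℂ)‖ = 2 * π := by
    simp [abs_of_pos hpi]
  rw [this, inv_mul_le_iff₀ (by positivity)]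
  rw [sub_zero, abs_of_pos (by positivity)] at h
  linarith

lemma fc_deriv (f : ℝ → ℂ) (hf : ContDiff ℝ 1 f) (hp : Function.Periodic f (2 * π)) (n : ℤ) :
    fc (deriv f) n = (Complex.I * n) * fc f n := by
  have hd : ∀ x, HasDerivAt f (deriv f x) x := fun x => (hf.differentiable one_ne_zero x).hasDerivAt
  have hc : Continuous (deriv f) := hf.continuous_deriv le_rfl
  have ib := intervalIntegral.integral_mul_deriv_eq_deriv_mul (a := 0) (b := 2 * π) (u := ee (-n)) (v := f)
    (u' := fun x => (-n : ℤ) * Complex.I * ee (-n) x) (v' := deriv f)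
    (fun x _ => ee_deriv (-n) x) (fun x _ => hd x)
    ((continuous_const.mul (ee_cont _)).intervalIntegrable _ _) (hc.intervalIntegrable _ _)
  have h0 : f (2 * π) = f 0 := by have := hp 0; rwa [zero_add] at this
  rw [ee_two_pi, ee_at_zero, h0, sub_self, zero_sub] at ib
  unfold fc
  have e1 : ∫ x in (0:ℝ)..(2 * π), deriv f x * ee (-n) x = ∫ x in (0:ℝ)..(2 * π), ee (-n) x * deriv f x := by
    congr 1; ext x; ring
  have e2 : ∫ x in (0:ℝ)..(2 * π), ((-n : ℤ) * Complex.I * ee (-n) x) * f x =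
      ((-n : ℤ) * Complex.I) * ∫ x in (0:ℝ)..(2 * π), f x * ee (-n) x := by
    rw [← intervalIntegral.integral_const_mul]; congr 1; ext x; ring
  rw [e1, ib, e2]
  push_cast; ring

def SP (f : ℝ → ℂ) : Prop := ContDiff ℝ (⊤ : ℕ∞) f ∧ Function.Periodic f (2 * π)

lemma SP.deriv' {f : ℝ → ℂ} (h : SP f) : SP (deriv f) := by
  refine ⟨?_, ?_⟩
  · have := h.1
    rw [show ((⊤ : ℕ∞) : WithTop ℕ∞) = (⊤ : ℕ∞) + 1 by rfl, contDiff_succ_iff_deriv] at this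
    exact this.2.2
  · intro x
    have : (fun y => f (y + 2 * π)) = f := funext h.2
    conv_rhs => rw [← this]
    rw [deriv_comp_add_const]

lemma SP.iter {f : ℝ → ℂ} (h : SP f) (m : ℕ) : SP (iteratedDeriv m f) := by
  induction m with
  | zero => simpa using h
  | succ m ih => rw [iteratedDeriv_succ]; exact ih.deriv'

lemma SP.fc_iter {f : ℝ → ℂ} (h : SP f) (m : ℕ) (n : ℤ) :
    fc (iteratedDeriv m f) n = (Complex.I * n) ^ m * fc f n := by
  induction m with
  | zero => simp
  | succ m ih =>
    rw [iteratedDeriv_succ, fc_deriv _ ((h.iter m).1.of_le (by exact_mod_cast le_top)) (h.iter m).2, ih]; ring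

lemma SP.bdd {f : ℝ → ℂ} (h : SP f) : ∃ K, ∀ x, ‖f x‖ ≤ K := by
  obtain ⟨K, hK⟩ := isCompact_Icc.exists_bound_of_continuousOn (h.1.continuous.continuousOn (s := Set.Icc 0 (2 * π)))
  refine ⟨K, fun x => ?_⟩
  obtain ⟨y, hy, hxy⟩ := h.2.exists_mem_Ico₀ (by positivity) x
  rw [hxy]
  exact hK y ⟨hy.1, hy.2.le⟩

def RD (c : ℤ → ℂ) : Prop := ∀ m : ℕ, ∃ K : ℝ, ∀ n : ℤ, |(n : ℝ)| ^ m * ‖c n‖ ≤ K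

lemma SP.rd {f : ℝ → ℂ} (h : SP f) : RD (fc f) := by
  intro m
  obtain ⟨K, hK⟩ := (h.iter m).bdd
  refine ⟨K, fun n => ?_⟩
  have := fc_norm_le _ K hK n
  rw [h.fc_iter, norm_mul, norm_pow, norm_mul, Complex.norm_I, one_mul, Complex.norm_intCast] at this
  exact this

lemma summable_inv_sq : Summable (fun n : ℤ => (1 + |(n:ℝ)| ^ 2)⁻¹) := by
  have h0 : Summable (fun n : ℕ => (1 + (n:ℝ) ^ 2)⁻¹) := by
    have : Summable (fun n : ℕ => 1 / ((n:ℝ)) ^ 2) := Real.summable_one_div_nat_pow.2 (by norm_num)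
    refine Summable.of_norm_bounded_eventually_nat this ?_
    filter_upwards [Filter.eventually_gt_atTop 0] with n hn
    have hn' : (0:ℝ) < n := by exact_mod_cast hn
    rw [Real.norm_of_nonneg (by positivity), one_div]
    apply inv_anti₀ (by positivity); linarith
  apply Summable.of_nat_of_neg
  · simpa using h0
  · simpa using h0

lemma RD.bound {c : ℤ → ℂ} (h : RD c) (s : ℕ) : ∃ K : ℝ, 0 ≤ K ∧ ∀ n : ℤ, |(n : ℝ)| ^ s * ‖c n‖ ≤ K * (1 + |(n:ℝ)| ^ 2)⁻¹ := by
  obtain ⟨K1, h1⟩ := h s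
  obtain ⟨K2, h2⟩ := h (s + 2)
  have p1 : 0 ≤ K1 := le_trans (by positivity) (h1 0)
  have p2 : 0 ≤ K2 := le_trans (by positivity) (h2 0)
  refine ⟨K1 + K2, by positivity, fun n => ?_⟩
  rw [← div_eq_mul_inv, le_div_iff₀ (by positivity)]
  have := h1 n; have := h2 n
  calc _ = |(n : ℝ)| ^ s * ‖c n‖ + |(n : ℝ)| ^ (s+2) * ‖c n‖ := by ring
    _ ≤ _ := by linarith

lemma RD.summable {c : ℤ → ℂ} (h : RD c) (s : ℕ) : Summable (fun n : ℤ => |(n : ℝ)| ^ s * ‖c n‖) := by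
  obtain ⟨K, _, hK⟩ := h.bound s
  exact Summable.of_nonneg_of_le (fun n => by positivity) hK (summable_inv_sq.mul_left K)

lemma RD.summable_norm {c : ℤ → ℂ} (h : RD c) : Summable (fun n : ℤ => ‖c n‖) := by
  simpa using h.summable 0

lemma SP.hasSum {f : ℝ → ℂ} (h : SP f) (x : ℝ) : HasSum (fun n => fc f n * ee n x) (f x) := by
  have : Fact (0 < 2 * π) := ⟨by positivity⟩
  have hc : Continuous (h.2.lift : AddCircle (2 * π) → ℂ) := by
    exact continuous_coinduced_dom.2 h.1.continuous
  set F : C(AddCircle (2 * π), ℂ) := ⟨h.2.lift, hc⟩ with hF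
  have hco : ∀ n, fourierCoeff F n = fc f n := by
    intro n
    rw [fourierCoeff_eq_intervalIntegral _ n 0, zero_add, fc, Complex.real_smul]
    congr 1
    · push_cast; simp
    · congr 1; ext y
      have : F (y : AddCircle (2 * π)) = f y := h.2.lift_coe y
      rw [this, smul_eq_mul, fourier_coe_apply, mul_comm, ee]
      congr 2
      push_cast
      have : (π : ℂ) ≠ 0 := by simp [Real.pi_ne_zero]
      field_simp
  have hs : Summable (fourierCoeff F) := by
    rw [funext hco]
    exact Summable.of_norm h.rd.summable_norm
  have := has_pointwise_sum_fourier_series_of_summable hs (x : AddCircle (2 * π))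
  have e : F (x : AddCircle (2 * π)) = f x := h.2.lift_coe x
  rw [e] at this
  refine this.congr_fun fun n => ?_
  rw [hco, smul_eq_mul, fourier_coe_apply, ee]
  congr 2
  push_cast
  have : (π : ℂ) ≠ 0 := by simp [Real.pi_ne_zero]
  field_simp

lemma prod_tsum_fin (d : ℕ) (w : Fin d → ℤ → ℂ) (hw : ∀ i, Summable fun n => ‖w i n‖) :
    (Summable fun n : Fin d → ℤ => ‖∏ i, w i (n i)‖) ∧
      ∑' n : Fin d → ℤ, ∏ i, w i (n i) = ∏ i, ∑' n, w i n := by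
  induction d with
  | zero => exact ⟨Summable.of_finite, by simp⟩
  | succ d ih =>
    obtain ⟨i1, i2⟩ := ih (fun i => w i.succ) (fun i => hw _)
    constructor
    · rw [← (Fin.consEquiv (fun _ : Fin (d+1) => ℤ)).summable_iff]
      have := (hw 0).mul_norm i1
      refine this.congr fun z => ?_
      simp [Fin.prod_univ_succ, Fin.consEquiv_apply]
    · rw [← (Fin.consEquiv (fun _ : Fin (d+1) => ℤ)).tsum_eq, Fin.prod_univ_succ, ← i2,
        tsum_mul_tsum_of_summable_norm (hw 0) i1]
      refine tsum_congr fun z => ?_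
      simp [Fin.prod_univ_succ, Fin.consEquiv_apply]

lemma lemmaP {D : ℕ} (σ : Fin D → ℤ) (v : Fin D → ℤ → ℂ) (hv : ∀ i, Summable fun n => ‖v i n‖)
    (F : ℝ → ℂ) (hF : ∀ x, F x = ∏ i, ∑' n, v i n * ee (σ i * n) x) :
    (2 * π : ℂ)⁻¹ * ∫ x in (0:ℝ)..(2 * π), F x = ∑' n, TT σ (fun _ => 1) v n := by
  obtain ⟨s1, -⟩ := prod_tsum_fin D v hv
  have hx : ∀ x, HasSum (fun n : Fin D → ℤ => (∏ i, v i (n i)) * ee (∑ i, σ i * n i) x) (F x) := by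
    intro x
    obtain ⟨t1, t2⟩ := prod_tsum_fin D (fun i n => v i n * ee (σ i * n) x) (fun i => by
      simpa [ee_norm] using hv i)
    rw [hF x, ← t2]
    have := t1.of_norm.hasSum
    refine this.congr_fun fun n => ?_
    rw [Finset.prod_mul_distrib, ee_sum]
  have := intervalIntegral.hasSum_integral_of_dominated_convergence (a := 0) (b := 2 * π) (μ := volume)
    (F := fun (n : Fin D → ℤ) x => (∏ i, v i (n i)) * ee (∑ i, σ i * n i) x) (f := F)
    (fun n _ => ‖∏ i, v i (n i)‖)
    (fun n => (continuous_const.mul (ee_cont _)).aestronglyMeasurable)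
    (fun n => Filter.Eventually.of_forall fun x _ => by rw [norm_mul, ee_norm, mul_one])
    (Filter.Eventually.of_forall fun x _ => s1)
    (by simp)
    (Filter.Eventually.of_forall fun x _ => hx x)
  rw [← this.tsum_eq, ← tsum_mul_left]
  refine tsum_congr fun n => ?_
  rw [intervalIntegral.integral_const_mul, ee_int, TT]
  split_ifs
  · field_simp [two_pi_ne]
  · simp


def sg (p : ℕ) : Fin ((p + 1) + (p + 1)) → ℤ := Fin.append (fun _ => 1) (fun _ => -1)
def cc (s : ℤ) (c : ℤ → ℂ) (n : ℤ) : ℂ := if s = 1 then c n else (starRingEnd ℂ) (c n)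
def vv (p : ℕ) (c : ℤ → ℂ) (i : Fin ((p + 1) + (p + 1))) : ℤ → ℂ := cc (sg p i) c
def dl (n : ℤ) : ℤ → ℂ := fun a => if a = n then 1 else 0
def fN (p : ℕ) (f : ℝ → ℂ) (x : ℝ) : ℂ := f x * ((‖f x‖ : ℂ)) ^ (2 * p)

lemma sg_cases (p : ℕ) (i) : sg p i = 1 ∨ sg p i = -1 := by
  unfold sg
  refine Fin.addCases (fun j => ?_) (fun j => ?_) i
  · left; exact Fin.append_left _ _ j
  · right; exact Fin.append_right _ _ j

lemma cc_norm (s : ℤ) (c : ℤ → ℂ) (n : ℤ) : ‖cc s c n‖ = ‖c n‖ := by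
  unfold cc; split_ifs <;> simp

lemma cc_enorm (s : ℤ) (c : ℤ → ℂ) (n : ℤ) : ‖cc s c n‖ₑ = ‖c n‖ₑ := by
  rw [← ofReal_norm, cc_norm, ofReal_norm]

lemma dl_summable (n : ℤ) : Summable fun a => ‖dl n a‖ := by
  refine summable_of_ne_finset_zero (s := {n}) fun b hb => ?_
  rw [dl, if_neg (by simpa using hb)]; simp

lemma dl_tsum (n : ℤ) (s : ℤ) (x : ℝ) : ∑' a, dl n a * ee (s * a) x = ee (s * n) x := by
  rw [tsum_eq_single n]
  · simp [dl]
  · intro b hb; rw [dl, if_neg hb, zero_mul]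

lemma fN_eq (p : ℕ) (f : ℝ → ℂ) (x : ℝ) : fN p f x = f x ^ (p + 1) * (starRingEnd ℂ) (f x) ^ p := by
  rw [fN, pow_mul, show ((‖f x‖ : ℂ)) ^ 2 = f x * (starRingEnd ℂ) (f x) by
    rw [Complex.mul_conj, Complex.normSq_eq_norm_sq]; push_cast; rfl, mul_pow]
  ring

lemma SP.fN {f : ℝ → ℂ} (h : SP f) (p : ℕ) : SP (fN p f) := by
  constructor
  · have : _root_.fN p f = fun x => f x ^ (p + 1) * (Complex.conjCLE (f x)) ^ p := by
      ext x; rw [fN_eq]; rfl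
    rw [this]
    have h1 : ContDiff ℝ (⊤ : ℕ∞) (fun x => Complex.conjCLE (f x)) :=
      Complex.conjCLE.contDiff.comp h.1
    exact (h.1.pow _).mul (h1.pow _)
  · intro x
    simp only [_root_.fN, h.2 x]

lemma hasSum_cc {f : ℝ → ℂ} (h : SP f) (s : ℤ) (hs : s = 1 ∨ s = -1) (x : ℝ) :
    HasSum (fun n => cc s (fc f) n * ee (s * n) x) (if s = 1 then f x else (starRingEnd ℂ) (f x)) := by
  rcases hs with rfl | rfl
  · simpa [cc] using h.hasSum x
  · have := Complex.hasSum_conj'.2 (h.hasSum x)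
    have h2 : ¬ ((-1 : ℤ) = 1) := by norm_num
    rw [if_neg h2]
    convert this using 2 with n
    rw [cc, if_neg h2, map_mul, ee_conj, neg_one_mul]

lemma prod_sg (p : ℕ) (a b : ℂ) : ∏ i, (if sg p i = 1 then a else b) = a ^ (p + 1) * b ^ (p + 1) := by
  rw [Fin.prod_univ_add]
  simp only [sg, Fin.append_left, Fin.append_right]
  simp

lemma prod_sg_erase (p : ℕ) (hp : 1 ≤ p) (z : ℂ) (j) :
    ∏ i ∈ Finset.univ.erase j, (if sg p i = 1 then z else (starRingEnd ℂ) z) =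
      if sg p j = 1 then z ^ p * (starRingEnd ℂ) z ^ (p + 1) else z ^ (p + 1) * (starRingEnd ℂ) z ^ p := by
  by_cases hz : z = 0
  · subst hz
    have hne : (Finset.univ.erase j).Nonempty := by
      rw [← Finset.card_pos, Finset.card_erase_of_mem (Finset.mem_univ j)]; simp
    obtain ⟨i, hi⟩ := hne
    rw [Finset.prod_eq_zero hi (by simp)]
    simp
  · have hz' : (starRingEnd ℂ) z ≠ 0 := by simpa using hz
    have := prod_sg p z ((starRingEnd ℂ) z)
    rw [← Finset.mul_prod_erase _ _ (Finset.mem_univ j)] at this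
    split_ifs at this ⊢ with h
    · apply mul_left_cancel₀ hz; rw [this]; ring
    · apply mul_left_cancel₀ hz'; rw [this]; ring

lemma vv_summable (p : ℕ) {c : ℤ → ℂ} (hc : Summable fun n => ‖c n‖) (i) : Summable fun n => ‖vv p c i n‖ := by
  simpa [vv, cc_norm] using hc

lemma update_summable {D : ℕ} {v : Fin D → ℤ → ℂ} (hv : ∀ i, Summable fun n => ‖v i n‖) {g : ℤ → ℂ}
    (hg : Summable fun n => ‖g n‖) (j i) : Summable fun n => ‖Function.update v j g i n‖ := by
  by_cases h : i = j
  · subst h; simpa using hg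
  · simpa [Function.update_of_ne h] using hv i

lemma ii_conj (g : ℝ → ℂ) : (starRingEnd ℂ) (∫ x in (0:ℝ)..(2 * π), g x) =
    ∫ x in (0:ℝ)..(2 * π), (starRingEnd ℂ) (g x) := by
  rw [intervalIntegral.integral_of_le (by positivity), intervalIntegral.integral_of_le (by positivity), integral_conj]

lemma F_formula (p : ℕ) (hp : 1 ≤ p) {f : ℝ → ℂ} (h : SP f) (j) (n : ℤ) :
    cc (-(sg p j)) (fc (fN p f)) n =
      ∑' m, TT (sg p) (fun _ => 1) (Function.update (vv p (fc f)) j (dl n)) m := by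
  have hF : ∀ x, (∏ i, ∑' m, Function.update (vv p (fc f)) j (dl n) i m * ee (sg p i * m) x) =
      ee (sg p j * n) x * (if sg p j = 1 then f x ^ p * (starRingEnd ℂ) (f x) ^ (p + 1)
        else f x ^ (p + 1) * (starRingEnd ℂ) (f x) ^ p) := by
    intro x
    rw [← Finset.mul_prod_erase _ _ (Finset.mem_univ j), ← prod_sg_erase p hp]
    congr 1
    · simp only [Function.update_self]; exact dl_tsum n _ x
    · refine Finset.prod_congr rfl fun i hi => ?_
      rw [Function.update_of_ne (Finset.ne_of_mem_erase hi)]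
      exact (hasSum_cc h _ (sg_cases p i) x).tsum_eq
  rw [← lemmaP (sg p) _ (update_summable (vv_summable p h.rd.summable_norm) (dl_summable n) j) _ (fun x => rfl)]
  simp_rw [hF]
  rcases sg_cases p j with hj | hj
  · rw [hj, cc, if_neg (by norm_num), fc, map_mul, ii_conj]
    simp only [if_true, one_mul, map_inv₀, map_mul, Complex.conj_ofReal, map_ofNat, fN_eq, map_pow,
      Complex.conj_conj, ee_conj, neg_neg]
    congr 2; ext x; ring
  · rw [hj, cc, if_pos (by norm_num), fc]
    simp only [show ¬ ((-1:ℤ) = 1) by norm_num, if_false, fN_eq, neg_one_mul]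
    congr 2; ext x; ring

lemma TT_pair {D : ℕ} (σ : Fin D → ℤ) (j : Fin D) (v : Fin D → ℤ → ℂ) (g : ℤ → ℂ)
    (hv : ∀ i, Summable fun n => ‖v i n‖) (hg : Summable fun n => ‖g n‖) :
    ∑' n, g n * ∑' m, TT σ (fun _ => 1) (Function.update v j (dl n)) m =
      ∑' m, TT σ (fun _ => 1) (Function.update v j g) m := by
  set T := TT σ (fun _ => 1) (Function.update v j g) with hT
  have hTs : Summable T := by
    refine Summable.of_norm_bounded (prod_tsum_fin D _ (update_summable hv hg j)).1 fun m => ?_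
    rw [hT, TT]; split_ifs
    · simp
    · rw [norm_zero]; positivity
  set h : ℤ × (Fin D → ℤ) → ℂ := fun z => if z.1 = z.2 j then T z.2 else 0 with hh
  have inj : Function.Injective (fun m : Fin D → ℤ => (m j, m)) := fun a b hab => (Prod.ext_iff.1 hab).2
  have hz : ∀ z, z ∉ Set.range (fun m : Fin D → ℤ => (m j, m)) → h z = 0 := by
    rintro ⟨n, m⟩ hnm
    simp only [hh]
    rw [if_neg]
    rintro rfl
    exact hnm ⟨m, rfl⟩
  have hcomp : h ∘ (fun m : Fin D → ℤ => (m j, m)) = T := by ext m; simp [hh]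
  have hs : Summable h := by
    rw [← inj.summable_iff hz, hcomp]; exact hTs
  have e1 : ∑' z, h z = ∑' m, T m := by
    rw [← hcomp]
    refine (inj.tsum_eq ?_).symm
    intro z hz'
    by_contra hc
    exact hz' (hz z hc)
  rw [← e1, hs.tsum_prod]
  refine tsum_congr fun n => ?_
  rw [← tsum_mul_left]
  refine tsum_congr fun m => ?_
  simp only [hh, hT, TT]
  by_cases h0 : ∑ i, σ i * m i = 0
  · simp only [if_pos h0, one_mul, prod_update, dl]
    by_cases hn : n = m j
    · subst hn; simp
    · rw [if_neg hn, if_neg (Ne.symm hn)]; simp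
  · simp [if_neg h0]

lemma F_pair (p : ℕ) (hp : 1 ≤ p) {f : ℝ → ℂ} (h : SP f) (j) (g : ℤ → ℂ) (hg : Summable fun n => ‖g n‖) :
    ∑' n, g n * cc (-(sg p j)) (fc (fN p f)) n =
      ∑' m, TT (sg p) (fun _ => 1) (Function.update (vv p (fc f)) j g) m := by
  rw [← TT_pair _ _ _ _ (vv_summable p h.rd.summable_norm) hg]
  exact tsum_congr fun n => by rw [F_formula p hp h]

lemma F_le_GG (p : ℕ) (hp : 1 ≤ p) {f : ℝ → ℂ} (h : SP f) (j) (n : ℤ) :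
    ‖fc (fN p f) n‖ₑ ≤ GG (sg p) j (fun _ a => ‖fc f a‖ₑ) n := by
  rw [← cc_enorm (-(sg p j)), F_formula p hp h]
  refine (enorm_tsum_le_tsum_enorm).trans (ENNReal.tsum_le_tsum fun m => ?_)
  unfold TT
  split_ifs with h0
  · rw [one_mul, prod_update, prod_update, enorm_mul]
    refine mul_le_mul' ?_ (le_of_eq ?_)
    · unfold dl; split_ifs <;> simp
    · rw [enorm_eq_nnnorm, nnnorm_prod]; push_cast
      refine Finset.prod_congr rfl fun i _ => ?_
      exact cc_enorm _ _ _
  · simp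

lemma F_one (p : ℕ) (hp : 1 ≤ p) {f : ℝ → ℂ} (h : SP f) (L : ℝ≥0∞) (hL : 1 ≤ L)
    (hx : ∑' a, ‖fc f a‖ₑ ≤ L) : ∑' n, ‖fc (fN p f) n‖ₑ ≤ L ^ ((p + 1) + (p + 1)) :=
  (ENNReal.tsum_le_tsum fun n => F_le_GG p hp h 0 n).trans
    (NL1 (sg p) (sg_cases p) 0 _ L hL fun _ => hx)

lemma F_two (p : ℕ) (hp : 1 ≤ p) {f : ℝ → ℂ} (h : SP f) (s : ℕ) (A L : ℝ≥0∞) (hL : 1 ≤ L) (hLt : L ≠ ⊤)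
    (hx : ∑' a, ‖fc f a‖ₑ ≤ L) (hA : ∑' a, (wt s a * ‖fc f a‖ₑ) ^ 2 ≤ A ^ 2) :
    ∑' n, (wt s n * ‖fc (fN p f) n‖ₑ) ^ 2 ≤
      ((((p + 1) + (p + 1) : ℕ) : ℝ≥0∞) ^ (s + 1) * A * L ^ ((p + 1) + (p + 1))) ^ 2 := by
  refine le_trans (ENNReal.tsum_le_tsum fun n => ?_)
    (NL2 (by omega) (sg p) (sg_cases p) 0 (fun _ a => ‖fc f a‖ₑ) s A L hL hLt (fun _ => hx) fun _ => hA)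
  have := F_le_GG p hp h 0 n
  gcongr

lemma parseval {f : ℝ → ℂ} (h : SP f) :
    ∑' n, ‖fc f n‖ ^ 2 = (2 * π)⁻¹ * ∫ x in (0:ℝ)..(2 * π), ‖f x‖ ^ 2 := by
  have hs := h.rd.summable_norm
  have h1 := lemmaP (![1, -1] : Fin 2 → ℤ) (fun i => cc ((![1, -1] : Fin 2 → ℤ) i) (fc f)) (fun i => by
    simpa [cc_norm] using hs) (fun x => (‖f x‖ ^ 2 : ℝ)) (fun x => by
    rw [Fin.prod_univ_two]
    simp only [Matrix.cons_val_zero, Matrix.cons_val_one]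
    rw [(hasSum_cc h 1 (Or.inl rfl) x).tsum_eq, (hasSum_cc h (-1) (Or.inr rfl) x).tsum_eq, if_pos rfl,
      if_neg (by norm_num), Complex.mul_conj, Complex.normSq_eq_norm_sq])
  set T := TT (![1, -1] : Fin 2 → ℤ) (fun _ => 1) (fun i => cc ((![1, -1] : Fin 2 → ℤ) i) (fc f)) with hT
  have inj : Function.Injective (fun n : ℤ => (![n, n] : Fin 2 → ℤ)) := fun a b hab => by
    simpa using congrFun hab 0
  have e1 : ∑' n : ℤ, T ![n, n] = ∑' m, T m := by
    refine inj.tsum_eq ?_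
    intro m hm
    refine ⟨m 0, ?_⟩
    have : m 0 = m 1 := by
      by_contra hc
      apply hm
      rw [hT, TT, if_neg]
      rw [Fin.sum_univ_two]; simp; omega
    ext i; fin_cases i
    · rfl
    · exact this
  have e2 : ∀ n : ℤ, T ![n, n] = ((‖fc f n‖ ^ 2 : ℝ) : ℂ) := by
    intro n
    rw [hT, TT, if_pos (by simp [Fin.sum_univ_two]), Fin.prod_univ_two]
    simp [cc, Complex.mul_conj, Complex.normSq_eq_norm_sq]
  rw [← e1] at h1
  simp_rw [e2] at h1
  rw [← Complex.ofReal_tsum, intervalIntegral.integral_ofReal] at h1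
  have h3 : (((2 * π)⁻¹ * ∫ x in (0:ℝ)..(2 * π), ‖f x‖ ^ 2 : ℝ) : ℂ) = ((∑' n, ‖fc f n‖ ^ 2 : ℝ) : ℂ) := by
    rw [← h1]; push_cast; ring
  exact_mod_cast h3.symm

def SS (k : ℕ) (c : ℤ → ℂ) : ℝ := ∑' n : ℤ, |(n:ℝ)| ^ (2 * k) * ‖c n‖ ^ 2

lemma L2sq_eq {f : ℝ → ℂ} (h : SP f) (k : ℕ) : L2sq (pD k f) = 2 * π * SS k (fc f) := by
  have := parseval (h.iter k)
  have hpi : (2 * π) ≠ 0 := by positivity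
  rw [L2sq, pD, ← mul_right_inj' (inv_ne_zero hpi), ← this, ← mul_assoc, inv_mul_cancel₀ hpi, one_mul, SS]
  refine tsum_congr fun n => ?_
  rw [h.fc_iter, norm_mul, norm_pow, norm_mul, Complex.norm_I, one_mul, Complex.norm_intCast, mul_pow, ← pow_mul]
  ring

lemma pot_eq (p : ℕ) {f : ℝ → ℂ} (h : SP f) :
    ∑' m, TT (sg p) (fun _ => 1) (vv p (fc f)) m =
      (((2 * π)⁻¹ * ∫ x in (0:ℝ)..(2 * π), ‖f x‖ ^ (2 * (p + 1)) : ℝ) : ℂ) := by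
  rw [← lemmaP (sg p) (vv p (fc f)) (vv_summable p h.rd.summable_norm) (fun x => ((‖f x‖ ^ (2 * (p+1)) : ℝ) : ℂ))]
  · rw [intervalIntegral.integral_ofReal]; push_cast; ring
  · intro x
    have : ∀ i, ∑' n, vv p (fc f) i n * ee (sg p i * n) x = if sg p i = 1 then f x else (starRingEnd ℂ) (f x) :=
      fun i => (hasSum_cc h _ (sg_cases p i) x).tsum_eq
    simp_rw [this]
    rw [prod_sg, ← mul_pow, Complex.mul_conj, Complex.normSq_eq_norm_sq, pow_mul]
    push_cast; ring


def Dec (Q : ℕ) (K : ℝ) (c : ℤ → ℂ) : Prop := ∀ n : ℤ, (1 + |(n:ℝ)|) ^ Q * ‖c n‖ ≤ K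

lemma Dec.nonneg {Q : ℕ} {K : ℝ} {c : ℤ → ℂ} (h : Dec Q K c) : 0 ≤ K := le_trans (by positivity) (h 0)

lemma one_le_w (n : ℤ) : (1:ℝ) ≤ 1 + |(n:ℝ)| := by linarith [abs_nonneg (n:ℝ)]

lemma inv_w (n : ℤ) : (1 + |(n:ℝ)| ^ 2) ≤ (1 + |(n:ℝ)|) ^ 2 := by nlinarith [abs_nonneg (n:ℝ)]

lemma Dec.bound {Q q : ℕ} {K : ℝ} {c : ℤ → ℂ} (h : Dec Q K c) (hq : q + 2 ≤ Q) (n : ℤ) :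
    (1 + |(n:ℝ)|) ^ q * ‖c n‖ ≤ K * (1 + |(n:ℝ)| ^ 2)⁻¹ := by
  rw [← div_eq_mul_inv, le_div_iff₀ (by positivity)]
  refine le_trans ?_ (h n)
  calc (1 + |(n:ℝ)|) ^ q * ‖c n‖ * (1 + |(n:ℝ)| ^ 2) ≤ (1 + |(n:ℝ)|) ^ q * ‖c n‖ * (1 + |(n:ℝ)|) ^ 2 := by
        gcongr; exact inv_w n
    _ = (1 + |(n:ℝ)|) ^ (q + 2) * ‖c n‖ := by ring
    _ ≤ (1 + |(n:ℝ)|) ^ Q * ‖c n‖ := by gcongr; exact one_le_w n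

lemma Dec.mono {Q q : ℕ} {K K' : ℝ} {c : ℤ → ℂ} (h : Dec Q K c) (hq : q ≤ Q) (hK : K ≤ K') : Dec q K' c := by
  intro n
  refine le_trans ?_ ((h n).trans hK)
  gcongr; exact one_le_w n

lemma Dec.cc {Q : ℕ} {K : ℝ} {c : ℤ → ℂ} (h : Dec Q K c) (s : ℤ) : Dec Q K (cc s c) := by
  intro n; rw [cc_norm]; exact h n

lemma prod_summable_real {D : ℕ} (b : ℤ → ℝ) (hb : Summable b) (hb0 : ∀ n, 0 ≤ b n) :
    Summable fun n : Fin D → ℤ => ∏ i, b (n i) := by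
  have := (prod_tsum_fin D (fun _ n => (b n : ℂ)) (fun _ => by
    simpa [abs_of_nonneg (hb0 _)] using hb)).1
  refine this.congr fun n => ?_
  rw [norm_prod]
  refine Finset.prod_congr rfl fun i _ => ?_
  simp [abs_of_nonneg (hb0 _)]

lemma TT_le {D : ℕ} (σ : Fin D → ℤ) (μ : (Fin D → ℤ) → ℂ) (v : Fin D → ℤ → ℂ) (q : ℕ) (C : ℝ)
    (hμ : ∀ n, ‖μ n‖ ≤ C * ∏ i, (1 + |(n i:ℝ)|) ^ q) (b : ℤ → ℝ)
    (h1 : ∀ i (n : ℤ), (1 + |(n:ℝ)|) ^ q * ‖v i n‖ ≤ b n) (n : Fin D → ℤ) :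
    ‖TT σ μ v n‖ ≤ C * ∏ i, b (n i) := by
  have hC : 0 ≤ C := by
    have := (norm_nonneg _).trans (hμ (fun _ => 0)); simpa using this
  have hb : ∀ (i : Fin D), 0 ≤ b (n i) := fun i => le_trans (by positivity) (h1 i (n i))
  unfold TT
  split_ifs
  · rw [norm_mul, norm_prod]
    calc ‖μ n‖ * ∏ i, ‖v i (n i)‖ ≤ (C * ∏ i, (1 + |(n i:ℝ)|) ^ q) * ∏ i, ‖v i (n i)‖ := by
          gcongr; exact hμ n
      _ = C * ∏ i, ((1 + |(n i:ℝ)|) ^ q * ‖v i (n i)‖) := by rw [mul_assoc, Finset.prod_mul_distrib]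
      _ ≤ C * ∏ i, b (n i) := by
          gcongr with i _; exact h1 i (n i)
  · rw [norm_zero]
    exact mul_nonneg hC (Finset.prod_nonneg fun i _ => hb i)

lemma TT_summable {D : ℕ} (σ : Fin D → ℤ) (μ : (Fin D → ℤ) → ℂ) (v : Fin D → ℤ → ℂ) (q : ℕ) (C : ℝ)
    (hμ : ∀ n, ‖μ n‖ ≤ C * ∏ i, (1 + |(n i:ℝ)|) ^ q) (Q : ℕ) (hQ : q + 2 ≤ Q) (K : ℝ) (hK : 0 ≤ K)
    (h1 : ∀ i, Dec Q K (v i)) : Summable (TT σ μ v) := by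
  refine Summable.of_norm_bounded ?_ (TT_le σ μ v q C hμ (fun n : ℤ => K * (1 + |(n:ℝ)| ^ 2)⁻¹)
    (fun i n => (h1 i).bound hQ n))
  exact (prod_summable_real _ (summable_inv_sq.mul_left K) (fun n => by positivity)).mul_left C

lemma dec_update {D : ℕ} {Q : ℕ} {K : ℝ} {v : Fin D → ℤ → ℂ} {g : ℤ → ℂ} (h : ∀ i, Dec Q K (v i)) (hg : Dec Q K g)
    (j i) : Dec Q K (Function.update v j g i) := by
  by_cases hh : i = j
  · subst hh; simpa using hg
  · simpa [Function.update_of_ne hh] using h i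

lemma DL {D : ℕ} (σ : Fin D → ℤ) (μ : (Fin D → ℤ) → ℂ) (I : Set ℝ) (hI : IsOpen I) (hc : IsPreconnected I)
    (v v' : ℝ → Fin D → ℤ → ℂ)
    (hd : ∀ t ∈ I, ∀ i n, HasDerivAt (fun s => v s i n) (v' t i n) t) (q : ℕ) (C : ℝ)
    (hμ : ∀ n, ‖μ n‖ ≤ C * ∏ i, (1 + |(n i:ℝ)|) ^ q) (Q : ℕ) (hQ : q + 2 ≤ Q) (K : ℝ)
    (h1 : ∀ t ∈ I, ∀ i, Dec Q K (v t i)) (h2 : ∀ t ∈ I, ∀ i, Dec Q K (v' t i)) (t : ℝ) (ht : t ∈ I) :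
    HasDerivAt (fun s => ∑' n, TT σ μ (v s) n)
      (∑ j, ∑' n, TT σ μ (Function.update (v t) j (v' t j)) n) t := by
  rcases isEmpty_or_nonempty (Fin D) with hD | ⟨⟨i0⟩⟩
  · have : ∀ s, v s = v t := fun s => funext fun i => (hD.false i).elim
    simp_rw [this]
    simpa using hasDerivAt_const t _
  have hK : 0 ≤ K := (h1 t ht i0).nonneg
  rw [← Summable.tsum_finsetSum (fun j _ => TT_summable σ μ _ q C hμ Q hQ K hK
    (dec_update (h1 t ht) (h2 t ht j) j))]
  have hb := (prod_summable_real (D := D) _ (summable_inv_sq.mul_left K) (fun n => by positivity)).mul_left C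
  refine hasDerivAt_tsum_of_isPreconnected (g := fun n s => TT σ μ (v s) n)
    (g' := fun n s => ∑ j, TT σ μ (Function.update (v s) j (v' s j)) n)
    (hb.mul_left (D:ℝ)) hI hc ?_ ?_ ht
    (TT_summable σ μ _ q C hμ Q hQ K hK (h1 t ht)) ht
  · intro n y hy
    unfold TT
    split_ifs with h0
    · have := (HasDerivAt.fun_finsetProd (u := Finset.univ) (f := fun i s => v s i (n i)) (f' := fun i => v' y i (n i))
        (fun i _ => hd y hy i (n i))).const_mul (μ n)
      refine this.congr_deriv ?_
      rw [Finset.mul_sum]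
      refine Finset.sum_congr rfl fun j _ => ?_
      rw [prod_update, smul_eq_mul, mul_comm (v' y j (n j))]
    · simpa using hasDerivAt_const y (0:ℂ)
  · intro n y hy
    refine (norm_sum_le _ _).trans ?_
    refine (Finset.sum_le_card_nsmul _ _ _ fun j _ => TT_le σ μ _ q C hμ (fun n : ℤ => K * (1 + |(n:ℝ)| ^ 2)⁻¹)
      (fun i n => (dec_update (h1 y hy) (h2 y hy j) j i).bound hQ n) n).trans ?_
    simp

lemma CL {D : ℕ} (σ : Fin D → ℤ) (μ : (Fin D → ℤ) → ℂ) (I : Set ℝ)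
    (v : ℝ → Fin D → ℤ → ℂ)
    (hd : ∀ i n, ContinuousOn (fun s => v s i n) I) (q : ℕ) (C : ℝ)
    (hμ : ∀ n, ‖μ n‖ ≤ C * ∏ i, (1 + |(n i:ℝ)|) ^ q) (Q : ℕ) (hQ : q + 2 ≤ Q) (K : ℝ)
    (h1 : ∀ t ∈ I, ∀ i, Dec Q K (v t i)) (hK : 0 ≤ K) :
    ContinuousOn (fun s => ∑' n, TT σ μ (v s) n) I := by
  refine continuousOn_tsum (f := fun n s => TT σ μ (v s) n) ?_
    ((prod_summable_real (D := D) _ (summable_inv_sq.mul_left K) (fun n => by positivity)).mul_left C) ?_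
  · intro n
    unfold TT
    split_ifs
    · exact continuousOn_const.mul (continuousOn_finsetProd _ fun i _ => hd i (n i))
    · exact continuousOn_const
  · intro n y hy
    exact TT_le σ μ _ q C hμ (fun n : ℤ => K * (1 + |(n:ℝ)| ^ 2)⁻¹) (fun i n => (h1 y hy i).bound hQ n) n

lemma Dec.mul_bound {Q Q' k : ℕ} {K K' : ℝ} {c c' : ℤ → ℂ} (h : Dec Q K c) (h' : Dec Q' K' c') (hk : 2 * k + 2 ≤ Q + Q') (n : ℤ) :
    |(n:ℝ)| ^ (2 * k) * (‖c n‖ * ‖c' n‖) ≤ (K * K') * (1 + |(n:ℝ)| ^ 2)⁻¹ := by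
  rw [← div_eq_mul_inv, le_div_iff₀ (by positivity)]
  calc |(n:ℝ)| ^ (2 * k) * (‖c n‖ * ‖c' n‖) * (1 + |(n:ℝ)| ^ 2)
      ≤ (1 + |(n:ℝ)|) ^ (2 * k) * (‖c n‖ * ‖c' n‖) * (1 + |(n:ℝ)|) ^ 2 := by
        gcongr
        · linarith
        · exact inv_w n
    _ = (1 + |(n:ℝ)|) ^ (2 * k + 2) * (‖c n‖ * ‖c' n‖) := by ring
    _ ≤ (1 + |(n:ℝ)|) ^ (Q + Q') * (‖c n‖ * ‖c' n‖) := by gcongr; exact one_le_w n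
    _ = ((1 + |(n:ℝ)|) ^ Q * ‖c n‖) * ((1 + |(n:ℝ)|) ^ Q' * ‖c' n‖) := by ring
    _ ≤ K * K' := mul_le_mul (h n) (h' n) (by positivity) h.nonneg

lemma Dec.SS_summable {Q k : ℕ} {K : ℝ} {c : ℤ → ℂ} (h : Dec Q K c) (hk : 2 * k + 2 ≤ Q + Q) :
    Summable fun n : ℤ => |(n:ℝ)| ^ (2 * k) * ‖c n‖ ^ 2 := by
  refine Summable.of_nonneg_of_le (fun n => by positivity) (fun n => ?_) (summable_inv_sq.mul_left (K * K))
  rw [sq ‖c n‖]; exact h.mul_bound h hk n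

lemma SSd (k : ℕ) (I : Set ℝ) (hI : IsOpen I) (hc : IsPreconnected I) (c c' : ℝ → ℤ → ℂ)
    (hd : ∀ t ∈ I, ∀ n, HasDerivAt (fun s => c s n) (c' t n) t) (Q Q' : ℕ) (K K' : ℝ) (hQ : Q' ≤ Q)
    (hk : 2 * k + 2 ≤ Q + Q')
    (h1 : ∀ t ∈ I, Dec Q K (c t)) (h2 : ∀ t ∈ I, Dec Q' K' (c' t)) (t : ℝ) (ht : t ∈ I) :
    HasDerivAt (fun s => SS k (c s))
      (∑' n : ℤ, |(n:ℝ)| ^ (2 * k) * (2 * ((starRingEnd ℂ) (c t n) * c' t n).re)) t := by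
  unfold SS
  refine hasDerivAt_tsum_of_isPreconnected (g := fun (n : ℤ) s => |(n:ℝ)| ^ (2 * k) * ‖c s n‖ ^ 2)
    (g' := fun (n : ℤ) s => |(n:ℝ)| ^ (2 * k) * (2 * ((starRingEnd ℂ) (c s n) * c' s n).re))
    ((summable_inv_sq.mul_left (K * K')).mul_left 2) hI hc ?_ ?_ ht
    ((h1 t ht).SS_summable (by omega)) ht
  · intro n y hy
    have := ((hd y hy n).norm_sq).const_mul (|(n:ℝ)| ^ (2 * k))
    rw [Complex.inner, mul_comm (c' y n)] at this
    exact this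
  · intro n y hy
    have := (h1 y hy).mul_bound (h2 y hy) hk n
    rw [Real.norm_eq_abs, abs_mul, abs_mul, abs_of_nonneg (by positivity : (0:ℝ) ≤ |(n:ℝ)| ^ (2*k)), abs_two]
    have h3 : |((starRingEnd ℂ) (c y n) * c' y n).re| ≤ ‖c y n‖ * ‖c' y n‖ := by
      refine (Complex.abs_re_le_norm _).trans ?_
      rw [norm_mul, RCLike.norm_conj]
    calc _ ≤ |(n:ℝ)| ^ (2*k) * (2 * (‖c y n‖ * ‖c' y n‖)) := by gcongr
      _ = 2 * (|(n:ℝ)| ^ (2*k) * (‖c y n‖ * ‖c' y n‖)) := by ring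
      _ ≤ _ := by gcongr

lemma SSc (k : ℕ) (I : Set ℝ) (c : ℝ → ℤ → ℂ)
    (hd : ∀ n, ContinuousOn (fun s => c s n) I) (Q : ℕ) (K : ℝ)
    (hk : 2 * k + 2 ≤ Q + Q) (h1 : ∀ t ∈ I, Dec Q K (c t)) :
    ContinuousOn (fun s => SS k (c s)) I := by
  unfold SS
  refine continuousOn_tsum (f := fun (n:ℤ) s => |(n:ℝ)| ^ (2 * k) * ‖c s n‖ ^ 2) (fun n => ?_)
    (summable_inv_sq.mul_left (K * K)) ?_
  · exact continuousOn_const.mul ((hd n).norm.pow 2)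
  · intro n y hy
    rw [Real.norm_eq_abs, abs_of_nonneg (by positivity), sq ‖c y n‖]
    exact (h1 y hy).mul_bound (h1 y hy) hk n


lemma RD.dec {c : ℤ → ℂ} (h : RD c) (Q : ℕ) : ∃ K, Dec Q K c := by
  obtain ⟨K0, h0⟩ := h 0
  obtain ⟨K1, h1⟩ := h Q
  refine ⟨2 ^ (Q - 1) * (K0 + K1), fun n => ?_⟩
  have e := add_pow_le (zero_le_one (α := ℝ)) (abs_nonneg (n:ℝ)) Q
  have e0 := h0 n
  have e1 := h1 n
  rw [pow_zero, one_mul] at e0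
  calc (1 + |(n:ℝ)|) ^ Q * ‖c n‖ ≤ (2 ^ (Q - 1) * (1 ^ Q + |(n:ℝ)| ^ Q)) * ‖c n‖ := by gcongr
    _ = 2 ^ (Q - 1) * (‖c n‖ + |(n:ℝ)| ^ Q * ‖c n‖) := by rw [one_pow]; ring
    _ ≤ _ := by gcongr

def gg (ε : ℝ) (p : ℕ) (f : ℝ → ℂ) (n : ℤ) : ℂ :=
  -((ε : ℂ) * Complex.I) * ((n : ℂ) ^ 2 * fc f n + fc (fN p f) n)

def PT (p : ℕ) (c : ℤ → ℂ) : ℂ := ∑' m, TT (sg p) (fun _ => 1) (vv p c) m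

def AA (k p : ℕ) (f : ℝ → ℂ) : ℂ :=
  ∑' n : ℤ, (n:ℂ) ^ (2 * k) * ((starRingEnd ℂ) (fc f n) * fc (fN p f) n)

lemma sum_sg (p : ℕ) {E : Type*} [AddCommMonoid E] (h : ℤ → E) : ∑ j, h (sg p j) = (p + 1) • h 1 + (p + 1) • h (-1) := by
  rw [Fin.sum_univ_add]
  simp only [sg, Fin.append_left, Fin.append_right]
  simp

lemma gg_dec {Q : ℕ} {K K' ε : ℝ} {p : ℕ} {f : ℝ → ℂ} (h : Dec (Q + 2) K (fc f)) (h' : Dec (Q + 2) K' (fc (fN p f))) :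
    Dec Q (|ε| * (K + K')) (gg ε p f) := by
  intro n
  unfold gg
  rw [norm_mul, norm_neg, norm_mul, Complex.norm_I, mul_one, Complex.norm_real, Real.norm_eq_abs]
  have e : ‖(n:ℂ) ^ 2 * fc f n + fc (fN p f) n‖ ≤ (1 + |(n:ℝ)|) ^ 2 * ‖fc f n‖ + (1 + |(n:ℝ)|) ^ 2 * ‖fc (fN p f) n‖ := by
    refine (norm_add_le _ _).trans ?_
    rw [norm_mul, norm_pow, Complex.norm_intCast]
    gcongr
    · linarith
    · exact le_mul_of_one_le_left (norm_nonneg _) (one_le_pow₀ (one_le_w n))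
  calc (1 + |(n:ℝ)|) ^ Q * (|ε| * ‖(n:ℂ) ^ 2 * fc f n + fc (fN p f) n‖)
      ≤ (1 + |(n:ℝ)|) ^ Q * (|ε| * ((1 + |(n:ℝ)|) ^ 2 * ‖fc f n‖ + (1 + |(n:ℝ)|) ^ 2 * ‖fc (fN p f) n‖)) := by gcongr
    _ = |ε| * ((1 + |(n:ℝ)|) ^ (Q + 2) * ‖fc f n‖ + (1 + |(n:ℝ)|) ^ (Q + 2) * ‖fc (fN p f) n‖) := by ring
    _ ≤ _ := by gcongr; exacts [h n, h' n]

lemma Dec.summable_mul {Q Q' k : ℕ} {K K' : ℝ} {c c' : ℤ → ℂ} (h : Dec Q K c) (h' : Dec Q' K' c') (hk : 2 * k + 2 ≤ Q + Q') :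
    Summable fun n : ℤ => |(n:ℝ)| ^ (2 * k) * (‖c n‖ * ‖c' n‖) :=
  Summable.of_nonneg_of_le (fun n => by positivity) (fun n => h.mul_bound h' hk n) (summable_inv_sq.mul_left (K * K'))

lemma Dec.summable_norm {Q : ℕ} {K : ℝ} {c : ℤ → ℂ} (h : Dec Q K c) (hQ : 2 ≤ Q) : Summable fun n => ‖c n‖ :=
  Summable.of_nonneg_of_le (fun n => by positivity) (fun n => by simpa using h.bound (q := 0) hQ n)
    (summable_inv_sq.mul_left K)

lemma AA_summable (k p : ℕ) {f : ℝ → ℂ} (h : SP f) :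
    Summable fun n : ℤ => (n:ℂ) ^ (2 * k) * ((starRingEnd ℂ) (fc f n) * fc (fN p f) n) := by
  obtain ⟨K, hK⟩ := h.rd.dec (2 * k + 2)
  obtain ⟨K', hK'⟩ := (h.fN p).rd.dec 0
  refine Summable.of_norm ((hK.summable_mul (k := k) hK' (by omega)).congr fun n => ?_)
  rw [norm_mul, norm_pow, norm_mul, RCLike.norm_conj, Complex.norm_intCast]

lemma re_conj_gg (ε : ℝ) (p : ℕ) (f : ℝ → ℂ) (n : ℤ) :
    ((starRingEnd ℂ) (fc f n) * gg ε p f n).re = ε * ((starRingEnd ℂ) (fc f n) * fc (fN p f) n).im := by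
  unfold gg
  generalize fc f n = c
  generalize fc (fN p f) n = F
  have : ((n:ℂ)) = ((n:ℝ):ℂ) := by simp
  rw [this, ← Complex.ofReal_pow]
  simp only [Complex.mul_re, Complex.mul_im, Complex.add_re, Complex.add_im, Complex.neg_re, Complex.neg_im, Complex.conj_re, Complex.conj_im,
    Complex.ofReal_re, Complex.ofReal_im, Complex.I_re, Complex.I_im]
  ring

lemma dSS (ε : ℝ) (k p : ℕ) {f : ℝ → ℂ} (h : SP f) :
    ∑' n : ℤ, |(n:ℝ)| ^ (2 * k) * (2 * ((starRingEnd ℂ) (fc f n) * gg ε p f n).re) = 2 * ε * (AA k p f).im := by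
  rw [AA, Complex.im_tsum (AA_summable k p h), ← tsum_mul_left]
  refine tsum_congr fun n => ?_
  rw [re_conj_gg]
  have : ((n:ℂ)) ^ (2 * k) = ((|(n:ℝ)| ^ (2 * k) : ℝ) : ℂ) := by
    rw [pow_mul |(n:ℝ)|, sq_abs, ← pow_mul]; push_cast; ring
  rw [this, Complex.im_ofReal_mul]; ring

lemma cc_pos (c : ℤ → ℂ) : cc 1 c = c := by ext n; simp [cc]
lemma cc_neg (c : ℤ → ℂ) (n : ℤ) : cc (-1) c n = (starRingEnd ℂ) (c n) := by simp [cc]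

lemma AA_zero (p : ℕ) (hp : 1 ≤ p) {f : ℝ → ℂ} (h : SP f) : (AA 0 p f).im = 0 := by
  have hj : sg p (Fin.natAdd (p + 1) 0) = -1 := Fin.append_right _ _ _
  have e := F_pair p hp h (Fin.natAdd (p + 1) 0) (vv p (fc f) (Fin.natAdd (p + 1) 0))
    (vv_summable p h.rd.summable_norm _)
  rw [Function.update_eq_self, pot_eq p h] at e
  have e2 : AA 0 p f = (((2 * π)⁻¹ * ∫ x in (0:ℝ)..(2 * π), ‖f x‖ ^ (2 * (p + 1)) : ℝ) : ℂ) := by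
    rw [← e, AA]
    refine tsum_congr fun n => ?_
    rw [vv, hj, neg_neg, cc_pos, cc_neg]; simp
  rw [e2, Complex.ofReal_im]

lemma dPT (ε : ℝ) (p : ℕ) (hp : 1 ≤ p) {f : ℝ → ℂ} (h : SP f) :
    (∑ j, ∑' n, TT (sg p) (fun _ => 1) (Function.update (vv p (fc f)) j (cc (sg p j) (gg ε p f))) n).re =
      - ((p:ℝ) + 1) * (2 * ε * (AA 1 p f).im) := by
  obtain ⟨K, hK⟩ := h.rd.dec (2 + 2)
  obtain ⟨K', hK'⟩ := (h.fN p).rd.dec (2 + 2)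
  have hg := gg_dec (ε := ε) hK hK'
  have e1 : ∀ j, ∑' n, TT (sg p) (fun _ => 1) (Function.update (vv p (fc f)) j (cc (sg p j) (gg ε p f))) n =
      ∑' n, cc (sg p j) (gg ε p f) n * cc (-(sg p j)) (fc (fN p f)) n := fun j =>
    (F_pair p hp h j _ ((hg.cc _).summable_norm le_rfl)).symm
  simp_rw [e1]
  rw [sum_sg p (fun s => ∑' n, cc s (gg ε p f) n * cc (-s) (fc (fN p f)) n)]
  simp only [cc_pos, neg_neg, cc_neg]
  have e2 : ∑' n, gg ε p f n * (starRingEnd ℂ) (fc (fN p f) n) =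
      (starRingEnd ℂ) (∑' n, (starRingEnd ℂ) (gg ε p f n) * fc (fN p f) n) := by
    rw [Complex.conj_tsum]; exact tsum_congr fun n => by simp
  have hs : Summable fun n => (starRingEnd ℂ) (gg ε p f n) * fc (fN p f) n := by
    refine Summable.of_norm ((hg.summable_mul (k := 0) hK' (by omega)).congr fun n => ?_)
    rw [norm_mul, RCLike.norm_conj]; simp
  have e3 : (∑' n, (starRingEnd ℂ) (gg ε p f n) * fc (fN p f) n).re = - (ε * (AA 1 p f).im) := by
    rw [Complex.re_tsum hs, AA, Complex.im_tsum (AA_summable 1 p h), ← tsum_mul_left, ← tsum_neg]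
    refine tsum_congr fun n => ?_
    unfold gg
    generalize fc f n = c
    generalize fc (fN p f) n = F
    have : ((n:ℂ)) = ((n:ℝ):ℂ) := by simp
    rw [this, ← Complex.ofReal_pow]
    simp only [Complex.mul_re, Complex.mul_im, Complex.add_re, Complex.add_im, Complex.neg_re, Complex.neg_im, Complex.conj_re, Complex.conj_im,
      Complex.ofReal_re, Complex.ofReal_im, Complex.I_re, Complex.I_im]
    ring
  rw [e2]
  simp only [nsmul_eq_mul, Complex.add_re, Nat.cast_add, Nat.cast_one]
  have : ((p:ℂ) + 1) = (((p:ℝ) + 1 : ℝ) : ℂ) := by push_cast; rfl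
  rw [this, Complex.re_ofReal_mul, Complex.re_ofReal_mul, Complex.conj_re, e3]
  ring

lemma pow_le_prod {D : ℕ} (n : Fin D → ℤ) (q : ℕ) (j) : |(n j:ℝ)| ^ q ≤ ∏ i, (1 + |(n i:ℝ)|) ^ q := by
  classical
  calc |(n j:ℝ)| ^ q ≤ (1 + |(n j:ℝ)|) ^ q := by gcongr; linarith
    _ = ∏ i, (if i = j then (1 + |(n j:ℝ)|) ^ q else 1) := by simp
    _ ≤ _ := by
      refine Finset.prod_le_prod (fun i _ => by split_ifs <;> positivity) fun i _ => ?_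
      split_ifs with hi
      · rw [hi]
      · exact one_le_pow₀ (one_le_w _)

lemma MM_le (k : ℕ) {D : ℕ} (σ : Fin D → ℤ) (hσ : ∀ i, σ i = 1 ∨ σ i = -1) (n : Fin D → ℤ) :
    ‖(MM k σ n : ℂ)‖ ≤ D * ∏ i, (1 + |(n i:ℝ)|) ^ (2 * k) := by
  unfold MM
  push_cast
  refine (norm_sum_le _ _).trans ((Finset.sum_le_card_nsmul _ _ (∏ i, (1 + |(n i:ℝ)|) ^ (2 * k)) fun j _ => ?_).trans ?_)
  · rw [norm_mul, norm_pow, Complex.norm_intCast, Complex.norm_intCast]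
    have : |((σ j : ℤ) : ℝ)| = 1 := by rcases hσ j with h | h <;> simp [h]
    rw [this, one_mul]
    exact pow_le_prod n _ j
  · simp

lemma mu1_le (k : ℕ) {D : ℕ} (σ : Fin D → ℤ) (hσ : ∀ i, σ i = 1 ∨ σ i = -1) (n : Fin D → ℤ) :
    ‖mu1 k σ n‖ ≤ D * ∏ i, (1 + |(n i:ℝ)|) ^ (2 * k) := by
  refine le_trans ?_ (MM_le k σ hσ n)
  unfold mu1
  split_ifs with h
  · simp
  · rw [norm_div]
    refine div_le_self (norm_nonneg _) ?_
    rw [Complex.norm_intCast]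
    have : (1:ℤ) ≤ |OO σ n| := Int.one_le_abs h
    exact_mod_cast this

lemma mu2_le (k : ℕ) {D : ℕ} (σ : Fin D → ℤ) (hσ : ∀ i, σ i = 1 ∨ σ i = -1) (n : Fin D → ℤ) :
    ‖mu2 k σ n‖ ≤ D * ∏ i, (1 + |(n i:ℝ)|) ^ (2 * k) := by
  refine le_trans ?_ (MM_le k σ hσ n)
  unfold mu2
  split_ifs with h
  · exact le_rfl
  · simp

lemma Lam_MM (k p : ℕ) (hp : 1 ≤ p) {f : ℝ → ℂ} (h : SP f) :
    ∑' n, TT (sg p) (fun n => (MM k (sg p) n : ℂ)) (vv p (fc f)) n =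
      -(2 * ((p:ℂ) + 1) * Complex.I * (AA k p f).im) := by
  obtain ⟨K, hK⟩ := h.rd.dec (2 * k + 2)
  have hs : ∀ j, Summable (TT (sg p) (fun n => ((n j : ℂ)) ^ (2 * k)) (vv p (fc f))) := fun j =>
    TT_summable _ _ _ (2 * k) 1 (fun n => by
      rw [norm_pow, Complex.norm_intCast, one_mul]; exact pow_le_prod n _ j) _ le_rfl K hK.nonneg
      (fun i => hK.cc _)
  have e0 : ∀ n, TT (sg p) (fun n => (MM k (sg p) n : ℂ)) (vv p (fc f)) n =
      ∑ j, (sg p j : ℂ) * TT (sg p) (fun n => ((n j : ℂ)) ^ (2 * k)) (vv p (fc f)) n := by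
    intro n
    unfold TT
    split_ifs
    · unfold MM; push_cast; rw [Finset.sum_mul]
      exact Finset.sum_congr rfl fun j _ => by ring
    · simp
  simp_rw [e0]
  rw [Summable.tsum_finsetSum (fun j _ => (hs j).mul_left _)]
  simp_rw [tsum_mul_left]
  have hvs : ∀ s : ℤ, Summable fun n : ℤ => ‖(n:ℂ) ^ (2 * k) * cc s (fc f) n‖ := by
    intro s
    refine (h.rd.summable (2 * k)).congr fun n => ?_
    rw [norm_mul, norm_pow, Complex.norm_intCast, cc_norm]
  have e1 : ∀ j, ∑' n, TT (sg p) (fun n => ((n j : ℂ)) ^ (2 * k)) (vv p (fc f)) n =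
      ∑' n : ℤ, (n:ℂ) ^ (2 * k) * cc (sg p j) (fc f) n * cc (-(sg p j)) (fc (fN p f)) n := by
    intro j
    rw [F_pair p hp h j _ (hvs _)]
    refine tsum_congr fun n => ?_
    unfold TT
    split_ifs
    · rw [prod_update, ← Finset.mul_prod_erase _ _ (Finset.mem_univ j), vv]; ring
    · rfl
  simp_rw [e1]
  rw [sum_sg p (fun s => (s : ℂ) * ∑' n : ℤ, (n:ℂ) ^ (2 * k) * cc s (fc f) n * cc (-s) (fc (fN p f)) n)]
  simp only [cc_pos, neg_neg, cc_neg]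
  have e2 : ∑' n : ℤ, (n:ℂ) ^ (2 * k) * (starRingEnd ℂ) (fc f n) * fc (fN p f) n = AA k p f :=
    tsum_congr fun n => by ring
  have e3 : ∑' n : ℤ, (n:ℂ) ^ (2 * k) * fc f n * (starRingEnd ℂ) (fc (fN p f) n) = (starRingEnd ℂ) (AA k p f) := by
    rw [AA, Complex.conj_tsum]; exact tsum_congr fun n => by simp; ring
  rw [e2, e3]
  have := Complex.re_add_im (AA k p f)
  have e4 : (starRingEnd ℂ) (AA k p f) = (AA k p f).re - (AA k p f).im * Complex.I := by
    apply Complex.ext <;> simp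
  rw [e4]
  nth_rewrite 3 [← this]
  simp only [nsmul_eq_mul]
  push_cast
  ring

lemma TT_lin {D : ℕ} (σ : Fin D → ℤ) (μ) (v : Fin D → ℤ → ℂ) (j) (a : ℂ) (x y : ℤ → ℂ) (n) :
    TT σ μ (Function.update v j (fun m => a * (x m + y m))) n =
      a * TT σ μ (Function.update v j x) n + a * TT σ μ (Function.update v j y) n := by
  unfold TT
  split_ifs
  · simp only [prod_update]; ring
  · simp

lemma dBB (ε : ℝ) (k p : ℕ) (hp : 1 ≤ p) {f : ℝ → ℂ} (h : SP f) :
    2 * ε * (AA k p f).im + (∑ j, ∑' n, TT (sg p) (mu1 k (sg p))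
      (Function.update (vv p (fc f)) j (cc (sg p j) (gg ε p f))) n).re / ((p:ℝ) + 1) =
    ((ε : ℂ) * Complex.I * (∑' n, TT (sg p) (mu2 k (sg p)) (vv p (fc f)) n -
      ∑ j, (sg p j : ℂ) * ∑' n, TT (sg p) (mu1 k (sg p))
        (Function.update (vv p (fc f)) j (cc (sg p j) (fc (fN p f)))) n)).re / ((p:ℝ) + 1) := by
  obtain ⟨K1, hK1⟩ := h.rd.dec (2 * k + 2 + 2)
  obtain ⟨K2, hK2⟩ := (h.fN p).rd.dec (2 * k + 2)
  set K := max K1 K2 with hKd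
  have hK : Dec (2 * k + 2 + 2) K (fc f) := hK1.mono le_rfl (le_max_left _ _)
  have hF : Dec (2 * k + 2) K (fc (fN p f)) := hK2.mono le_rfl (le_max_right _ _)
  have hv : ∀ i, Dec (2 * k + 2) K (vv p (fc f) i) := fun i => (hK.mono (by omega) le_rfl).cc _
  have hn2 : Dec (2 * k + 2) K (fun n : ℤ => (n:ℂ) ^ 2 * fc f n) := by
    intro n
    rw [norm_mul, norm_pow, Complex.norm_intCast]
    refine le_trans ?_ (hK n)
    rw [pow_add _ (2 * k + 2) 2, mul_assoc]
    gcongr; linarith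
  have s1 := fun j => TT_summable (sg p) (mu1 k (sg p)) _ (2 * k) _ (mu1_le k (sg p) (sg_cases p)) (2 * k + 2) le_rfl K
    hK.nonneg (dec_update hv (hn2.cc (sg p j)) j)
  have s2 := fun j => TT_summable (sg p) (mu1 k (sg p)) _ (2 * k) _ (mu1_le k (sg p) (sg_cases p)) (2 * k + 2) le_rfl K
    hK.nonneg (dec_update hv (hF.cc (sg p j)) j)
  have sMM := TT_summable (sg p) (fun n => (MM k (sg p) n : ℂ)) _ (2 * k) _ (MM_le k (sg p) (sg_cases p)) (2 * k + 2) le_rfl K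
    hK.nonneg hv
  have sm2 := TT_summable (sg p) (mu2 k (sg p)) _ (2 * k) _ (mu2_le k (sg p) (sg_cases p)) (2 * k + 2) le_rfl K
    hK.nonneg hv
  have hcc : ∀ j, cc (sg p j) (gg ε p f) = fun m => (-((ε:ℂ) * Complex.I) * (sg p j : ℂ)) *
      (cc (sg p j) (fun n : ℤ => (n:ℂ) ^ 2 * fc f n) m + cc (sg p j) (fc (fN p f)) m) := by
    intro j
    ext m
    rcases sg_cases p j with hj | hj
    · simp [hj, cc, gg]
    · simp [hj, cc, gg]
  have e1 : ∀ j, ∑' n, TT (sg p) (mu1 k (sg p)) (Function.update (vv p (fc f)) j (cc (sg p j) (gg ε p f))) n =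
      (-((ε:ℂ) * Complex.I) * (sg p j : ℂ)) * ∑' n, TT (sg p) (mu1 k (sg p))
        (Function.update (vv p (fc f)) j (cc (sg p j) (fun n : ℤ => (n:ℂ) ^ 2 * fc f n))) n +
      (-((ε:ℂ) * Complex.I) * (sg p j : ℂ)) * ∑' n, TT (sg p) (mu1 k (sg p))
        (Function.update (vv p (fc f)) j (cc (sg p j) (fc (fN p f)))) n := by
    intro j
    rw [hcc, ← tsum_mul_left, ← tsum_mul_left, ← Summable.tsum_add ((s1 j).mul_left _) ((s2 j).mul_left _)]
    exact tsum_congr fun n => TT_lin _ _ _ _ _ _ _ _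
  have e2 : ∑ j, (sg p j : ℂ) * ∑' n, TT (sg p) (mu1 k (sg p))
        (Function.update (vv p (fc f)) j (cc (sg p j) (fun n : ℤ => (n:ℂ) ^ 2 * fc f n))) n =
      ∑' n, TT (sg p) (fun n => (MM k (sg p) n : ℂ)) (vv p (fc f)) n - ∑' n, TT (sg p) (mu2 k (sg p)) (vv p (fc f)) n := by
    rw [← Summable.tsum_sub sMM sm2]
    simp_rw [← tsum_mul_left]
    rw [← Summable.tsum_finsetSum (fun j _ => (s1 j).mul_left _)]
    refine tsum_congr fun n => ?_
    unfold TT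
    split_ifs with h0
    · have : ∀ j, (sg p j : ℂ) * (mu1 k (sg p) n * ∏ i, Function.update (vv p (fc f)) j (cc (sg p j) (fun n : ℤ => (n:ℂ) ^ 2 * fc f n)) i (n i)) =
          (sg p j : ℂ) * (n j : ℂ) ^ 2 * (mu1 k (sg p) n * ∏ i, vv p (fc f) i (n i)) := by
        intro j
        rw [prod_update, ← Finset.mul_prod_erase _ (fun i => vv p (fc f) i (n i)) (Finset.mem_univ j)]
        have : cc (sg p j) (fun n : ℤ => (n:ℂ) ^ 2 * fc f n) (n j) = (n j : ℂ) ^ 2 * vv p (fc f) j (n j) := by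
          unfold vv cc; split_ifs <;> simp
        rw [this]; ring
      simp_rw [this]
      rw [← Finset.sum_mul]
      have hO : ∑ j, (sg p j : ℂ) * (n j : ℂ) ^ 2 = (OO (sg p) n : ℂ) := by unfold OO; push_cast; rfl
      rw [hO]
      unfold mu1 mu2
      split_ifs with hz
      · rw [hz]; simp
      · have : (OO (sg p) n : ℂ) ≠ 0 := by exact_mod_cast hz
        field_simp
        ring
    · simp
  simp_rw [e1]
  rw [Finset.sum_add_distrib]
  simp_rw [mul_assoc]
  rw [← Finset.mul_sum, ← Finset.mul_sum, e2, Lam_MM k p hp h]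
  set X := ∑' n, TT (sg p) (mu2 k (sg p)) (vv p (fc f)) n
  set Y := ∑ j, (sg p j : ℂ) * ∑' n, TT (sg p) (mu1 k (sg p)) (Function.update (vv p (fc f)) j (cc (sg p j) (fc (fN p f)))) n
  set a := (AA k p f).im
  have hp1 : (p:ℝ) + 1 ≠ 0 := by positivity
  rw [eq_div_iff hp1, add_mul, div_mul_cancel₀ _ hp1]
  have : ((p:ℂ) + 1) = (((p:ℝ) + 1 : ℝ) : ℂ) := by push_cast; rfl
  rw [this]
  simp only [Complex.mul_re, Complex.mul_im, Complex.add_re, Complex.add_im, Complex.neg_re, Complex.neg_im, Complex.sub_re, Complex.sub_im,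
      Complex.ofReal_re, Complex.ofReal_im, Complex.I_re, Complex.I_im, Complex.re_ofNat, Complex.im_ofNat]
  ring


structure NL (ε : ℝ) (p : ℕ) (u : ℝ → ℝ → ℂ) : Prop where
  sp : ∀ t, SP (u t)
  de : ∀ x t, HasDerivAt (fun s => u s x)
    ((ε : ℂ) * Complex.I * (iteratedDeriv 2 (u t) x - fN p (u t) x)) t

lemma IsNLS.nl {p : ℕ} {u : ℝ → ℝ → ℂ} (h : IsNLS p Set.univ u) : NL 1 p u := by
  refine ⟨fun t => ⟨h.smooth t trivial, h.periodic t trivial⟩, fun x t => ?_⟩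
  have h1 := (h.tdiff x t trivial).hasDerivAt
  have h2 := h.eqn t trivial x
  refine h1.congr_deriv ?_
  have h3 : fN p (u t) x = Complex.I * deriv (fun s => u s x) t + pD 2 (u t) x := h2.symm
  rw [h3, pD]
  push_cast
  linear_combination (deriv (fun s => u s x) t) * Complex.I_mul_I

lemma NL.refl {ε : ℝ} {p : ℕ} {u : ℝ → ℝ → ℂ} (h : NL ε p u) : NL (-ε) p (fun t => u (-t)) := by
  refine ⟨fun t => h.sp _, fun x t => ?_⟩
  have := (h.de x (-t)).scomp t (hasDerivAt_neg t)
  refine this.congr_deriv ?_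
  rw [Complex.real_smul]
  push_cast; ring

structure Bd (m : ℕ) (K : ℝ) (f : ℝ → ℂ) : Prop where
  sup : ∀ x, ‖f x‖ ≤ K
  ss : SS m (fc f) ≤ K ^ 2

lemma Bd.nonneg {m : ℕ} {K : ℝ} {f : ℝ → ℂ} (h : Bd m K f) : 0 ≤ K := (norm_nonneg _).trans (h.sup 0)

lemma Bd.mono {m : ℕ} {K K' : ℝ} {f : ℝ → ℂ} (h : Bd m K f) (hK : K ≤ K') : Bd m K' f :=
  ⟨fun x => (h.sup x).trans hK, h.ss.trans (by have := h.nonneg; gcongr)⟩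

lemma SP.ss_summable {f : ℝ → ℂ} (h : SP f) (k : ℕ) : Summable fun n : ℤ => |(n:ℝ)| ^ (2 * k) * ‖fc f n‖ ^ 2 := by
  obtain ⟨K, hK⟩ := h.rd.dec (k + 1)
  exact hK.SS_summable (by omega)

lemma SP.exists_bd {f : ℝ → ℂ} (h : SP f) (m : ℕ) : ∃ K : ℕ, Bd m K f := by
  obtain ⟨K, hK⟩ := h.bdd
  obtain ⟨N, hN⟩ := exists_nat_ge (max K (max 1 (SS m (fc f))))
  refine ⟨N, fun x => (hK x).trans ((le_max_left _ _).trans hN), ?_⟩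
  have h1 : (1:ℝ) ≤ N := (le_max_left _ _).trans ((le_max_right _ _).trans hN)
  have h2 : SS m (fc f) ≤ N := (le_max_right _ _).trans ((le_max_right _ _).trans hN)
  nlinarith

lemma SS_le_iff {f : ℝ → ℂ} (h : SP f) (m : ℕ) (X : ℝ) :
    SS m (fc f) ≤ X ↔ ∀ N : Finset ℤ, ∑ n ∈ N, |(n:ℝ)| ^ (2 * m) * ‖fc f n‖ ^ 2 ≤ X := by
  constructor
  · intro hX N
    exact ((h.ss_summable m).sum_le_tsum N (fun n _ => by positivity)).trans hX
  · intro hN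
    exact (h.ss_summable m).tsum_le_of_sum_le hN

lemma fc_contOn {ε : ℝ} {p : ℕ} {u : ℝ → ℝ → ℂ} (h : NL ε p u) (B : Set ℝ) (K : ℝ) (hB : ∀ t ∈ B, ∀ x, ‖u t x‖ ≤ K) (n : ℤ) :
    ContinuousOn (fun t => fc (u t) n) B := by
  intro t ht
  unfold fc
  refine ContinuousWithinAt.mul continuousWithinAt_const ?_
  refine intervalIntegral.continuousWithinAt_of_dominated_interval (bound := fun _ => K) ?_ ?_ ?_ ?_
  · exact Filter.Eventually.of_forall fun s => ((h.sp s).1.continuous.mul (ee_cont _)).aestronglyMeasurable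
  · filter_upwards [self_mem_nhdsWithin] with s hs
    refine Filter.Eventually.of_forall fun x _ => ?_
    rw [norm_mul, ee_norm, mul_one]; exact hB s hs x
  · exact intervalIntegrable_const
  · refine Filter.Eventually.of_forall fun x _ => ?_
    exact ((h.de x t).continuousAt.continuousWithinAt).mul continuousWithinAt_const

lemma Bd_closed {ε : ℝ} {p : ℕ} {u : ℝ → ℝ → ℂ} (h : NL ε p u) (m : ℕ) (K : ℝ) : IsClosed {t | Bd m K (u t)} := by
  have hc : ∀ x, Continuous fun t => u t x := fun x => continuous_iff_continuousAt.2 fun t => (h.de x t).continuousAt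
  set B := {t | ∀ x, ‖u t x‖ ≤ K} with hBd
  have hB : IsClosed B := by
    rw [hBd, Set.ofPred_forall]
    exact isClosed_iInter fun x => isClosed_le (hc x).norm continuous_const
  have : {t | Bd m K (u t)} = B ∩ ⋂ N : Finset ℤ, (B ∩ (fun t => ∑ n ∈ N, |(n:ℝ)| ^ (2 * m) * ‖fc (u t) n‖ ^ 2) ⁻¹' Set.Iic (K ^ 2)) := by
    ext t
    simp only [Set.mem_ofPred_eq, Set.mem_inter_iff, Set.mem_iInter, Set.mem_preimage, Set.mem_Iic]
    constructor
    · intro hb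
      exact ⟨hb.sup, fun N => ⟨hb.sup, (SS_le_iff (h.sp t) m _).1 hb.ss N⟩⟩
    · rintro ⟨h1, h2⟩
      exact ⟨h1, (SS_le_iff (h.sp t) m _).2 fun N => (h2 N).2⟩
  rw [this]
  refine hB.inter (isClosed_iInter fun N => ?_)
  refine ContinuousOn.preimage_isClosed_of_isClosed ?_ hB isClosed_Iic
  exact continuousOn_finsetSum _ fun n _ => continuousOn_const.mul ((fc_contOn h B K (fun t ht => ht) n).norm.pow 2)

lemma dec_of_SS {c : ℤ → ℂ} (m : ℕ) (hs : Summable fun n : ℤ => |(n:ℝ)| ^ (2 * m) * ‖c n‖ ^ 2) {K : ℝ} (hK : 0 ≤ K)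
    (h0 : ‖c 0‖ ≤ K) (h1 : SS m c ≤ K ^ 2) : Dec m (2 ^ m * K) c := by
  intro n
  by_cases hn : n = 0
  · subst hn
    simp only [Int.cast_zero, abs_zero, add_zero, one_pow, one_mul]
    exact h0.trans (le_mul_of_one_le_left hK (one_le_pow₀ (by norm_num)))
  · have h2 : (1:ℝ) ≤ |(n:ℝ)| := by exact_mod_cast Int.one_le_abs hn
    have h3 : (|(n:ℝ)| ^ m * ‖c n‖) ^ 2 ≤ K ^ 2 := by
      refine le_trans (le_of_eq ?_) ((hs.le_tsum n (fun j _ => by positivity)).trans h1)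
      ring
    have h4 := abs_le_of_sq_le_sq' h3 hK
    calc (1 + |(n:ℝ)|) ^ m * ‖c n‖ ≤ (2 * |(n:ℝ)|) ^ m * ‖c n‖ := by gcongr; linarith
      _ = 2 ^ m * (|(n:ℝ)| ^ m * ‖c n‖) := by ring
      _ ≤ _ := by gcongr; exact h4.2

lemma Bd.dec {m : ℕ} {K : ℝ} {f : ℝ → ℂ} (h : Bd m K f) (hf : SP f) : Dec m (2 ^ m * K) (fc f) :=
  dec_of_SS m (hf.ss_summable m) h.nonneg (fc_norm_le _ K h.sup 0) h.ss

lemma enn_l1 {c : ℤ → ℂ} (hs : Summable fun n => ‖c n‖) : ∑' n, ‖c n‖ₑ = ENNReal.ofReal (∑' n, ‖c n‖) := by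
  rw [ENNReal.ofReal_tsum_of_nonneg (fun n => norm_nonneg _) hs]
  exact tsum_congr fun n => (ofReal_norm _).symm

lemma enn_SS {c : ℤ → ℂ} (s : ℕ) (hs : Summable fun n : ℤ => |(n:ℝ)| ^ (2 * s) * ‖c n‖ ^ 2) :
    ∑' n, (wt s n * ‖c n‖ₑ) ^ 2 = ENNReal.ofReal (SS s c) := by
  rw [SS, ENNReal.ofReal_tsum_of_nonneg (fun n => by positivity) hs]
  refine tsum_congr fun n => ?_
  rw [wt_eq, ← ofReal_norm, ← ENNReal.ofReal_mul (by positivity), ← ENNReal.ofReal_pow (by positivity)]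
  congr 1; ring

def BL (p m : ℕ) (L : ℝ) : ℝ := (((p + 1) + (p + 1) : ℕ) : ℝ) ^ (m + 1) * L ^ ((p + 1) + (p + 1))

lemma F_real (p : ℕ) (hp : 1 ≤ p) {f : ℝ → ℂ} (h : SP f) {L : ℝ} (hL : 1 ≤ L) (hx : ∑' a, ‖fc f a‖ ≤ L) :
    ∑' n, ‖fc (fN p f) n‖ ≤ L ^ ((p + 1) + (p + 1)) := by
  have h1 := F_one p hp h (ENNReal.ofReal L) (by simpa using hL)
    (by rw [enn_l1 h.rd.summable_norm]; exact ENNReal.ofReal_le_ofReal hx)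
  rw [enn_l1 (h.fN p).rd.summable_norm, ← ENNReal.ofReal_pow (by linarith)] at h1
  exact (ENNReal.ofReal_le_ofReal_iff (by positivity)).1 h1

lemma F_SS (p : ℕ) (hp : 1 ≤ p) {f : ℝ → ℂ} (h : SP f) {L : ℝ} (hL : 1 ≤ L) (hx : ∑' a, ‖fc f a‖ ≤ L) (s : ℕ) :
    SS s (fc (fN p f)) ≤ (BL p s L) ^ 2 * SS s (fc f) := by
  have hS : 0 ≤ SS s (fc f) := tsum_nonneg fun n => by positivity
  have h1 := F_two p hp h s (ENNReal.ofReal √(SS s (fc f))) (ENNReal.ofReal L) (by simpa using hL) ENNReal.ofReal_ne_top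
    (by rw [enn_l1 h.rd.summable_norm]; exact ENNReal.ofReal_le_ofReal hx)
    (by rw [enn_SS s (h.ss_summable s), ← ENNReal.ofReal_pow (by positivity), Real.sq_sqrt hS])
  have hL0 : 0 ≤ L := by linarith
  rw [enn_SS s ((h.fN p).ss_summable s), ← ENNReal.ofReal_natCast, ← ENNReal.ofReal_pow (by positivity),
    ← ENNReal.ofReal_mul (by positivity), ← ENNReal.ofReal_pow hL0,
    ← ENNReal.ofReal_mul (by positivity), ← ENNReal.ofReal_pow (by positivity)] at h1
  have h2 := (ENNReal.ofReal_le_ofReal_iff (by positivity)).1 h1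
  refine h2.trans (le_of_eq ?_)
  unfold BL
  rw [mul_pow, mul_pow, Real.sq_sqrt hS]; ring

def S0 : ℝ := ∑' n : ℤ, (1 + |(n:ℝ)| ^ 2)⁻¹

lemma S0_nonneg : 0 ≤ S0 := tsum_nonneg fun n => by positivity

lemma Dec.l1 {Q : ℕ} {K : ℝ} {c : ℤ → ℂ} (h : Dec Q K c) (hQ : 2 ≤ Q) : ∑' n, ‖c n‖ ≤ K * S0 := by
  rw [S0, ← tsum_mul_left]
  exact (h.summable_norm hQ).tsum_le_tsum (fun n => by simpa using h.bound (q := 0) hQ n) (summable_inv_sq.mul_left K)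

lemma F_dec (p : ℕ) (hp : 1 ≤ p) (m : ℕ) (hm : 2 ≤ m) (K : ℝ) :
    ∃ K' : ℝ, ∀ f, SP f → Bd m K f → Dec m K' (fc (fN p f)) := by
  set L := max 1 (2 ^ m * K * S0) with hL
  set K1 := max (L ^ ((p + 1) + (p + 1))) (BL p m L * K)
  refine ⟨2 ^ m * K1, fun f hf hb => ?_⟩
  have hl : ∑' a, ‖fc f a‖ ≤ L := ((hb.dec hf).l1 hm).trans (le_max_right _ _)
  have hL1 : 1 ≤ L := le_max_left _ _
  have hp1 : 0 ≤ L ^ ((p + 1) + (p + 1)) := by positivity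
  have hK1 : 0 ≤ K1 := hp1.trans (le_max_left _ _)
  have hBL : 0 ≤ BL p m L := by unfold BL; positivity
  refine dec_of_SS m ((hf.fN p).ss_summable m) hK1 ?_ ?_
  · exact (((hf.fN p).rd.summable_norm.le_tsum 0 (fun j _ => norm_nonneg _)).trans (F_real p hp hf hL1 hl)).trans (le_max_left _ _)
  · refine (F_SS p hp hf hL1 hl m).trans ?_
    calc _ ≤ BL p m L ^ 2 * K ^ 2 := by gcongr; exact hb.ss
      _ = (BL p m L * K) ^ 2 := by ring
      _ ≤ K1 ^ 2 := by
        have := hb.nonneg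
        gcongr; exact le_max_right _ _

lemma sup_le_l1 {f : ℝ → ℂ} (h : SP f) (x : ℝ) : ‖f x‖ ≤ ∑' n, ‖fc f n‖ := by
  rw [← (h.hasSum x).tsum_eq]
  have : Summable fun n => ‖fc f n * ee n x‖ := by simpa [ee_norm] using h.rd.summable_norm
  refine (norm_tsum_le_tsum_norm this).trans (le_of_eq (tsum_congr fun n => ?_))
  rw [norm_mul, ee_norm, mul_one]

lemma fc_lin (a : ℂ) {f g : ℝ → ℂ} (hf : Continuous f) (hg : Continuous g) (n : ℤ) :
    fc (fun x => a * (f x - g x)) n = a * (fc f n - fc g n) := by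
  have hI : ∀ {g : ℝ → ℂ}, Continuous g → IntervalIntegrable (fun x => g x * ee (-n) x) volume 0 (2 * π) :=
    fun hg => (hg.mul (ee_cont _)).intervalIntegrable _ _
  unfold fc
  have : ∀ x, a * (f x - g x) * ee (-n) x = a * (f x * ee (-n) x - g x * ee (-n) x) := fun x => by ring
  simp_rw [this]
  rw [intervalIntegral.integral_const_mul, intervalIntegral.integral_sub (hI hf) (hI hg)]
  ring

lemma fc_hasDeriv {ε : ℝ} {p : ℕ} {u : ℝ → ℝ → ℂ} (h : NL ε p u) {m : ℕ} (hm : 4 ≤ m) {K : ℝ} {t : ℝ}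
    (hb : ∀ᶠ s in nhds t, Bd m K (u s)) (n : ℤ) : HasDerivAt (fun s => fc (u s) n) (gg ε p (u t) n) t := by
  set B := 2 ^ m * K * S0 with hB
  have hder : ∀ s, Bd m K (u s) → ∀ x, ‖iteratedDeriv 2 (u s) x‖ ≤ B := by
    intro s hs x
    refine (sup_le_l1 ((h.sp s).iter 2) x).trans ?_
    have hd : Dec 2 (2 ^ m * K) (fc (iteratedDeriv 2 (u s))) := by
      intro n
      rw [(h.sp s).fc_iter, norm_mul, norm_pow, norm_mul, Complex.norm_I, one_mul, Complex.norm_intCast]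
      refine le_trans ?_ (((hs.dec (h.sp s)).mono hm le_rfl) n)
      rw [← mul_assoc]
      gcongr
      calc (1 + |(n:ℝ)|) ^ 2 * |(n:ℝ)| ^ 2 ≤ (1 + |(n:ℝ)|) ^ 2 * (1 + |(n:ℝ)|) ^ 2 := by gcongr; linarith
        _ = _ := by ring
    exact hd.l1 le_rfl
  have key := (intervalIntegral.hasDerivAt_integral_of_dominated_loc_of_deriv_le (𝕜 := ℝ) (μ := volume) (a := 0) (b := 2 * π)
    (bound := fun _ => |ε| * (B + K * K ^ (2 * p))) (F := fun s x => u s x * ee (-n) x)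
    (F' := fun s x => ((ε : ℂ) * Complex.I * (iteratedDeriv 2 (u s) x - fN p (u s) x)) * ee (-n) x)
    (x₀ := t) (s := {s | Bd m K (u s)}) hb ?_ ?_ ?_ ?_ ?_ ?_).2
  · have := key.const_mul ((2 * π : ℂ)⁻¹)
    refine this.congr_deriv ?_
    have e := fc_lin ((ε : ℂ) * Complex.I) ((h.sp t).iter 2).1.continuous ((h.sp t).fN p).1.continuous n
    rw [fc] at e
    rw [e, (h.sp t).fc_iter, gg, mul_pow, Complex.I_sq]; ring
  · exact Filter.Eventually.of_forall fun s => ((h.sp s).1.continuous.mul (ee_cont _)).aestronglyMeasurable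
  · exact ((h.sp t).1.continuous.mul (ee_cont _)).intervalIntegrable _ _
  · exact ((continuous_const.mul (((h.sp t).iter 2).1.continuous.sub ((h.sp t).fN p).1.continuous)).mul (ee_cont _)).aestronglyMeasurable
  · refine Filter.Eventually.of_forall fun x _ s hs => ?_
    rw [norm_mul, ee_norm, mul_one, norm_mul, norm_mul, Complex.norm_I, mul_one, Complex.norm_real, Real.norm_eq_abs]
    gcongr
    refine (norm_sub_le _ _).trans (add_le_add (hder s hs x) ?_)
    rw [fN, norm_mul, norm_pow, Complex.norm_real, norm_norm]
    have := hs.sup x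
    have := hs.nonneg
    gcongr
  · exact intervalIntegrable_const
  · exact Filter.Eventually.of_forall fun x _ s hs => (h.de x s).mul_const _


def Good (m : ℕ) (u : ℝ → ℝ → ℂ) (t : ℝ) : Prop := ∃ K : ℝ, ∀ᶠ s in nhds t, Bd m K (u s)

lemma Good.loc {ε : ℝ} {p : ℕ} (hp : 1 ≤ p) {u : ℝ → ℝ → ℂ} (h : NL ε p u) {m : ℕ} (hm : 4 ≤ m) {t : ℝ} (hg : Good m u t) :
    ∃ I : Set ℝ, IsOpen I ∧ IsPreconnected I ∧ t ∈ I ∧ ∃ K : ℝ, ∀ s ∈ I, Dec m K (fc (u s)) ∧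
      Dec (m - 2) K (gg ε p (u s)) ∧ ∀ n, HasDerivAt (fun r => fc (u r) n) (gg ε p (u s) n) s := by
  obtain ⟨K, hK⟩ := hg
  obtain ⟨δ, hδ, hball⟩ := Metric.eventually_nhds_iff_ball.1 hK.eventually_nhds
  obtain ⟨K', hK'⟩ := F_dec p hp m (by omega) K
  refine ⟨Metric.ball t δ, Metric.isOpen_ball, (convex_ball t δ).isPreconnected, Metric.mem_ball_self hδ,
    max (2 ^ m * K) (|ε| * (2 ^ m * K + K')), fun s hs => ?_⟩
  have hb := (hball s hs).self_of_nhds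
  have hd := hb.dec (h.sp s)
  refine ⟨hd.mono le_rfl (le_max_left _ _), ?_, fun n => fc_hasDeriv h hm (hball s hs) n⟩
  have h2 := hK' _ (h.sp s) hb
  refine (gg_dec (Q := m - 2) ?_ ?_).mono le_rfl (le_max_right _ _)
  · rwa [Nat.sub_add_cancel (by omega)]
  · rwa [Nat.sub_add_cancel (by omega)]

lemma cc_hasDeriv (s : ℤ) (c : ℝ → ℤ → ℂ) (c' : ℤ → ℂ) (t : ℝ) (n : ℤ) (h : HasDerivAt (fun r => c r n) (c' n) t) :
    HasDerivAt (fun r => cc s (c r) n) (cc s c' n) t := by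
  unfold cc
  split_ifs
  · exact h
  · exact (Complex.conjCLE.toContinuousLinearMap.hasFDerivAt.comp_hasDerivAt t h)

lemma SS_hasDeriv {ε : ℝ} {p : ℕ} (hp : 1 ≤ p) {u : ℝ → ℝ → ℂ} (h : NL ε p u) {m : ℕ} (hm : 4 ≤ m) {t : ℝ} (hg : Good m u t)
    (k : ℕ) (hk : 2 * k + 4 ≤ m + m) :
    HasDerivAt (fun s => SS k (fc (u s))) (2 * ε * (AA k p (u t)).im) t := by
  obtain ⟨I, hI, hc, ht, K, hK⟩ := hg.loc hp h hm
  rw [← dSS ε k p (h.sp t)]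
  exact SSd k I hI hc (fun s => fc (u s)) (fun s => gg ε p (u s)) (fun s hs n => (hK s hs).2.2 n) m (m - 2) K K (by omega) (by omega)
    (fun s hs => (hK s hs).1) (fun s hs => (hK s hs).2.1) t ht

lemma TT_hasDeriv {ε : ℝ} {p : ℕ} (hp : 1 ≤ p) {u : ℝ → ℝ → ℂ} (h : NL ε p u) {m : ℕ} (hm : 4 ≤ m) {t : ℝ} (hg : Good m u t)
    (μ : (Fin ((p + 1) + (p + 1)) → ℤ) → ℂ) (q : ℕ) (C : ℝ) (hμ : ∀ n, ‖μ n‖ ≤ C * ∏ i, (1 + |(n i:ℝ)|) ^ q)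
    (hq : q + 4 ≤ m) :
    HasDerivAt (fun s => ∑' n, TT (sg p) μ (vv p (fc (u s))) n)
      (∑ j, ∑' n, TT (sg p) μ (Function.update (vv p (fc (u t))) j (cc (sg p j) (gg ε p (u t)))) n) t := by
  obtain ⟨I, hI, hc, ht, K, hK⟩ := hg.loc hp h hm
  exact DL (sg p) μ I hI hc (fun s => vv p (fc (u s))) (fun s j => cc (sg p j) (gg ε p (u s)))
    (fun s hs i n => cc_hasDeriv _ (fun r => fc (u r)) _ s n ((hK s hs).2.2 n)) q C hμ (m - 2) (by omega) K
    (fun s hs i => ((hK s hs).1.mono (by omega) le_rfl).cc _) (fun s hs i => (hK s hs).2.1.cc _) t ht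

def GE (p : ℕ) (f : ℝ → ℂ) : ℝ := SS 1 (fc f) + (PT p (fc f)).re / ((p:ℝ) + 1)

lemma mass_hasDeriv {ε : ℝ} {p : ℕ} (hp : 1 ≤ p) {u : ℝ → ℝ → ℂ} (h : NL ε p u) {m : ℕ} (hm : 4 ≤ m) {t : ℝ} (hg : Good m u t) :
    HasDerivAt (fun s => SS 0 (fc (u s))) 0 t := by
  have := SS_hasDeriv hp h hm hg 0 (by omega)
  rwa [AA_zero p hp (h.sp t), mul_zero] at this

lemma GE_hasDeriv {ε : ℝ} {p : ℕ} (hp : 1 ≤ p) {u : ℝ → ℝ → ℂ} (h : NL ε p u) {m : ℕ} (hm : 4 ≤ m) {t : ℝ} (hg : Good m u t) :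
    HasDerivAt (fun s => GE p (u s)) 0 t := by
  have h1 := SS_hasDeriv hp h hm hg 1 (by omega)
  have h2 := TT_hasDeriv hp h hm hg (fun _ => 1) 0 1 (by simp) (by omega)
  have h3 := Complex.reCLM.hasFDerivAt.comp_hasDerivAt t h2
  have h4 := h1.add (h3.div_const ((p:ℝ) + 1))
  refine h4.congr_deriv ?_
  rw [Complex.reCLM_apply, dPT ε p hp (h.sp t)]
  field_simp
  ring

lemma SS_nonneg (k : ℕ) (c : ℤ → ℂ) : 0 ≤ SS k c := tsum_nonneg fun n => by positivity

lemma PT_nonneg (p : ℕ) {f : ℝ → ℂ} (h : SP f) : 0 ≤ (PT p (fc f)).re := by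
  rw [PT, pot_eq p h, Complex.ofReal_re]
  have : 0 ≤ ∫ x in (0:ℝ)..(2 * π), ‖f x‖ ^ (2 * (p + 1)) :=
    intervalIntegral.integral_nonneg (by positivity) fun x _ => by positivity
  positivity

lemma PT_le (p : ℕ) {f : ℝ → ℂ} (h : SP f) {L : ℝ} (hL : ∑' n, ‖fc f n‖ ≤ L) : (PT p (fc f)).re ≤ L ^ (2 * (p + 1)) := by
  rw [PT, pot_eq p h, Complex.ofReal_re]
  have h1 : ‖∫ x in (0:ℝ)..(2 * π), ‖f x‖ ^ (2 * (p + 1))‖ ≤ L ^ (2 * (p + 1)) * |2 * π - 0| := by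
    refine intervalIntegral.norm_integral_le_of_norm_le_const fun x _ => ?_
    rw [norm_pow, norm_norm]
    have := (sup_le_l1 h x).trans hL
    gcongr
  rw [sub_zero, abs_of_nonneg (by positivity)] at h1
  have h2 := (le_abs_self _).trans h1
  rw [inv_mul_le_iff₀ (by positivity)]
  linarith

lemma GE_ge (p : ℕ) {f : ℝ → ℂ} (h : SP f) : SS 1 (fc f) ≤ GE p f := by
  have := PT_nonneg p h
  unfold GE
  have : 0 ≤ (PT p (fc f)).re / ((p:ℝ) + 1) := by positivity
  linarith

lemma l1_le {f : ℝ → ℂ} (h : SP f) : ∑' n, ‖fc f n‖ ≤ S0 + (SS 0 (fc f) + SS 1 (fc f)) := by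
  have s0 := h.ss_summable 0
  have s1 := h.ss_summable 1
  unfold SS S0
  rw [← Summable.tsum_add s0 s1, ← Summable.tsum_add summable_inv_sq (s0.add s1)]
  refine h.rd.summable_norm.tsum_le_tsum (fun n => ?_) (summable_inv_sq.add (s0.add s1))
  have hw : 0 < 1 + |(n:ℝ)| ^ 2 := by positivity
  set w := 1 + |(n:ℝ)| ^ 2
  set c := ‖fc f n‖
  have e : |(n:ℝ)| ^ (2 * 0) * c ^ 2 + |(n:ℝ)| ^ (2 * 1) * c ^ 2 = w * c ^ 2 := by simp only [w]; ring
  rw [e]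
  have : w⁻¹ + w * c ^ 2 - 2 * c = w⁻¹ * (1 - w * c) ^ 2 := by field_simp; ring
  have h2 : 0 ≤ w⁻¹ * (1 - w * c) ^ 2 := by positivity
  have : 0 ≤ c := norm_nonneg _
  linarith

def lam (M : ℝ) : ℝ := 1 + S0 + M

def Em (p : ℕ) (M : ℝ) : ℝ := M + (lam M) ^ (2 * (p + 1))

lemma GE_le (p : ℕ) {f : ℝ → ℂ} (h : SP f) {M : ℝ} (hM : SS 0 (fc f) + SS 1 (fc f) ≤ M) :
    SS 0 (fc f) + GE p f ≤ Em p M := by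
  have h1 : ∑' n, ‖fc f n‖ ≤ lam M := by unfold lam; linarith [l1_le h]
  have h2 := PT_le p h h1
  have h3 := PT_nonneg p h
  have h4 : (PT p (fc f)).re / ((p:ℝ) + 1) ≤ (PT p (fc f)).re := div_le_self h3 (by linarith [(Nat.cast_nonneg p : (0:ℝ) ≤ p)])
  unfold GE Em
  linarith

lemma slope_bound {f f' : ℝ → ℝ} {x y C : ℝ} (hxy : x ≤ y) (hc : ContinuousOn f (Set.Icc x y))
    (hd : ∀ s ∈ Set.Ioo x y, HasDerivAt f (f' s) s) (hb : ∀ s ∈ Set.Ioo x y, |f' s| ≤ C) :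
    |f y - f x| ≤ C * (y - x) := by
  rcases hxy.eq_or_lt with rfl | hlt
  · simp
  obtain ⟨s, hs, e⟩ := exists_hasDerivAt_eq_slope f f' hlt hc hd
  have hpos : 0 < y - x := by linarith
  rw [eq_div_iff hpos.ne'] at e
  rw [← e, abs_mul, abs_of_pos hpos]
  exact mul_le_mul_of_nonneg_right (hb s hs) hpos.le

lemma ST_est {ε : ℝ} (hε : |ε| ≤ 1) {p : ℕ} (hp : 1 ≤ p) {u : ℝ → ℝ → ℂ} (h : NL ε p u) {m : ℕ} (hm : 4 ≤ m) {s0 s1 : ℝ} (K0 : ℝ)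
    (hb : ∀ s ∈ Set.Icc s0 s1, Bd m K0 (u s)) (hg : ∀ s ∈ Set.Ioo s0 s1, Good m u s) (L : ℝ) (hL1 : 1 ≤ L)
    (hL : ∀ s ∈ Set.Icc s0 s1, ∑' n, ‖fc (u s) n‖ ≤ L) (hτ : (s1 - s0) * (4 * BL p m L) ≤ 1) (r r' : ℝ)
    (hr : r ∈ Set.Icc s0 s1) (hr' : r' ∈ Set.Icc s0 s1) : SS m (fc (u r')) ≤ 2 * SS m (fc (u r)) := by
  set X := (fun s => SS m (fc (u s))) '' Set.Icc s0 s1 with hX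
  have hbdd : BddAbove X := ⟨K0 ^ 2, by rintro _ ⟨s, hs, rfl⟩; exact (hb s hs).ss⟩
  set Y := sSup X with hY
  have hle : ∀ s ∈ Set.Icc s0 s1, SS m (fc (u s)) ≤ Y := fun s hs => le_csSup hbdd ⟨s, hs, rfl⟩
  have hB : 0 < BL p m L := by unfold BL; positivity
  set B := BL p m L with hBd
  have hY0 : 0 ≤ Y := (SS_nonneg _ _).trans (hle r hr)
  have hEN : ∀ N : Finset ℤ, ∀ x y, x ∈ Set.Icc s0 s1 → y ∈ Set.Icc s0 s1 → x ≤ y →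
      |(∑ n ∈ N, |(n:ℝ)| ^ (2 * m) * ‖fc (u y) n‖ ^ 2) - ∑ n ∈ N, |(n:ℝ)| ^ (2 * m) * ‖fc (u x) n‖ ^ 2| ≤ Y / 2 := by
    intro N x y hx hy hxy
    have hsub : Set.Icc x y ⊆ Set.Icc s0 s1 := Set.Icc_subset_Icc hx.1 hy.2
    have := slope_bound (f := fun s => ∑ n ∈ N, |(n:ℝ)| ^ (2 * m) * ‖fc (u s) n‖ ^ 2)
      (f' := fun s => ∑ n ∈ N, |(n:ℝ)| ^ (2 * m) * (2 * (ε * ((starRingEnd ℂ) (fc (u s) n) * fc (fN p (u s)) n).im)))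
      (C := 2 * B * Y) hxy ?_ ?_ ?_
    · refine this.trans ?_
      have h1 : y - x ≤ s1 - s0 := by linarith [hx.1, hy.2]
      calc 2 * B * Y * (y - x) ≤ 2 * B * Y * (s1 - s0) := by gcongr
        _ = ((s1 - s0) * (4 * B)) * (Y / 2) := by ring
        _ ≤ 1 * (Y / 2) := by gcongr
        _ = Y / 2 := one_mul _
    · refine continuousOn_finsetSum _ fun n _ => continuousOn_const.mul ((fc_contOn h _ K0 (fun t ht => ?_) n).norm.pow 2)
      exact (hb t (hsub ht)).sup
    · intro s hs
      refine HasDerivAt.fun_sum fun n _ => ?_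
      obtain ⟨K, hK⟩ := hg s ⟨lt_of_le_of_lt hx.1 hs.1, lt_of_lt_of_le hs.2 hy.2⟩
      have := ((fc_hasDeriv h hm hK n).norm_sq).const_mul (|(n:ℝ)| ^ (2 * m))
      rw [Complex.inner, mul_comm (gg ε p (u s) n), re_conj_gg] at this
      exact this
    · intro s hs
      have hs' : s ∈ Set.Icc s0 s1 := hsub ⟨hs.1.le, hs.2.le⟩
      have hF := F_SS p hp (h.sp s) hL1 (hL s hs') m
      have hsc := (h.sp s).ss_summable m
      have hsF := ((h.sp s).fN p).ss_summable m
      have ht : ∀ n : ℤ, |(|(n:ℝ)| ^ (2 * m) * (2 * (ε * ((starRingEnd ℂ) (fc (u s) n) * fc (fN p (u s)) n).im)))| ≤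
          B * (|(n:ℝ)| ^ (2 * m) * ‖fc (u s) n‖ ^ 2) + B⁻¹ * (|(n:ℝ)| ^ (2 * m) * ‖fc (fN p (u s)) n‖ ^ 2) := by
        intro n
        rw [abs_mul, abs_mul, abs_mul, abs_two, abs_of_nonneg (by positivity : (0:ℝ) ≤ |(n:ℝ)| ^ (2*m))]
        have h3 : |((starRingEnd ℂ) (fc (u s) n) * fc (fN p (u s)) n).im| ≤ ‖fc (u s) n‖ * ‖fc (fN p (u s)) n‖ := by
          refine (Complex.abs_im_le_norm _).trans ?_
          rw [norm_mul, RCLike.norm_conj]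
        set a := ‖fc (u s) n‖
        set b := ‖fc (fN p (u s)) n‖
        have h4 : |ε| * |((starRingEnd ℂ) (fc (u s) n) * fc (fN p (u s)) n).im| ≤ 1 * (a * b) := by gcongr
        have h5 : 2 * (a * b) ≤ B * a ^ 2 + B⁻¹ * b ^ 2 := by
          have e : B * a ^ 2 + B⁻¹ * b ^ 2 - 2 * (a * b) = B⁻¹ * (B * a - b) ^ 2 := by field_simp; ring
          have : 0 ≤ B⁻¹ * (B * a - b) ^ 2 := by positivity
          linarith
        calc _ ≤ |(n:ℝ)| ^ (2*m) * (2 * (1 * (a * b))) := by gcongr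
          _ ≤ |(n:ℝ)| ^ (2*m) * (B * a ^ 2 + B⁻¹ * b ^ 2) := by rw [one_mul]; gcongr
          _ = _ := by ring
      refine (Finset.abs_sum_le_sum_abs _ _).trans ((Finset.sum_le_sum fun n _ => ht n).trans ?_)
      rw [Finset.sum_add_distrib, ← Finset.mul_sum, ← Finset.mul_sum]
      have a1 := hsc.sum_le_tsum N (fun n _ => by positivity)
      have a2 := hsF.sum_le_tsum N (fun n _ => by positivity)
      change _ ≤ SS m (fc (u s)) at a1
      change _ ≤ SS m (fc (fN p (u s))) at a2
      calc _ ≤ B * SS m (fc (u s)) + B⁻¹ * (B ^ 2 * SS m (fc (u s))) := by gcongr; exact a2.trans hF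
        _ = 2 * B * SS m (fc (u s)) := by field_simp; ring
        _ ≤ 2 * B * Y := by gcongr; exact hle s hs'
  have key : ∀ r' ∈ Set.Icc s0 s1, SS m (fc (u r')) ≤ SS m (fc (u r)) + Y / 2 := by
    intro r' hr'
    rw [SS_le_iff (h.sp r')]
    intro N
    have h1 := (SS_le_iff (h.sp r) m _).1 le_rfl N
    rcases le_total r r' with hle' | hle'
    · have := (abs_le.1 (hEN N r r' hr hr' hle')).2; linarith
    · have := (abs_le.1 (hEN N r' r hr' hr hle')).1; linarith
  have hYle : Y ≤ SS m (fc (u r)) + Y / 2 := by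
    refine csSup_le ⟨_, r, hr, rfl⟩ ?_
    rintro _ ⟨s, hs, rfl⟩
    exact key s hs
  have := hle r' hr'
  linarith

lemma Good.compact {m : ℕ} {u : ℝ → ℝ → ℂ} {x y : ℝ} (h : ∀ s ∈ Set.Icc x y, Good m u s) :
    ∃ K : ℝ, ∀ s ∈ Set.Icc x y, Bd m K (u s) := by
  refine isCompact_Icc.induction_on (p := fun S => ∃ K : ℝ, ∀ s ∈ S, Bd m K (u s)) ⟨0, by simp⟩ ?_ ?_ ?_
  · rintro S T hST ⟨K, hK⟩
    exact ⟨K, fun s hs => hK s (hST hs)⟩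
  · rintro S T ⟨K, hK⟩ ⟨K', hK'⟩
    refine ⟨max K K', ?_⟩
    rintro s (hs | hs)
    · exact (hK s hs).mono (le_max_left _ _)
    · exact (hK' s hs).mono (le_max_right _ _)
  · intro s hs
    obtain ⟨K, hK⟩ := h s hs
    exact ⟨_, mem_nhdsWithin_of_mem_nhds hK, K, fun s hs => hs⟩


lemma cont_SS {ε : ℝ} {p : ℕ} {u : ℝ → ℝ → ℂ} (h : NL ε p u) {m : ℕ} {I : Set ℝ} {K : ℝ}
    (hb : ∀ s ∈ I, Bd m K (u s)) (k : ℕ) (hk : 2 * k + 2 ≤ m + m) : ContinuousOn (fun s => SS k (fc (u s))) I :=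
  SSc k I (fun s => fc (u s)) (fun n => fc_contOn h I K (fun t ht => (hb t ht).sup) n) m (2 ^ m * K) hk
    (fun t ht => (hb t ht).dec (h.sp t))

lemma cc_contOn (s : ℤ) (c : ℝ → ℤ → ℂ) (I : Set ℝ) (n : ℤ) (h : ContinuousOn (fun r => c r n) I) :
    ContinuousOn (fun r => cc s (c r) n) I := by
  unfold cc
  split_ifs
  · exact h
  · exact Complex.continuous_conj.comp_continuousOn h

lemma cont_TT {ε : ℝ} {p : ℕ} {u : ℝ → ℝ → ℂ} (h : NL ε p u) {m : ℕ} {I : Set ℝ} {K : ℝ} (hK : 0 ≤ K)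
    (hb : ∀ s ∈ I, Bd m K (u s)) (μ : (Fin ((p + 1) + (p + 1)) → ℤ) → ℂ) (q : ℕ) (C : ℝ)
    (hμ : ∀ n, ‖μ n‖ ≤ C * ∏ i, (1 + |(n i:ℝ)|) ^ q) (hq : q + 2 ≤ m) :
    ContinuousOn (fun s => ∑' n, TT (sg p) μ (vv p (fc (u s))) n) I := by
  refine CL (sg p) μ I (fun s => vv p (fc (u s))) (fun i n => ?_) q C hμ m hq (2 ^ m * K) (fun t ht i => ?_) (by positivity)
  · exact cc_contOn _ (fun s => fc (u s)) I n (fc_contOn h I K (fun t ht => (hb t ht).sup) n)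
  · exact ((hb t ht).dec (h.sp t)).cc _

lemma cont_GE {ε : ℝ} {p : ℕ} {u : ℝ → ℝ → ℂ} (h : NL ε p u) {m : ℕ} (hm : 4 ≤ m) {I : Set ℝ} {K : ℝ} (hK : 0 ≤ K)
    (hb : ∀ s ∈ I, Bd m K (u s)) : ContinuousOn (fun s => GE p (u s)) I := by
  refine (cont_SS h hb 1 (by omega)).add (ContinuousOn.div_const ?_ _)
  exact Complex.continuous_re.comp_continuousOn (cont_TT h hK hb (fun _ => 1) 0 1 (by simp) (by omega))

lemma cons {ε : ℝ} {p : ℕ} (hp : 1 ≤ p) {u : ℝ → ℝ → ℂ} (h : NL ε p u) {m : ℕ} (hm : 4 ≤ m) {x y K : ℝ} (hxy : x ≤ y)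
    (hb : ∀ s ∈ Set.Icc x y, Bd m K (u s)) (hg : ∀ s ∈ Set.Ioo x y, Good m u s) :
    SS 0 (fc (u y)) = SS 0 (fc (u x)) ∧ GE p (u y) = GE p (u x) := by
  have hK : 0 ≤ K := (hb x ⟨le_rfl, hxy⟩).nonneg
  have h1 := slope_bound (f' := fun _ => 0) (C := 0) hxy (cont_SS h hb 0 (by omega))
    (fun s hs => mass_hasDeriv hp h hm (hg s hs)) (by simp)
  have h2 := slope_bound (f' := fun _ => 0) (C := 0) hxy (cont_GE h hm hK hb)
    (fun s hs => GE_hasDeriv hp h hm (hg s hs)) (by simp)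
  rw [zero_mul] at h1 h2
  exact ⟨sub_eq_zero.1 (abs_nonpos_iff.1 h1), sub_eq_zero.1 (abs_nonpos_iff.1 h2)⟩

lemma l1_V {p : ℕ} {f : ℝ → ℂ} (h : SP f) {V : ℝ} (hV : SS 0 (fc f) + GE p f ≤ V) : ∑' n, ‖fc f n‖ ≤ lam V := by
  unfold lam; linarith [l1_le h, GE_ge p h]

lemma lam_ge {V : ℝ} (hV : 0 ≤ V) : 1 ≤ lam V := by
  unfold lam; linarith [S0_nonneg]

lemma BL_pos (p m : ℕ) {L : ℝ} (hL : 1 ≤ L) : 0 < BL p m L := by unfold BL; positivity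

lemma V_nonneg (p : ℕ) {f : ℝ → ℂ} (h : SP f) : 0 ≤ SS 0 (fc f) + GE p f := by
  linarith [GE_ge p h, SS_nonneg 1 (fc f), SS_nonneg 0 (fc f)]

lemma unif {ε : ℝ} (hε : |ε| ≤ 1) {p : ℕ} (hp : 1 ≤ p) {u : ℝ → ℝ → ℂ} (h : NL ε p u) {m : ℕ} (hm : 4 ≤ m) {a t : ℝ}
    (hat : a < t) (hg : ∀ s ∈ Set.Ioc a t, Good m u s) : ∃ K2 : ℝ, ∀ s ∈ Set.Icc a t, Bd m K2 (u s) := by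
  set V := SS 0 (fc (u t)) + GE p (u t) with hV
  have hV0 : 0 ≤ V := V_nonneg p (h.sp t)
  have hL1 := lam_ge hV0
  have hcon : ∀ s ∈ Set.Ioc a t, ∑' n, ‖fc (u s) n‖ ≤ lam V := by
    intro s hs
    obtain ⟨K, hK⟩ := Good.compact (m := m) (u := u) (x := s) (y := t) fun r hr => hg r ⟨hs.1.trans_le hr.1, hr.2⟩
    have := cons hp h hm hs.2 hK fun r hr => hg r ⟨hs.1.trans hr.1, hr.2.le⟩
    refine l1_V (p := p) (h.sp s) ?_
    rw [hV, this.1, this.2]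
  have hB := BL_pos p m hL1
  set δ := (4 * BL p m (lam V))⁻¹ with hδ
  have hδ0 : 0 < δ := by positivity
  set s' := min t (a + δ) with hs'
  have has' : a < s' := lt_min hat (by linarith)
  have hs't : s' ≤ t := min_le_left _ _
  obtain ⟨K1, hK1⟩ := Good.compact (m := m) (u := u) (x := s') (y := t) fun r hr => hg r ⟨has'.trans_le hr.1, hr.2⟩
  obtain ⟨K0, hK0⟩ := (h.sp a).exists_bd m
  have hleft : ∀ s ∈ Set.Ioc a s', SS m (fc (u s)) ≤ 2 * SS m (fc (u s')) := by
    intro s hs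
    obtain ⟨K, hK⟩ := Good.compact (m := m) (u := u) (x := s) (y := s') fun r hr => hg r ⟨hs.1.trans_le hr.1, hr.2.trans hs't⟩
    refine ST_est hε hp h hm K hK (fun r hr => hg r ⟨hs.1.trans hr.1, hr.2.le.trans hs't⟩) (lam V) hL1
      (fun r hr => hcon r ⟨hs.1.trans_le hr.1, hr.2.trans hs't⟩) ?_ s' s ⟨hs.2, le_rfl⟩ ⟨le_rfl, hs.2⟩
    have : s' - s ≤ δ := by linarith [min_le_right t (a + δ), hs.1]
    calc _ ≤ δ * (4 * BL p m (lam V)) := by gcongr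
      _ = 1 := by rw [hδ]; field_simp
  have hs'1 := hK1 s' ⟨le_rfl, hs't⟩
  refine ⟨max (max K1 K0) (max (lam V) (2 * K1)), fun s hs => ?_⟩
  rcases hs.1.eq_or_lt with rfl | has
  · exact hK0.mono ((le_max_right _ _).trans (le_max_left _ _))
  rcases le_total s' s with h1 | h1
  · exact (hK1 s ⟨h1, hs.2⟩).mono ((le_max_left _ _).trans (le_max_left _ _))
  · have h2 : Bd m (max (lam V) (2 * K1)) (u s) := by
      refine ⟨fun x => ((sup_le_l1 (h.sp s) x).trans (hcon s ⟨has, hs.2⟩)).trans (le_max_left _ _), ?_⟩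
      have h3 := hleft s ⟨has, h1⟩
      have h4 := hs'1.ss
      have h5 := hs'1.nonneg
      have h6 : (2 * K1) ^ 2 ≤ (max (lam V) (2 * K1)) ^ 2 := by gcongr; exact le_max_right _ _
      nlinarith
    exact h2.mono (le_max_right _ _)

lemma Bd.low {m : ℕ} (hm : 4 ≤ m) {K : ℝ} {f : ℝ → ℂ} (h : Bd m K f) (hf : SP f) :
    SS 0 (fc f) + SS 1 (fc f) ≤ 2 * ((2 ^ m * K) * (2 ^ m * K) * S0) := by
  have hd := h.dec hf
  have aux : ∀ k, 2 * k + 2 ≤ m + m → SS k (fc f) ≤ (2 ^ m * K) * (2 ^ m * K) * S0 := by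
    intro k hk
    rw [S0, ← tsum_mul_left]
    refine (hf.ss_summable k).tsum_le_tsum (fun n => ?_) (summable_inv_sq.mul_left _)
    rw [sq ‖fc f n‖]
    exact hd.mul_bound hd hk n
  linarith [aux 0 (by omega), aux 1 (by omega)]

lemma core {m : ℕ} (hm : 4 ≤ m) {p : ℕ} (hp : 1 ≤ p) (K : ℝ) (hK : 0 ≤ K) : ∃ K' : ℝ, ∃ τ : ℝ, 0 < τ ∧
    ∀ ε : ℝ, |ε| ≤ 1 → ∀ u, NL ε p u → ∀ a t, a < t → t - a ≤ τ → Bd m K (u a) → (∀ s ∈ Set.Ioc a t, Good m u s) → Bd m K' (u t) := by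
  set M0 := 2 * ((2 ^ m * K) * (2 ^ m * K) * S0) with hM0
  have hS0 := S0_nonneg
  have hM00 : 0 ≤ M0 := by positivity
  have hE : 0 ≤ Em p M0 := by have := lam_ge hM00; unfold Em; positivity
  set L := lam (Em p M0) with hLd
  have hL1 : 1 ≤ L := lam_ge hE
  have hB := BL_pos p m hL1
  refine ⟨max (2 * K) L, (4 * BL p m L)⁻¹, by positivity, fun ε hε u h a t hat hτ hba hg => ?_⟩
  obtain ⟨K2, hK2⟩ := unif hε hp h hm hat hg
  have hV := GE_le p (h.sp a) (hba.low hm (h.sp a))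
  have hl : ∀ s ∈ Set.Icc a t, ∑' n, ‖fc (u s) n‖ ≤ L := by
    intro s hs
    have := cons hp h hm hs.1 (fun r hr => hK2 r ⟨hr.1, hr.2.trans hs.2⟩) (fun r hr => hg r ⟨hr.1, hr.2.le.trans hs.2⟩)
    refine l1_V (p := p) (h.sp s) ?_
    rw [this.1, this.2]; exact hV
  have h1 := ST_est hε hp h hm K2 hK2 (fun r hr => hg r ⟨hr.1, hr.2.le⟩) L hL1 hl ?_ a t ⟨le_rfl, hat.le⟩ ⟨hat.le, le_rfl⟩
  · refine ⟨fun x => ((sup_le_l1 (h.sp t) x).trans (hl t ⟨hat.le, le_rfl⟩)).trans (le_max_right _ _), ?_⟩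
    have h4 := hba.ss
    have h6 : (2 * K) ^ 2 ≤ (max (2 * K) L) ^ 2 := by gcongr; exact le_max_left _ _
    nlinarith
  · calc _ ≤ (4 * BL p m L)⁻¹ * (4 * BL p m L) := by gcongr
      _ = 1 := by field_simp

lemma Good.refl {m : ℕ} {u : ℝ → ℝ → ℂ} {t : ℝ} (h : Good m u t) : Good m (fun s => u (-s)) (-t) := by
  obtain ⟨K, hK⟩ := h
  refine ⟨K, ?_⟩
  have : Filter.Tendsto (fun s : ℝ => -s) (nhds (-t)) (nhds t) := by
    have := (continuous_neg (G := ℝ)).tendsto (-t)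
    rwa [neg_neg] at this
  exact this.eventually hK

lemma bad_closed (m : ℕ) (u : ℝ → ℝ → ℂ) : IsClosed {t | ¬ Good m u t} := by
  rw [← isOpen_compl_iff]
  have : {t | ¬ Good m u t}ᶜ = {t | Good m u t} := by ext; simp
  rw [this, isOpen_iff_mem_nhds]
  rintro t ⟨K, hK⟩
  filter_upwards [hK.eventually_nhds] with s hs using ⟨K, hs⟩

lemma right_ext {m : ℕ} (hm : 4 ≤ m) {p : ℕ} (hp : 1 ≤ p) {K K' τ : ℝ}
    (hcore : ∀ ε : ℝ, |ε| ≤ 1 → ∀ u, NL ε p u → ∀ a t, a < t → t - a ≤ τ → Bd m K (u a) → (∀ s ∈ Set.Ioc a t, Good m u s) → Bd m K' (u t))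
    {ε : ℝ} (hε : |ε| ≤ 1) {u : ℝ → ℝ → ℂ} (h : NL ε p u) {t0 δ : ℝ} (hδ : δ ≤ τ) (hbad : ¬ Good m u t0)
    (hS : ∀ s, |s - t0| < δ → ¬ Good m u s → Bd m K (u s)) :
    ∀ t, t0 ≤ t → t < t0 + δ → Bd m (max K K') (u t) := by
  intro t h0 h1
  by_cases hgt : Good m u t
  · set S := {s | ¬ Good m u s} ∩ Set.Icc t0 t with hSd
    have hcl : IsClosed S := (bad_closed m u).inter isClosed_Icc
    have hne : S.Nonempty := ⟨t0, hbad, le_rfl, h0⟩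
    have hbdd : BddAbove S := ⟨t, fun s hs => hs.2.2⟩
    have ha := hcl.csSup_mem hne hbdd
    set a := sSup S with had
    have hat : a < t := lt_of_le_of_ne ha.2.2 fun e => ha.1 (e ▸ hgt)
    refine (hcore ε hε u h a t hat (by linarith [ha.2.1]) (hS a ?_ ha.1) fun s hs => ?_).mono (le_max_right _ _)
    · rw [abs_of_nonneg (by linarith [ha.2.1])]; linarith
    · by_contra hb
      have : s ≤ a := le_csSup hbdd ⟨hb, ha.2.1.trans hs.1.le, hs.2⟩
      exact absurd hs.1 (not_lt.2 this)
  · exact (hS t (by rw [abs_of_nonneg (by linarith)]; linarith) hgt).mono (le_max_left _ _)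

lemma all_good {m : ℕ} (hm : 4 ≤ m) {p : ℕ} (hp : 1 ≤ p) {ε : ℝ} (hε : |ε| ≤ 1) {u : ℝ → ℝ → ℂ} (h : NL ε p u) (t : ℝ) : Good m u t := by
  by_contra hbad0
  set S := {t | ¬ Good m u t} with hSd
  have hcl : IsClosed S := bad_closed m u
  have : Nonempty S := ⟨⟨t, hbad0⟩⟩
  have : CompleteSpace S := hcl.completeSpace_coe
  obtain ⟨K, x, hx⟩ := nonempty_interior_of_iUnion_of_closed (X := S) (f := fun K : ℕ => {s : S | Bd m K (u s)})
    (fun K => (Bd_closed h m K).preimage continuous_subtype_val)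
    (by ext s; simpa using (h.sp s).exists_bd m)
  obtain ⟨δ, hδ, hball⟩ := Metric.isOpen_iff.1 isOpen_interior x hx
  obtain ⟨K', τ, hτ, hcore⟩ := core hm hp (K:ℝ) (Nat.cast_nonneg K)
  have hS : ∀ s, |s - (x:ℝ)| < min δ τ → ¬ Good m u s → Bd m K (u s) := by
    intro s hs hb
    have : (⟨s, hb⟩ : S) ∈ Metric.ball x δ := by
      rw [Metric.mem_ball, Subtype.dist_eq, Real.dist_eq]
      exact hs.trans_le (min_le_left _ _)
    have h2 : (⟨s, hb⟩ : S) ∈ {s : S | Bd m K (u s)} := interior_subset (hball this)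
    exact h2
  have hpos : 0 < min δ τ := lt_min hδ hτ
  have hR := right_ext hm hp hcore hε h (min_le_right δ τ) x.2 hS
  have hL := right_ext hm hp hcore (ε := -ε) (by rwa [abs_neg]) h.refl (t0 := -(x:ℝ)) (min_le_right δ τ)
    (fun hg => x.2 (by simpa using hg.refl)) (fun s hs hb => hS (-s) (by rw [abs_sub_comm]; convert hs using 2; ring)
      (fun hg => hb (by simpa using hg.refl)))
  refine x.2 ⟨max K K', ?_⟩
  filter_upwards [Metric.ball_mem_nhds (x:ℝ) hpos] with s hs
  rw [Metric.mem_ball, Real.dist_eq, abs_lt] at hs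
  rcases le_total (x:ℝ) s with hle | hle
  · exact hR s hle (by linarith [hs.2])
  · have := hL (-s) (by linarith) (by linarith [hs.1])
    simpa using this


def Bf (k p : ℕ) (f : ℝ → ℂ) : ℂ := ∑' n, TT (sg p) (mu1 k (sg p)) (vv p (fc f)) n

def Zd (k p : ℕ) (f : ℝ → ℂ) : ℝ := (((1:ℝ) : ℂ) * Complex.I * (∑' n, TT (sg p) (mu2 k (sg p)) (vv p (fc f)) n -
      ∑ j, (sg p j : ℂ) * ∑' n, TT (sg p) (mu1 k (sg p))
        (Function.update (vv p (fc f)) j (cc (sg p j) (fc (fN p f)))) n)).re / ((p:ℝ) + 1)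

def Zf (k p : ℕ) (f : ℝ → ℂ) : ℝ := SS k (fc f) + (Bf k p f).re / ((p:ℝ) + 1)

lemma SN_of {k : ℕ} {c : ℤ → ℂ} (s : ℤ) (hs : Summable fun n => ‖c n‖)
    (hss : ∀ j : ℕ, Summable fun n : ℤ => |(n:ℝ)| ^ (2 * j) * ‖c n‖ ^ 2) {L H : ℝ} (hL : 0 ≤ L) (hH : 0 ≤ H)
    (h0 : ∑' n, ‖c n‖ ≤ L) (h1 : SS 1 c ≤ L ^ 2) (h2 : SS (k - 1) c ≤ (L * H) ^ 2) :
    SN k (cc s c) (ENNReal.ofReal L) (ENNReal.ofReal H) := by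
  refine ⟨?_, ?_, ?_⟩
  · simp only [cc_enorm]
    rw [enn_l1 hs]; exact ENNReal.ofReal_le_ofReal h0
  · simp only [cc_enorm]
    rw [enn_SS 1 (hss 1), ← ENNReal.ofReal_pow hL]; exact ENNReal.ofReal_le_ofReal h1
  · simp only [cc_enorm]
    rw [enn_SS (k - 1) (hss (k - 1)), ← ENNReal.ofReal_mul hL, ← ENNReal.ofReal_pow (by positivity)]
    exact ENNReal.ofReal_le_ofReal h2

lemma main_bound (k : ℕ) (hk : 1 ≤ k) (p : ℕ) (hp : 1 ≤ p) (L : ℝ) (hL : 1 ≤ L) : ∃ a : ℝ, 0 ≤ a ∧ ∀ f, SP f →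
    ∑' n, ‖fc f n‖ ≤ L → SS 1 (fc f) ≤ L ^ 2 →
    |(Bf k p f).re / ((p:ℝ) + 1)| ≤ a * SS (k - 1) (fc f) ∧ |Zd k p f| ≤ a * SS (k - 1) (fc f) := by
  obtain ⟨C, hC, hb⟩ := Lam_bound k hk ((p + 1) + (p + 1)) (by omega)
  have hB1 := BL_pos p 1 hL
  have hBk := BL_pos p (k - 1) hL
  set D := (p + 1) + (p + 1) with hD
  set L' := L + L ^ D + BL p 1 L * L + BL p (k - 1) L with hL'
  have hLD : 0 ≤ L ^ D := by positivity
  have hBL : 0 ≤ BL p 1 L * L := by positivity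
  have hL'1 : 1 ≤ L' := by linarith
  have hL'0 : 0 ≤ L' := by linarith
  set A := C.toReal * L' ^ (D + 4) with hA
  have hA0 : 0 ≤ A := by positivity
  refine ⟨A + D * A, by positivity, fun f hf h0 h1 => ?_⟩
  set S := SS (k - 1) (fc f) with hS
  have hS0 : 0 ≤ S := SS_nonneg _ _
  have key : ∀ v : Fin D → ℤ → ℂ, (∀ i, SN k (v i) (ENNReal.ofReal L') (ENNReal.ofReal √S)) →
      ∀ μ ∈ ({mu1 k (sg p), mu2 k (sg p)} : Set ((Fin D → ℤ) → ℂ)), ‖∑' n, TT (sg p) μ v n‖ ≤ A * S := by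
    intro v hv μ hμ
    have h3 := hb (sg p) (sg_cases p) v _ _ (by simpa using hL'1) hv μ hμ
    have h4 : ‖∑' n, TT (sg p) μ v n‖ₑ ≤ ENNReal.ofReal (A * S) := by
      refine (enorm_tsum_le_tsum_enorm).trans (h3.trans (le_of_eq ?_))
      rw [← ENNReal.ofReal_pow (by positivity), ← ENNReal.ofReal_pow (by positivity), Real.sq_sqrt hS0, hA,
        ENNReal.ofReal_mul (by positivity), ENNReal.ofReal_mul (by positivity), ENNReal.ofReal_toReal hC]
    rw [← ofReal_norm] at h4
    exact (ENNReal.ofReal_le_ofReal_iff (by positivity)).1 h4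
  have hc : ∀ s, SN k (cc s (fc f)) (ENNReal.ofReal L') (ENNReal.ofReal √S) := by
    intro s
    refine SN_of s hf.rd.summable_norm hf.ss_summable hL'0 (Real.sqrt_nonneg _) (by linarith) ?_ ?_
    · have : L ^ 2 ≤ L' ^ 2 := by gcongr; linarith
      linarith
    · rw [mul_pow, Real.sq_sqrt hS0]
      exact le_mul_of_one_le_left hS0 (one_le_pow₀ hL'1)
  have hF : ∀ s, SN k (cc s (fc (fN p f))) (ENNReal.ofReal L') (ENNReal.ofReal √S) := by
    intro s
    refine SN_of s (hf.fN p).rd.summable_norm (hf.fN p).ss_summable hL'0 (Real.sqrt_nonneg _) ?_ ?_ ?_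
    · have := F_real p hp hf hL h0
      linarith
    · refine (F_SS p hp hf hL h0 1).trans ?_
      calc BL p 1 L ^ 2 * SS 1 (fc f) ≤ BL p 1 L ^ 2 * L ^ 2 := by gcongr
        _ = (BL p 1 L * L) ^ 2 := by ring
        _ ≤ L' ^ 2 := by gcongr; linarith
    · refine (F_SS p hp hf hL h0 (k - 1)).trans ?_
      rw [mul_pow, Real.sq_sqrt hS0]
      gcongr; linarith
  have hv : ∀ i, SN k (vv p (fc f) i) (ENNReal.ofReal L') (ENNReal.ofReal √S) := fun i => hc _
  have hp1 : (1:ℝ) ≤ (p:ℝ) + 1 := by linarith [(Nat.cast_nonneg p : (0:ℝ) ≤ p)]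
  have hdiv : ∀ x y : ℝ, |x| ≤ y → |x / ((p:ℝ) + 1)| ≤ y := by
    intro x y hxy
    rw [abs_div, abs_of_pos (by linarith : (0:ℝ) < p + 1)]
    exact (div_le_self (abs_nonneg x) hp1).trans hxy
  have k1 := key _ hv (mu1 k (sg p)) (by simp)
  have k2 := key _ hv (mu2 k (sg p)) (by simp)
  have hAS : 0 ≤ A * S := by positivity
  constructor
  · refine hdiv _ _ ((Complex.abs_re_le_norm _).trans (k1.trans ?_))
    have : 0 ≤ D * A * S := by positivity
    linarith
  · refine hdiv _ _ ((Complex.abs_re_le_norm _).trans ?_)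
    rw [norm_mul, Complex.ofReal_one, one_mul, Complex.norm_I, one_mul]
    refine (norm_sub_le _ _).trans ?_
    rw [add_mul]
    refine add_le_add k2 ((norm_sum_le _ _).trans ?_)
    refine (Finset.sum_le_card_nsmul _ _ (A * S) fun j _ => ?_).trans (le_of_eq ?_)
    · rw [norm_mul]
      have e : ‖((sg p j : ℤ) : ℂ)‖ = 1 := by rcases sg_cases p j with h | h <;> simp [h]
      rw [e, one_mul]
      refine key _ (fun i => ?_) _ (by simp)
      by_cases hij : i = j
      · subst hij; rw [Function.update_self]; exact hF _
      · rw [Function.update_of_ne hij]; exact hv i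
    · rw [Finset.card_univ, Fintype.card_fin, nsmul_eq_mul]; ring

lemma Zf_hasDeriv {p : ℕ} (hp : 1 ≤ p) {u : ℝ → ℝ → ℂ} (h : NL 1 p u) (k : ℕ) (t : ℝ) :
    HasDerivAt (fun s => Zf k p (u s)) (Zd k p (u t)) t := by
  have hg : Good (2 * k + 4) u t := all_good (by omega) hp (by simp) h t
  have h1 := SS_hasDeriv hp h (by omega) hg k (by omega)
  have h2 := TT_hasDeriv hp h (by omega) hg (mu1 k (sg p)) (2 * k) _ (mu1_le k (sg p) (sg_cases p)) (by omega)
  have h3 := Complex.reCLM.hasFDerivAt.comp_hasDerivAt t h2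
  have h4 := h1.add (h3.div_const ((p:ℝ) + 1))
  refine h4.congr_deriv ?_
  rw [Complex.reCLM_apply]
  exact dBB 1 k p hp (h.sp t)

lemma interp1 (k : ℕ) (hk : 2 ≤ k) {f : ℝ → ℂ} (h : SP f) {x : ℝ} (hx : 0 < x) (j : ℕ) (hj : j + 1 ≤ k) :
    SS (k - 1) (fc f) ≤ x ^ (k - 1 - j) * SS j (fc f) + SS k (fc f) / x := by
  unfold SS
  rw [← tsum_mul_left, ← tsum_div_const, ← Summable.tsum_add ((h.ss_summable j).mul_left _) ((h.ss_summable k).div_const _)]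
  refine (h.ss_summable (k - 1)).tsum_le_tsum (fun n => ?_) (((h.ss_summable j).mul_left _).add ((h.ss_summable k).div_const _))
  have key : |(n:ℝ)| ^ (2 * (k - 1)) ≤ x ^ (k - 1 - j) * |(n:ℝ)| ^ (2 * j) + |(n:ℝ)| ^ (2 * k) / x := by
    obtain ⟨i, rfl⟩ : ∃ i, k = j + 1 + i := ⟨k - (j + 1), by omega⟩
    rw [show j + 1 + i - 1 = j + i by omega, show j + i - j = i by omega]
    set y := |(n:ℝ)| ^ 2 with hy
    have hy0 : 0 ≤ y := by positivity
    rw [pow_mul, pow_mul, pow_mul, ← hy]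
    rcases le_total y x with hyx | hyx
    · have h1 : y ^ i ≤ x ^ i := by gcongr
      have h2 : 0 ≤ y ^ (j + 1 + i) / x := by positivity
      calc y ^ (j + i) = y ^ i * y ^ j := by ring
        _ ≤ x ^ i * y ^ j := by gcongr
        _ ≤ _ := by linarith
    · have h2 : 0 ≤ x ^ i * y ^ j := by positivity
      have h3 : y ^ (j + i) ≤ y ^ (j + 1 + i) / x := by
        rw [le_div_iff₀ hx]
        calc y ^ (j + i) * x ≤ y ^ (j + i) * y := by gcongr
          _ = _ := by ring
      linarith
  calc _ ≤ (x ^ (k - 1 - j) * |(n:ℝ)| ^ (2 * j) + |(n:ℝ)| ^ (2 * k) / x) * ‖fc f n‖ ^ 2 := by gcongr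
    _ = _ := by ring

lemma growth {p : ℕ} (hp : 1 ≤ p) {u : ℝ → ℝ → ℂ} (h : NL 1 p u) (k : ℕ) {a : ℝ} (ha : 0 < a)
    (hB : ∀ t, |(Bf k p (u t)).re / ((p:ℝ) + 1)| ≤ a * SS (k - 1) (fc (u t)) ∧ |Zd k p (u t)| ≤ a * SS (k - 1) (fc (u t)))
    {t b q : ℝ} (ht : 0 ≤ t) (hb : a * (2 + t) ≤ b)
    (hq : ∀ s, SS (k - 1) (fc (u s)) ≤ q + SS k (fc (u s)) / (2 * b)) :
    SS k (fc (u t)) ≤ 2 * SS k (fc (u 0)) + 2 * b * q := by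
  have hb0 : 0 < b := lt_of_lt_of_le (by positivity) hb
  obtain ⟨K, hK⟩ := Good.compact (m := k + 4) (u := u) (x := 0) (y := t) fun s _ => all_good (by omega) hp (by simp) h s
  have hcont := cont_SS h hK k (by omega)
  obtain ⟨r, hr, hmax⟩ := isCompact_Icc.exists_isMaxOn (Set.nonempty_Icc.2 ht) hcont
  set Y := SS k (fc (u r)) with hY
  have hle : ∀ s ∈ Set.Icc 0 t, SS k (fc (u s)) ≤ Y := fun s hs => hmax hs
  set g := q + Y / (2 * b) with hg
  have hk1 : ∀ s ∈ Set.Icc 0 t, SS (k - 1) (fc (u s)) ≤ g := by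
    intro s hs
    refine (hq s).trans ?_
    have := hle s hs
    rw [hg]; gcongr
  have hg0 : 0 ≤ g := (SS_nonneg _ _).trans (hk1 r hr)
  have hs := slope_bound (f := fun s => Zf k p (u s)) (C := a * g) hr.1
    (fun s _ => (Zf_hasDeriv hp h k s).continuousAt.continuousWithinAt)
    (fun s _ => Zf_hasDeriv hp h k s)
    (fun s hs => (hB s).2.trans (by have := hk1 s ⟨hs.1.le, hs.2.le.trans hr.2⟩; gcongr))
  have e1 := ((hB r).1.trans (mul_le_mul_of_nonneg_left (hk1 r hr) ha.le))
  have e0 := ((hB 0).1.trans (mul_le_mul_of_nonneg_left (hk1 0 ⟨le_rfl, ht⟩) ha.le))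
  have e2 := (abs_le.1 hs).2
  have e3 := (abs_le.1 e1).1
  have e4 := (abs_le.1 e0).2
  simp only [Zf] at e2
  have e5 : a * g * (r - 0) ≤ a * g * t := by gcongr; linarith [hr.2]
  have e6 : a * (2 + t) * g ≤ b * g := by gcongr
  have e7 : Y ≤ SS k (fc (u 0)) + b * g := by linarith
  have e8 : b * g = b * q + Y / 2 := by rw [hg]; field_simp
  have e9 := hle t ⟨ht, le_rfl⟩
  linarith

lemma HkSq_eq {f : ℝ → ℂ} (h : SP f) (k : ℕ) : HkSq k f = 2 * π * (SS 0 (fc f) + SS k (fc f)) := by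
  have h0 := L2sq_eq h 0
  rw [pD, iteratedDeriv_zero] at h0
  rw [HkSq, L2sq_eq h k, h0]; ring

lemma conserved {p : ℕ} (hp : 1 ≤ p) {u : ℝ → ℝ → ℂ} (h : NL 1 p u) (t : ℝ) :
    SS 0 (fc (u t)) = SS 0 (fc (u 0)) ∧ GE p (u t) = GE p (u 0) := by
  have hg : ∀ s, Good 4 u s := fun s => all_good le_rfl hp (by simp) h s
  rcases le_total 0 t with h0 | h0
  · obtain ⟨K, hK⟩ := Good.compact (m := 4) (u := u) (x := 0) (y := t) fun s _ => hg s
    exact cons hp h le_rfl h0 hK fun s _ => hg s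
  · obtain ⟨K, hK⟩ := Good.compact (m := 4) (u := u) (x := t) (y := 0) fun s _ => hg s
    have := cons hp h le_rfl h0 hK fun s _ => hg s
    exact ⟨this.1.symm, this.2.symm⟩

lemma sqrt_add_le_aux {x y : ℝ} (hx : 0 ≤ x) (hy : 0 ≤ y) : √(x + y) ≤ √x + √y := by
  refine Real.sqrt_le_iff.2 ⟨by positivity, ?_⟩
  have h1 := Real.sq_sqrt hx
  have h2 := Real.sq_sqrt hy
  have h3 : 0 ≤ √x * √y := by positivity
  nlinarith

lemma main_growth (k p : ℕ) (hk : 2 ≤ k) (hp : 2 ≤ p) (R : ℝ) :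
    ∃ C : ℝ, 0 < C ∧ ∀ u : ℝ → ℝ → ℂ, IsNLS p Set.univ u → HkNorm 1 (u 0) ≤ R →
      (∀ t : ℝ, 0 < t → t ≤ 1 → HkNorm k (u t) ≤ C * HkNorm k (u 0)) ∧
      (∀ t : ℝ, 1 ≤ t → HkNorm k (u t) ≤ C * HkNorm k (u 0) + C * t ^ (((k : ℝ) - 1) / 2)) := by
  have hp1 : 1 ≤ p := by omega
  set M := R ^ 2 / (2 * π) with hM
  have hM0 : 0 ≤ M := by positivity
  have hE0 : M ≤ Em p M := by have := lam_ge hM0; unfold Em; linarith [pow_nonneg (by linarith : 0 ≤ lam M) (2 * (p + 1))]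
  set E := Em p M with hE
  have hL1 : 1 ≤ lam E := lam_ge (hM0.trans hE0)
  have hLE : E ≤ lam E := by unfold lam; linarith [S0_nonneg]
  set L := lam E with hL
  obtain ⟨a0, ha0, hbd⟩ := main_bound k (by omega) p hp1 L hL1
  set a := a0 + 1 with ha
  have hapos : 0 < a := by linarith
  set C1 := √(2 + (6 * a) ^ k) with hC1
  set C2 := √(2 * π * ((6 * a) ^ (k - 1) * L ^ 2)) with hC2
  have hC1p : 0 < C1 := by positivity
  have hC2p : 0 ≤ C2 := by positivity
  refine ⟨C1 + C2, by positivity, fun u hu hR => ?_⟩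
  have h := hu.nl
  have hR0 : SS 0 (fc (u 0)) + SS 1 (fc (u 0)) ≤ M := by
    have h1 : HkSq 1 (u 0) ≤ R ^ 2 := by
      have h2 : 0 ≤ HkSq 1 (u 0) := by
        rw [HkSq_eq (h.sp 0)]
        have := SS_nonneg 0 (fc (u 0)); have := SS_nonneg 1 (fc (u 0)); positivity
      calc HkSq 1 (u 0) = (HkNorm 1 (u 0)) ^ 2 := by rw [HkNorm, Real.sq_sqrt h2]
        _ ≤ R ^ 2 := by gcongr; exact Real.sqrt_nonneg _
    rw [HkSq_eq (h.sp 0)] at h1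
    rw [hM, le_div_iff₀ (by positivity)]; linarith
  have hV : ∀ t, SS 0 (fc (u t)) + GE p (u t) ≤ E := by
    intro t
    rw [(conserved hp1 h t).1, (conserved hp1 h t).2]
    exact GE_le p (h.sp 0) hR0
  have hS1 : ∀ t, SS 1 (fc (u t)) ≤ L ^ 2 := by
    intro t
    have h1 := GE_ge p (h.sp t)
    have h2 := SS_nonneg 0 (fc (u t))
    have h3 := hV t
    nlinarith
  have hB : ∀ t, |(Bf k p (u t)).re / ((p:ℝ) + 1)| ≤ a * SS (k - 1) (fc (u t)) ∧ |Zd k p (u t)| ≤ a * SS (k - 1) (fc (u t)) := by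
    intro t
    have h1 := hbd (u t) (h.sp t) (l1_V (h.sp t) (hV t)) (hS1 t)
    have h2 := SS_nonneg (k - 1) (fc (u t))
    exact ⟨h1.1.trans (by rw [ha]; linarith), h1.2.trans (by rw [ha]; linarith)⟩
  have hm0 := SS_nonneg 0 (fc (u 0))
  have hk0 := SS_nonneg k (fc (u 0))
  refine ⟨fun t ht ht1 => ?_, fun t ht => ?_⟩
  · have h1 := growth hp1 h k hapos hB (t := t) (b := 3 * a) (q := (6 * a) ^ (k - 1) * SS 0 (fc (u 0))) ht.le
      (by nlinarith) (fun s => by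
        have := interp1 k hk (h.sp s) (x := 6 * a) (by positivity) 0 (by omega)
        rw [(conserved hp1 h s).1] at this
        rw [show 2 * (3 * a) = 6 * a by ring]
        exact this)
    have e : (6 * a) ^ k = 6 * a * (6 * a) ^ (k - 1) := by
      rw [← pow_succ', Nat.sub_add_cancel (by omega)]
    have h2 : HkNorm k (u t) ≤ C1 * HkNorm k (u 0) := by
      rw [HkNorm, HkNorm, hC1, ← Real.sqrt_mul (by positivity), HkSq_eq (h.sp t), HkSq_eq (h.sp 0), (conserved hp1 h t).1]
      refine Real.sqrt_le_sqrt ?_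
      have h3 : SS 0 (fc (u 0)) + SS k (fc (u t)) ≤ (2 + (6 * a) ^ k) * (SS 0 (fc (u 0)) + SS k (fc (u 0))) := by
        have : 0 ≤ (6 * a) ^ k * SS k (fc (u 0)) := by positivity
        rw [show 2 * (3 * a) * ((6 * a) ^ (k - 1) * SS 0 (fc (u 0))) = (6 * a) ^ k * SS 0 (fc (u 0)) by rw [e]; ring] at h1
        linarith
      calc _ ≤ 2 * π * ((2 + (6 * a) ^ k) * (SS 0 (fc (u 0)) + SS k (fc (u 0)))) := by gcongr
        _ = _ := by ring
    have h4 : 0 ≤ C2 * HkNorm k (u 0) := mul_nonneg hC2p (Real.sqrt_nonneg _)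
    linarith
  · have ht0 : 0 < t := by linarith
    have h1 := growth hp1 h k hapos hB (t := t) (b := 3 * a * t) (q := (6 * a * t) ^ (k - 2) * L ^ 2) ht0.le
      (by nlinarith) (fun s => by
        have := interp1 k hk (h.sp s) (x := 6 * a * t) (by positivity) 1 (by omega)
        have h5 : (6 * a * t) ^ (k - 1 - 1) * SS 1 (fc (u s)) ≤ (6 * a * t) ^ (k - 2) * L ^ 2 := by
          rw [show k - 1 - 1 = k - 2 by omega]
          have := hS1 s
          gcongr
        rw [show 2 * (3 * a * t) = 6 * a * t by ring]
        linarith)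
    have e : 2 * (3 * a * t) * ((6 * a * t) ^ (k - 2) * L ^ 2) = (6 * a) ^ (k - 1) * L ^ 2 * t ^ (k - 1) := by
      rw [show k - 1 = k - 2 + 1 by omega, mul_pow]; ring
    rw [e] at h1
    have hsq2 : √2 ≤ C1 := Real.sqrt_le_sqrt (by have : 0 ≤ (6 * a) ^ k := by positivity
                                                 linarith)
    have h6 : √(t ^ (k - 1)) = t ^ (((k : ℝ) - 1) / 2) := by
      rw [Real.sqrt_eq_rpow, ← Real.rpow_natCast, ← Real.rpow_mul ht0.le, Nat.cast_sub (by omega)]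
      congr 1; push_cast; ring
    have h2 : HkNorm k (u t) ≤ √2 * HkNorm k (u 0) + C2 * t ^ (((k : ℝ) - 1) / 2) := by
      rw [← h6, HkNorm, HkNorm, hC2, ← Real.sqrt_mul (by positivity), ← Real.sqrt_mul (by positivity)]
      have h3 : HkSq k (u t) ≤ 2 * HkSq k (u 0) + 2 * π * ((6 * a) ^ (k - 1) * L ^ 2) * t ^ (k - 1) := by
        rw [HkSq_eq (h.sp t), HkSq_eq (h.sp 0), (conserved hp1 h t).1]
        have : SS 0 (fc (u 0)) + SS k (fc (u t)) ≤ 2 * (SS 0 (fc (u 0)) + SS k (fc (u 0))) + (6 * a) ^ (k - 1) * L ^ 2 * t ^ (k - 1) := by linarith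
        calc _ ≤ 2 * π * (2 * (SS 0 (fc (u 0)) + SS k (fc (u 0))) + (6 * a) ^ (k - 1) * L ^ 2 * t ^ (k - 1)) := by gcongr
          _ = _ := by ring
      exact (Real.sqrt_le_sqrt h3).trans (sqrt_add_le_aux (by rw [HkSq_eq (h.sp 0)]; positivity) (by positivity))
    have h7 : 0 ≤ HkNorm k (u 0) := Real.sqrt_nonneg _
    have h8 : 0 ≤ t ^ (((k : ℝ) - 1) / 2) := by positivity
    have h9 : √2 * HkNorm k (u 0) ≤ C1 * HkNorm k (u 0) := by gcongr
    have h10 := mul_nonneg hC2p h7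
    have h11 := mul_nonneg hC1p.le h8
    linarith


/-- Theorem 1.2: polynomial bound on the growth of Sobolev norms. -/
theorem nls_polynomial_growth
    (k p : ℕ) (hk : 2 ≤ k) (hp : 2 ≤ p) (R ε : ℝ) (hR : 0 < R) (hε : 0 < ε) :
    ∃ C : ℝ, 0 < C ∧
      ∀ u : ℝ → ℝ → ℂ, IsNLS p Set.univ u → HkNorm 1 (u 0) ≤ R →
        (∀ t : ℝ, 0 < t →
          HkNorm k (u t) ≤ C * HkNorm k (u 0) + C * t ^ (((k : ℝ) - 1) / 2 + ε)) ∧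
        (¬ (3 ∣ k) → ∀ t : ℝ, 0 < t →
          HkNorm k (u t) ≤ C * HkNorm k (u 0) + C * t ^ (((k : ℝ) - 1) / 2)) := by
  obtain ⟨C, hC, hmain⟩ := main_growth k p hk hp R
  refine ⟨C, hC, fun u hu hu0 => ?_⟩
  obtain ⟨h1, h2⟩ := hmain u hu hu0
  refine ⟨fun t ht => ?_, fun _ t ht => ?_⟩
  · rcases le_total t 1 with h | h
    · have := h1 t ht h
      have : 0 ≤ C * t ^ (((k : ℝ) - 1) / 2 + ε) := by positivity
      linarith
    · have h3 := h2 t h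
      have h4 : t ^ (((k : ℝ) - 1) / 2) ≤ t ^ (((k : ℝ) - 1) / 2 + ε) :=
        Real.rpow_le_rpow_of_exponent_le h (by linarith)
      have h5 := mul_le_mul_of_nonneg_left h4 hC.le
      linarith
  · rcases le_total t 1 with h | h
    · have := h1 t ht h
      have : 0 ≤ C * t ^ (((k : ℝ) - 1) / 2) := by positivity
      linarith
    · exact h2 t h
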